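/- arXiv:2208.13308 — 2 statements merged into one kernel-verified Lean document; each statement's English description precedes it below -/
import Mathlib

section
/- Let n ≥ 2, let 1 ≤ k ≤ n−1, and let f₁, f₂ ∈ Q₀ⁿ. Assume the Milman condition: ‖P_H f₁‖_{L¹(H)} ≤ ∫_H f₂ dλ_H for every k-dimensional linear subspace H ⊆ ℝⁿ. Then ‖f₁‖_{n/k} ≤ ‖f₂‖₁^{k/n} · ‖f₂‖_∞^{(n−k)/n}. -/
open MeasureTheory

noncomputable section

/-- `ℝⁿ` with its Euclidean structure. -/
abbrev Eucl (n : ℕ) := EuclideanSpace ℝ (Fin n)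

/-- `f : ℝⁿ → [0,∞)` is log-concave:
`f(tx+(1−t)y) ≥ f(x)^t · f(y)^(1−t)` for all `x, y` and `t ∈ (0,1)`. -/
def IsLogConcave {n : ℕ} (f : Eucl n → ℝ) : Prop :=
  ∀ x y : Eucl n, ∀ t : ℝ, 0 < t → t < 1 →
    f x ^ t * f y ^ (1 - t) ≤ f (t • x + (1 - t) • y)

/-- The class `Q₀ⁿ`: nonnegative, log-concave, upper semicontinuous, integrable
functions with positive integral. -/
def MemQ0 {n : ℕ} (f : Eucl n → ℝ) : Prop :=
  (∀ x, 0 ≤ f x) ∧ IsLogConcave f ∧ UpperSemicontinuous f ∧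
    Integrable f ∧ 0 < ∫ x, f x

/-- `‖f‖_∞ = sup f`. -/
def supNorm {n : ℕ} (f : Eucl n → ℝ) : ℝ := ⨆ x, f x

/-- `‖f‖_p = (∫ f^p)^(1/p)`. -/
def lpNorm {n : ℕ} (p : ℝ) (f : Eucl n → ℝ) : ℝ := (∫ x, f x ^ p) ^ (1 / p)

/-- `‖P_H f‖_{L¹(H)} = ∫_H sup_{z ∈ H⊥} f(y+z) dλ_H(y)`, the `L¹(H)`-norm of the
projection of `f` onto the subspace `H` (with the Lebesgue measure on `H` induced
by the Euclidean structure). -/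
def projL1 {n : ℕ} (f : Eucl n → ℝ) (H : Submodule ℝ (Eucl n)) : ℝ :=
  ∫ y : H, ⨆ z : Hᗮ, f ((y : Eucl n) + (z : Eucl n))

/-- `‖S_H f‖_{L¹(H)} = ∫_H f dλ_H`, the integral of the section `f|_H`. -/
def sectL1 {n : ℕ} (f : Eucl n → ℝ) (H : Submodule ℝ (Eucl n)) : ℝ :=
  ∫ y : H, f (y : Eucl n)

section PiecePA0

open MeasureTheory Set
open scoped ENNReal Pointwise

/-- Layer cake for `ℝ≥0∞`-valued functions. -/
theorem ennreal_eq_lintegral_indicator (c : ℝ≥0∞) :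
    c = ∫⁻ t in Ioi (0:ℝ), (if ENNReal.ofReal t < c then 1 else 0) := by
  have h1 : ∀ t : ℝ, (if ENNReal.ofReal t < c then (1:ℝ≥0∞) else 0) =
      {t : ℝ | ENNReal.ofReal t < c}.indicator 1 t := by
    intro t; simp [indicator]
  simp_rw [h1]
  have hm : MeasurableSet {t : ℝ | ENNReal.ofReal t < c} :=
    measurableSet_lt ENNReal.measurable_ofReal measurable_const
  rw [lintegral_indicator_one hm, Measure.restrict_apply hm]
  by_cases hc : c = ∞
  · have : {t : ℝ | ENNReal.ofReal t < c} ∩ Ioi 0 = Ioi 0 := by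
      ext t; simp [hc]
    rw [this]; simp [hc]
  · have : {t : ℝ | ENNReal.ofReal t < c} ∩ Ioi 0 = Ioo 0 c.toReal := by
      ext t
      simp only [mem_inter_iff, mem_ofPred_eq, mem_Ioi, mem_Ioo]
      constructor
      · rintro ⟨h, h0⟩
        exact ⟨h0, (ENNReal.ofReal_lt_iff_lt_toReal h0.le hc).1 h⟩
      · rintro ⟨h0, h⟩
        exact ⟨(ENNReal.ofReal_lt_iff_lt_toReal h0.le hc).2 h, h0⟩
    rw [this]; simp [ENNReal.ofReal_toReal hc]

theorem lintegral_layercake {α : Type*} [MeasurableSpace α] (μ : Measure α) [SFinite μ]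
    (f : α → ℝ≥0∞) (hf : AEMeasurable f μ) :
    ∫⁻ x, f x ∂μ = ∫⁻ t in Ioi (0:ℝ), μ {x | ENNReal.ofReal t < f x} := by
  wlog hm : Measurable f generalizing f
  · rw [lintegral_congr_ae hf.ae_eq_mk, this _ hf.measurable_mk.aemeasurable hf.measurable_mk]
    refine lintegral_congr fun t => measure_congr ?_
    filter_upwards [hf.ae_eq_mk] with x hx
    apply propext
    change _ < _ ↔ _ < _
    rw [hx]
  have h1 : ∫⁻ x, f x ∂μ =
      ∫⁻ x, (∫⁻ t in Ioi (0:ℝ), (if ENNReal.ofReal t < f x then 1 else 0)) ∂μ :=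
    lintegral_congr fun x => ennreal_eq_lintegral_indicator (f x)
  rw [h1, lintegral_lintegral_swap]
  · refine lintegral_congr fun t => ?_
    have : ∀ x, (if ENNReal.ofReal t < f x then (1:ℝ≥0∞) else 0) =
      {x | ENNReal.ofReal t < f x}.indicator 1 x := by intro x; simp [indicator]
    simp_rw [this]
    rw [lintegral_indicator_one (measurableSet_lt measurable_const hm)]
  · apply Measurable.aemeasurable
    apply Measurable.ite _ measurable_const measurable_const
    exact measurableSet_lt (ENNReal.measurable_ofReal.comp measurable_snd) (hm.comp measurable_fst)

theorem bm_one_compact {A B : Set ℝ} (hA : IsCompact A) (hB : IsCompact B)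
    (hA0 : A.Nonempty) (hB0 : B.Nonempty) : volume A + volume B ≤ volume (A + B) := by
  obtain ⟨p, hp, hpm⟩ := hA.exists_isGreatest hA0
  obtain ⟨q, hq, hqm⟩ := hB.exists_isLeast hB0
  have h1 : (fun x => x + q) '' A ∪ (fun x => p + x) '' B ⊆ A + B := by
    rintro x (⟨a, ha, rfl⟩ | ⟨b, hb, rfl⟩)
    · exact add_mem_add ha hq
    · exact add_mem_add hp hb
  refine le_trans ?_ (measure_mono h1)
  have hmB : MeasurableSet ((fun x => p + x) '' B) :=
    (hB.image (continuous_const.add continuous_id)).measurableSet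
  rw [measure_union₀ hmB.nullMeasurableSet]
  · simp
  · refine measure_mono_null (t := {p + q}) ?_ (by simp)
    rintro x ⟨⟨a, ha, rfl⟩, ⟨b, hb, hb'⟩⟩
    have := hpm ha
    have := hqm hb
    simp only [mem_singleton_iff] at *
    linarith

theorem bm_one {A B C : Set ℝ} (hA : MeasurableSet A) (hB : MeasurableSet B)
    (hA0 : A.Nonempty) (hB0 : B.Nonempty) {a b : ℝ} (ha : 0 < a) (hb : 0 < b)
    (hC : ∀ x ∈ A, ∀ y ∈ B, a * x + b * y ∈ C) :
    ENNReal.ofReal a * volume A + ENNReal.ofReal b * volume B ≤ volume C := by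
  obtain ⟨p, hp⟩ := hA0
  obtain ⟨q, hq⟩ := hB0
  have key : ∀ K ⊆ A, IsCompact K → ∀ K' ⊆ B, IsCompact K' →
      ENNReal.ofReal a * volume K + ENNReal.ofReal b * volume K' ≤ volume C := by
    intro K hK hKc K' hK' hKc'
    have := bm_one_compact (A := a • (insert p K)) (B := b • (insert q K'))
      ((hKc.insert p).smul a) ((hKc'.insert q).smul b) ⟨a • p, smul_mem_smul_set (mem_insert _ _)⟩
      ⟨b • q, smul_mem_smul_set (mem_insert _ _)⟩
    have h2 : a • (insert p K) + b • (insert q K') ⊆ C := by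
      rintro _ ⟨_, ⟨x, hx, rfl⟩, _, ⟨y, hy, rfl⟩, rfl⟩
      apply hC
      · rcases hx with rfl | hx
        exacts [hp, hK hx]
      · rcases hy with rfl | hy
        exacts [hq, hK' hy]
    refine le_trans ?_ (this.trans (measure_mono h2))
    simp only [Measure.addHaar_smul, Module.finrank_self, pow_one, abs_of_pos ha, abs_of_pos hb]
    gcongr <;> exact subset_insert _ _
  have e : ∀ D : Set ℝ, MeasurableSet D →
      volume D = ⨆ K : {K : Set ℝ // K ⊆ D ∧ IsCompact K}, volume K.1 := by
    intro D hD
    rw [hD.measure_eq_iSup_isCompact, iSup_subtype]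
    simp only [iSup_and]
  rw [e A hA, e B hB]
  simp only [ENNReal.mul_iSup]
  have : Nonempty {K : Set ℝ // K ⊆ A ∧ IsCompact K} := ⟨⟨∅, empty_subset _, isCompact_empty⟩⟩
  have : Nonempty {K : Set ℝ // K ⊆ B ∧ IsCompact K} := ⟨⟨∅, empty_subset _, isCompact_empty⟩⟩
  exact ENNReal.iSup_add_iSup_le fun K K' => key K.1 K.2.1 K.2.2 K'.1 K'.2.1 K'.2.2

end PiecePA0

section PiecePA1

open MeasureTheory Set
open scoped ENNReal Pointwise

theorem ennreal_amgm {a b : ℝ} (ha : 0 < a) (hb : 0 < b) (hab : a + b = 1) (x y : ℝ≥0∞) :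
    x ^ a * y ^ b ≤ ENNReal.ofReal a * x + ENNReal.ofReal b * y := by
  by_cases hx : x = ∞
  · have : ENNReal.ofReal a * x = ∞ := by
      rw [hx, ENNReal.mul_top]; simpa using ha
    simp [this]
  by_cases hy : y = ∞
  · have : ENNReal.ofReal b * y = ∞ := by
      rw [hy, ENNReal.mul_top]; simpa using hb
    simp [this]
  lift x to NNReal using hx
  lift y to NNReal using hy
  lift a to NNReal using ha.le
  lift b to NNReal using hb.le
  have := NNReal.geom_mean_le_arith_mean2_weighted a b x y (by exact_mod_cast hab)
  rw [← ENNReal.coe_rpow_of_nonneg _ ha.le, ← ENNReal.coe_rpow_of_nonneg _ hb.le,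
    ENNReal.ofReal_coe_nnreal, ENNReal.ofReal_coe_nnreal]
  exact_mod_cast this

theorem ennreal_rpow_lt {a b : ℝ} (ha : 0 < a) (hb : 0 < b) (hab : a + b = 1) {s x y : ℝ≥0∞}
    (hx : s < x) (hy : s < y) : s < x ^ a * y ^ b := by
  have hs : s ≠ ∞ := hx.ne_top
  have e : s = s ^ a * s ^ b := by
    rcases eq_or_ne s 0 with rfl | h0
    · simp [ENNReal.zero_rpow_of_pos ha]
    · rw [← ENNReal.rpow_add _ _ h0 hs, hab, ENNReal.rpow_one]
  conv_lhs => rw [e]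
  exact ENNReal.mul_lt_mul (ENNReal.rpow_lt_rpow hx ha) (ENNReal.rpow_lt_rpow hy hb)

theorem pl_one_normalized {a b : ℝ} (ha : 0 < a) (hb : 0 < b) (hab : a + b = 1)
    {f g h : ℝ → ℝ≥0∞} (hf : Measurable f) (hg : Measurable g) (hh : Measurable h)
    (hfs : ⨆ x, f x = 1) (hgs : ⨆ x, g x = 1)
    (H : ∀ x y, f x ^ a * g y ^ b ≤ h (a * x + b * y)) :
    (∫⁻ x, f x) ^ a * (∫⁻ x, g x) ^ b ≤ ∫⁻ x, h x := by
  refine (ennreal_amgm ha hb hab _ _).trans ?_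
  rw [lintegral_layercake _ f hf.aemeasurable, lintegral_layercake _ g hg.aemeasurable,
    lintegral_layercake _ h hh.aemeasurable]
  have mono : ∀ f : ℝ → ℝ≥0∞, Measurable fun t : ℝ => volume {x | ENNReal.ofReal t < f x} := by
    intro f
    apply Antitone.measurable
    intro s t hst
    apply measure_mono
    intro x hx
    exact lt_of_le_of_lt (ENNReal.ofReal_le_ofReal hst) hx
  rw [← lintegral_const_mul _ (mono f), ← lintegral_const_mul _ (mono g), ← lintegral_add_left]
  swap
  · exact (mono f).const_mul _
  apply lintegral_mono
  intro t
  dsimp only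
  by_cases ht : ENNReal.ofReal t < 1
  · apply bm_one (measurableSet_lt measurable_const hf) (measurableSet_lt measurable_const hg) _ _ ha hb
    · intro x hx y hy
      exact (ennreal_rpow_lt ha hb hab hx hy).trans_le (H x y)
    · rw [← hfs] at ht
      obtain ⟨x, hx⟩ := lt_iSup_iff.1 ht
      exact ⟨x, hx⟩
    · rw [← hgs] at ht
      obtain ⟨x, hx⟩ := lt_iSup_iff.1 ht
      exact ⟨x, hx⟩
  · have e1 : {x | ENNReal.ofReal t < f x} = ∅ := by
      ext x
      simp only [mem_ofPred_eq, mem_empty_iff_false, iff_false, not_lt]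
      exact (le_iSup f x).trans (hfs.le.trans (not_lt.1 ht))
    have e2 : {x | ENNReal.ofReal t < g x} = ∅ := by
      ext x
      simp only [mem_ofPred_eq, mem_empty_iff_false, iff_false, not_lt]
      exact (le_iSup g x).trans (hgs.le.trans (not_lt.1 ht))
    simp [e1, e2]

theorem pl_one_bdd {a b : ℝ} (ha : 0 < a) (hb : 0 < b) (hab : a + b = 1)
    {f g h : ℝ → ℝ≥0∞} (hf : Measurable f) (hg : Measurable g) (hh : Measurable h)
    (hfs : ⨆ x, f x ≠ ∞) (hgs : ⨆ x, g x ≠ ∞)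
    (H : ∀ x y, f x ^ a * g y ^ b ≤ h (a * x + b * y)) :
    (∫⁻ x, f x) ^ a * (∫⁻ x, g x) ^ b ≤ ∫⁻ x, h x := by
  set p := ⨆ x, f x with hp
  set q := ⨆ x, g x with hq
  by_cases hp0 : p = 0
  · have : ∀ x, f x = 0 := by simpa [hp] using hp0
    simp [this, ENNReal.zero_rpow_of_pos ha]
  by_cases hq0 : q = 0
  · have : ∀ x, g x = 0 := by simpa [hq] using hq0
    simp [this, ENNReal.zero_rpow_of_pos hb]
  have := pl_one_normalized ha hb hab (f := fun x => p⁻¹ * f x) (g := fun x => q⁻¹ * g x)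
    (h := fun x => (p⁻¹ ^ a * q⁻¹ ^ b) * h x) (hf.const_mul _) (hg.const_mul _) (hh.const_mul _)
    (by rw [← ENNReal.mul_iSup, ← hp, ENNReal.inv_mul_cancel hp0 hfs])
    (by rw [← ENNReal.mul_iSup, ← hq, ENNReal.inv_mul_cancel hq0 hgs])
    (by
      intro x y
      rw [ENNReal.mul_rpow_of_nonneg _ _ ha.le, ENNReal.mul_rpow_of_nonneg _ _ hb.le,
        mul_mul_mul_comm]
      gcongr
      exact H x y)
  rw [lintegral_const_mul _ hf, lintegral_const_mul _ hg, lintegral_const_mul _ hh,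
    ENNReal.mul_rpow_of_nonneg _ _ ha.le, ENNReal.mul_rpow_of_nonneg _ _ hb.le,
    mul_mul_mul_comm] at this
  refine (ENNReal.mul_le_mul_iff_right ?_ ?_).1 this
  · simp [ENNReal.rpow_eq_zero_iff, hfs, hgs, hp0, hq0, ha.not_gt, hb.not_gt]
  · refine ENNReal.mul_ne_top ?_ ?_ <;>
    simp [ENNReal.rpow_eq_top_iff, hfs, hgs, hp0, hq0, ha.not_gt, hb.not_gt]

/-- The Prékopa–Leindler inequality for a type. -/
def PLHolds (V : Type*) [AddCommGroup V] [Module ℝ V] [MeasureSpace V] : Prop :=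
  ∀ (a b : ℝ), 0 < a → 0 < b → a + b = 1 → ∀ f g h : V → ℝ≥0∞, Measurable f → Measurable g →
    Measurable h → (∀ x y, f x ^ a * g y ^ b ≤ h (a • x + b • y)) →
    (∫⁻ x, f x) ^ a * (∫⁻ x, g x) ^ b ≤ ∫⁻ x, h x

theorem pl_real : PLHolds ℝ := by
  intro a b ha hb hab f g h hf hg hh H
  have e : ∀ f : ℝ → ℝ≥0∞, Measurable f → ∫⁻ x, f x = ⨆ N : ℕ, ∫⁻ x, min (f x) N := by
    intro f hf
    rw [← lintegral_iSup]
    · refine lintegral_congr fun x => ?_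
      apply le_antisymm
      · by_cases hx : f x = ∞
        · simp [hx, ENNReal.iSup_natCast]
        · obtain ⟨N, hN⟩ := ENNReal.exists_nat_gt hx
          refine le_iSup_of_le N ?_
          simp [hN.le]
      · exact iSup_le fun N => min_le_left _ _
    · intro N; exact hf.min measurable_const
    · intro M N hMN x
      dsimp only
      gcongr
  have mono : ∀ f : ℝ → ℝ≥0∞, Monotone fun N : ℕ => ∫⁻ x, min (f x) N := by
    intro f M N hMN
    apply lintegral_mono
    intro x
    dsimp only
    gcongr
  have hN : ∀ N : ℕ, (∫⁻ x, min (f x) N) ^ a * (∫⁻ x, min (g x) N) ^ b ≤ ∫⁻ x, h x := by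
    intro N
    have hbd : ∀ f : ℝ → ℝ≥0∞, ⨆ x, min (f x) (N:ℝ≥0∞) ≠ ∞ := fun f =>
      ((iSup_le fun x => min_le_right _ _).trans_lt (ENNReal.natCast_lt_top N)).ne
    refine pl_one_bdd ha hb hab (hf.min measurable_const) (hg.min measurable_const) hh
      (hbd f) (hbd g) ?_
    intro x y
    refine le_trans ?_ (H x y)
    gcongr <;> exact min_le_left _ _
  have t1 := tendsto_atTop_iSup (mono f)
  have t2 := tendsto_atTop_iSup (mono g)
  rw [← e f hf] at t1
  rw [← e g hg] at t2
  by_cases hf0 : ∫⁻ x, f x = 0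
  · simp [hf0, ENNReal.zero_rpow_of_pos ha]
  by_cases hg0 : ∫⁻ x, g x = 0
  · simp [hg0, ENNReal.zero_rpow_of_pos hb]
  refine le_of_tendsto' (ENNReal.Tendsto.mul (t1.ennrpow_const a) (Or.inl ?_)
    (t2.ennrpow_const b) (Or.inl ?_)) hN
  · simp [ENNReal.rpow_eq_zero_iff, hf0, ha.not_gt]
  · simp [ENNReal.rpow_eq_zero_iff, hg0, hb.not_gt]

theorem PLHolds.prod {V W : Type*} [AddCommGroup V] [Module ℝ V] [MeasureSpace V]
    [AddCommGroup W] [Module ℝ W] [MeasureSpace W] [SFinite (volume : Measure V)]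
    [SFinite (volume : Measure W)]
    (hV : PLHolds V) (hW : PLHolds W) : PLHolds (V × W) := by
  intro a b ha hb hab f g h hf hg hh H
  rw [Measure.volume_eq_prod, lintegral_prod _ hf.aemeasurable, lintegral_prod _ hg.aemeasurable,
    lintegral_prod _ hh.aemeasurable]
  apply hV a b ha hb hab _ _ _ hf.lintegral_prod_right' hg.lintegral_prod_right'
    hh.lintegral_prod_right'
  intro x y
  apply hW a b ha hb hab _ _ _ (hf.comp measurable_prodMk_left) (hg.comp measurable_prodMk_left)
    (hh.comp measurable_prodMk_left)
  intro u v
  exact H (x, u) (y, v)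

theorem PLHolds.map {V W : Type*} [AddCommGroup V] [Module ℝ V] [MeasureSpace V]
    [AddCommGroup W] [Module ℝ W] [MeasureSpace W] (hV : PLHolds V)
    (e : V → W) (he : MeasurePreserving e) (hadd : ∀ (a b : ℝ) x y,
      e (a • x + b • y) = a • e x + b • e y) : PLHolds W := by
  intro a b ha hb hab f g h hf hg hh H
  rw [← he.lintegral_comp hf, ← he.lintegral_comp hg, ← he.lintegral_comp hh]
  apply hV a b ha hb hab _ _ _ (hf.comp he.measurable) (hg.comp he.measurable)
    (hh.comp he.measurable)
  intro x y
  simp only [Function.comp, hadd]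
  exact H _ _

theorem pl_pi (n : ℕ) : PLHolds (Fin n → ℝ) := by
  induction n with
  | zero =>
    intro a b ha hb hab f g h hf hg hh H
    rw [Measure.volume_pi_eq_dirac (x := 0)]
    rw [lintegral_dirac' _ hf, lintegral_dirac' _ hg, lintegral_dirac' _ hh]
    simpa using H 0 0
  | succ n ih =>
    refine (pl_real.prod ih).map _
      (volume_preserving_piFinSuccAbove (fun _ => ℝ) (0 : Fin (n+1))).symm ?_
    intro a b x y
    ext i
    refine Fin.cases ?_ (fun j => ?_) i
    · simp [MeasurableEquiv.piFinSuccAbove]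
    · simp [MeasurableEquiv.piFinSuccAbove]

theorem pl_inner (E : Type*) [NormedAddCommGroup E] [InnerProductSpace ℝ E]
    [FiniteDimensional ℝ E] [MeasurableSpace E] [BorelSpace E] : PLHolds E := by
  have h1 : PLHolds (EuclideanSpace ℝ (Fin (Module.finrank ℝ E))) :=
    (pl_pi _).map _ (PiLp.volume_preserving_toLp _) (by intros; rfl)
  exact h1.map _ (stdOrthonormalBasis ℝ E).repr.symm.measurePreserving (by intros; simp)

end PiecePA1

section PiecePB

open MeasureTheory Set Module
open scoped ENNReal Pointwise

set_option linter.unusedSectionVars false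

section
variable {E : Type*} [NormedAddCommGroup E] [InnerProductSpace ℝ E]
    [FiniteDimensional ℝ E] [MeasurableSpace E] [BorelSpace E]

theorem brunn_minkowski {A B : Set E} (hA : IsCompact A) (hB : IsCompact B) {p q : ℝ}
    (hp : 0 < p) (hq : 0 < q) (hAp : volume A = ENNReal.ofReal (p ^ finrank ℝ E))
    (hBq : volume B = ENNReal.ofReal (q ^ finrank ℝ E)) :
    ENNReal.ofReal ((p + q) ^ finrank ℝ E) ≤ volume (A + B) := by
  set m := finrank ℝ E
  have hpq : 0 < p + q := by positivity
  set a := p / (p + q) with ha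
  set b := q / (p + q) with hb
  have ha0 : 0 < a := by positivity
  have hb0 : 0 < b := by positivity
  have hab : a + b = 1 := by rw [ha, hb]; field_simp
  have hA' : IsCompact (a⁻¹ • A) := hA.smul _
  have hB' : IsCompact (b⁻¹ • B) := hB.smul _
  have key := pl_inner E a b ha0 hb0 hab ((a⁻¹ • A).indicator 1) ((b⁻¹ • B).indicator 1)
    ((A + B).indicator 1) (measurable_one.indicator hA'.measurableSet)
    (measurable_one.indicator hB'.measurableSet)
    (measurable_one.indicator (hA.add hB).measurableSet) (by
      intro x y
      by_cases hx : x ∈ a⁻¹ • A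
      · by_cases hy : y ∈ b⁻¹ • B
        · have : a • x + b • y ∈ A + B := by
            refine add_mem_add ?_ ?_
            · exact (Set.mem_inv_smul_set_iff₀ ha0.ne' _ _).1 hx
            · exact (Set.mem_inv_smul_set_iff₀ hb0.ne' _ _).1 hy
          simp [hx, hy, this]
        · simp [hy, ENNReal.zero_rpow_of_pos hb0]
      · simp [hx, ENNReal.zero_rpow_of_pos ha0])
  rw [lintegral_indicator_one hA'.measurableSet, lintegral_indicator_one hB'.measurableSet,
    lintegral_indicator_one (hA.add hB).measurableSet] at key
  have e1 : volume (a⁻¹ • A) = ENNReal.ofReal ((p + q) ^ m) := by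
    rw [Measure.addHaar_smul, hAp, ← ENNReal.ofReal_mul (abs_nonneg _),
      abs_of_pos (by positivity), ← mul_pow, ha]
    congr 2; field_simp
  have e2 : volume (b⁻¹ • B) = ENNReal.ofReal ((p + q) ^ m) := by
    rw [Measure.addHaar_smul, hBq, ← ENNReal.ofReal_mul (abs_nonneg _),
      abs_of_pos (by positivity), ← mul_pow, hb]
    congr 2; field_simp
  rw [e1, e2, ← ENNReal.rpow_add _ _ (by simpa using by positivity) ENNReal.ofReal_ne_top, hab,
    ENNReal.rpow_one] at key
  exact key

/-- Fubini for the splitting along a unit vector. -/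
theorem splitting_measurePreserving {e : E} (he : ‖e‖ = 1) :
    MeasurePreserving (fun p : ℝ × (ℝ ∙ e)ᗮ => p.1 • e + (p.2 : E)) := by
  have h1 := (LinearIsometryEquiv.toSpanUnitSingleton (𝕜 := ℝ) e he).measurePreserving
  have h2 := ((ℝ ∙ e).orthogonalDecomposition).symm.measurePreserving
  have h3 := (WithLp.volume_preserving_toLp (ℝ ∙ e) (ℝ ∙ e)ᗮ)
  have h4 := h2.comp (h3.comp (h1.prod (MeasurePreserving.id (volume : Measure (ℝ ∙ e)ᗮ))))
  convert! h4 using 1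
  

/-- The orthogonal projection of `K` to the hyperplane `e^⊥`. -/
def shadow (e : E) (K : Set E) : Set (ℝ ∙ e)ᗮ := {y | ∃ s : ℝ, s • e + (y : E) ∈ K}

theorem lintegral_splitting {e : E} (he : ‖e‖ = 1) {f : E → ℝ≥0∞} (hf : Measurable f) :
    ∫⁻ x, f x = ∫⁻ y : (ℝ ∙ e)ᗮ, ∫⁻ s : ℝ, f (s • e + (y : E)) := by
  rw [← (splitting_measurePreserving he).lintegral_comp hf, Measure.volume_eq_prod,
    lintegral_prod_symm]
  exact (hf.comp (splitting_measurePreserving he).measurable).aemeasurable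

theorem volume_splitting {e : E} (he : ‖e‖ = 1) {A : Set E} (hA : MeasurableSet A) :
    volume A = ∫⁻ y : (ℝ ∙ e)ᗮ, volume {s : ℝ | s • e + (y : E) ∈ A} := by
  rw [← lintegral_indicator_one hA, lintegral_splitting he (measurable_one.indicator hA)]
  refine lintegral_congr fun y => ?_
  have hm : MeasurableSet {s : ℝ | s • e + (y : E) ∈ A} :=
    (show Measurable fun s : ℝ => s • e + (y : E) by fun_prop) hA
  rw [← lintegral_indicator_one hm]
  rfl

theorem shadow_eq_image {e : E} (he : ‖e‖ = 1) (K : Set E) :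
    shadow e K = (ℝ ∙ e)ᗮ.orthogonalProjectionOnto '' K := by
  ext y
  constructor
  · rintro ⟨s, hs⟩
    refine ⟨_, hs, ?_⟩
    rw [map_add, Submodule.orthogonalProjectionOnto_mem_subspace_eq_self]
    rw [Submodule.orthogonalProjectionOnto_apply_of_mem_orthogonal]
    · simp
    · rw [Submodule.orthogonal_orthogonal]
      exact Submodule.smul_mem _ _ (Submodule.mem_span_singleton_self e)
  · rintro ⟨x, hx, rfl⟩
    refine ⟨inner ℝ e x, ?_⟩
    have : (inner ℝ e x) • e + (((ℝ ∙ e)ᗮ.orthogonalProjectionOnto x : (ℝ ∙ e)ᗮ) : E) = x := by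
      have := Submodule.starProjection_add_starProjection_orthogonal (K := ℝ ∙ e) x
      rw [Submodule.starProjection_unit_singleton ℝ he] at this
      exact this
    rwa [this]

theorem isCompact_shadow {e : E} (he : ‖e‖ = 1) {K : Set E} (hK : IsCompact K) :
    IsCompact (shadow e K) := by
  rw [shadow_eq_image he]
  exact hK.image (ContinuousLinearMap.continuous _)

/-- A segment. -/
def seg (e : E) (s : ℝ) : Set E := (fun t : ℝ => t • e) '' Icc (-s) s

theorem isCompact_seg (e : E) (s : ℝ) : IsCompact (seg e s) :=
  isCompact_Icc.image (by fun_prop)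

theorem convex_seg (e : E) (s : ℝ) : Convex ℝ (seg e s) :=
  (convex_Icc _ _).is_linear_image (IsLinearMap.isLinearMap_smul' e)

theorem volume_add_Icc {I : Set ℝ} (hI : IsCompact I) (hc : Convex ℝ I) {s : ℝ} (hs : 0 ≤ s)
    {J : Set ℝ} (hJ : J ⊆ I + Icc (-s) s) :
    volume J ≤ volume I + ENNReal.ofReal (2 * s) := by
  rcases I.eq_empty_or_nonempty with rfl | hne
  · have : J = ∅ := by simpa using hJ
    simp [this]
  obtain ⟨p, hp, hpm⟩ := hI.exists_isLeast hne
  obtain ⟨q, hq, hqm⟩ := hI.exists_isGreatest hne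
  have hpq : p ≤ q := hpm hq
  have h1 : Icc p q ⊆ I := hc.ordConnected.out hp hq
  have h2 : J ⊆ Icc (p - s) (q + s) := by
    intro x hx
    obtain ⟨a, ha, b, hb, rfl⟩ := hJ hx
    have := hpm ha
    have := hqm ha
    simp only [mem_Icc] at *
    constructor <;> linarith
  calc volume J ≤ volume (Icc (p - s) (q + s)) := measure_mono h2
    _ = volume (Icc p q) + ENNReal.ofReal (2 * s) := by
      rw [Real.volume_Icc, Real.volume_Icc, ← ENNReal.ofReal_add (by linarith) (by linarith)]
      congr 1; ring
    _ ≤ _ := by gcongr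

theorem volume_add_seg {K : Set E} (hK : IsCompact K) (hc : Convex ℝ K) {e : E} (he : ‖e‖ = 1)
    {s : ℝ} (hs : 0 ≤ s) :
    volume (K + seg e s) ≤ volume K + ENNReal.ofReal (2 * s) * volume (shadow e K) := by
  rw [volume_splitting he (hK.add (isCompact_seg e s)).measurableSet,
    volume_splitting he hK.measurableSet, ← setLIntegral_one, ← lintegral_indicator
    (isCompact_shadow he hK).measurableSet, ← lintegral_const_mul' _ _ ENNReal.ofReal_ne_top,
    ← lintegral_add_right]
  swap
  · exact (measurable_one.indicator (isCompact_shadow he hK).measurableSet).const_mul _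
  apply lintegral_mono
  intro y
  dsimp only
  have hsub : {t : ℝ | t • e + (y : E) ∈ K + seg e s} ⊆
      {t : ℝ | t • e + (y : E) ∈ K} + Icc (-s) s := by
    rintro t ⟨k, hk, _, ⟨r, hr, rfl⟩, hkr⟩
    refine ⟨t - r, ?_, r, hr, by simp⟩
    have : (t - r) • e + (y : E) = k := by
      rw [sub_smul, sub_add_eq_add_sub, ← hkr]; simp
    simpa only [mem_ofPred_eq, this] using hk
  by_cases hy : y ∈ shadow e K
  · rw [indicator_of_mem hy, mul_one]
    refine volume_add_Icc ?_ ?_ hs hsub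
    · have hemb : Topology.IsClosedEmbedding (fun t : ℝ => t • e + (y : E)) :=
        (Homeomorph.addRight (y : E)).isClosedEmbedding.comp
          (isClosedEmbedding_smul_left (by rintro rfl; simp at he))
      exact hemb.isCompact_preimage hK
    · intro t ht u hu a b ha hb hab
      have := hc ht hu ha hb hab
      have e1 : (a • t + b • u) • e + (y : E) =
          a • (t • e + (y : E)) + b • (u • e + (y : E)) := by
        obtain rfl : b = 1 - a := by linarith
        simp only [smul_eq_mul]
        module
      rw [← e1] at this
      exact this
  · have : {t : ℝ | t • e + (y : E) ∈ K} = ∅ := by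
      ext t
      simp only [mem_ofPred_eq, mem_empty_iff_false, iff_false]
      exact fun h => hy ⟨t, h⟩
    rw [this] at hsub
    have h0 : {t : ℝ | t • e + (y : E) ∈ K + seg e s} = ∅ := by simpa using hsub
    simp [h0]

end

end PiecePB

section PiecePC

open MeasureTheory Set Module Filter Topology
open scoped ENNReal Pointwise
set_option linter.unusedSectionVars false

section
variable {E : Type*} [NormedAddCommGroup E] [InnerProductSpace ℝ E]
    [FiniteDimensional ℝ E] [MeasurableSpace E] [BorelSpace E]

/-- A zonotope. -/
def zono {ι : Type*} (S : Finset ι) (e : ι → E) (w : ι → ℝ) : Set E := ∑ i ∈ S, seg (e i) (w i)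

theorem isCompact_zono {ι : Type*} (S : Finset ι) (e : ι → E) (w : ι → ℝ) :
    IsCompact (zono S e w) := by
  classical
  unfold zono
  induction S using Finset.induction_on with
  | empty => simp
  | insert i S hi ih =>
    rw [Finset.sum_insert hi]
    exact (isCompact_seg _ _).add ih

theorem convex_zono {ι : Type*} (S : Finset ι) (e : ι → E) (w : ι → ℝ) :
    Convex ℝ (zono S e w) := by
  classical
  unfold zono
  induction S using Finset.induction_on with
  | empty => exact convex_singleton (𝕜 := ℝ) (0:E)
  | insert i S hi ih =>
    rw [Finset.sum_insert hi]
    exact (convex_seg _ _).add ih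

theorem zono_norm_le {ι : Type*} (S : Finset ι) (e : ι → E) (w : ι → ℝ)
    (he : ∀ i ∈ S, ‖e i‖ = 1) : ∀ x ∈ zono S e w, ‖x‖ ≤ ∑ i ∈ S, w i := by
  classical
  unfold zono
  induction S using Finset.induction_on with
  | empty => simp
  | insert i S hi ih =>
    rw [Finset.sum_insert hi, Finset.sum_insert hi]
    rintro _ ⟨_, ⟨t, ht, rfl⟩, y, hy, rfl⟩
    refine (norm_add_le _ _).trans (add_le_add ?_ (ih (fun j hj => he j (Finset.mem_insert_of_mem hj)) y hy))
    rw [norm_smul, he i (Finset.mem_insert_self _ _), mul_one]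
    exact abs_le.2 ht

theorem shadow_mono {e : E} {K L : Set E} (h : K ⊆ L) : shadow e K ⊆ shadow e L :=
  fun _ ⟨s, hs⟩ => ⟨s, h hs⟩

theorem shadow_add_zono {ι : Type*} {S : Finset ι} {e : ι → E} {w : ι → ℝ}
    (he : ∀ i ∈ S, ‖e i‖ = 1) {C : ℝ} (hC : ∑ i ∈ S, w i ≤ C) {v : E} (hv : ‖v‖ = 1)
    (K : Set E) : shadow v (K + zono S e w) ⊆ Metric.cthickening C (shadow v K) := by
  rw [shadow_eq_image hv, shadow_eq_image hv]
  rintro _ ⟨_, ⟨x, hx, z, hz, rfl⟩, rfl⟩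
  refine Metric.mem_cthickening_of_dist_le _ ((ℝ ∙ v)ᗮ.orthogonalProjectionOnto x) _ _ ⟨x, hx, rfl⟩ ?_
  rw [map_add, dist_eq_norm, add_sub_cancel_left]
  exact ((ℝ ∙ v)ᗮ.norm_orthogonalProjectionOnto_apply_le z).trans ((zono_norm_le S e w he z hz).trans hC)

theorem volume_add_zono {ι : Type*} {K : Set E} (hK : IsCompact K) (hc : Convex ℝ K)
    {S : Finset ι} {e : ι → E} {w : ι → ℝ}
    (he : ∀ i ∈ S, ‖e i‖ = 1) (hw : ∀ i ∈ S, 0 ≤ w i) {C : ℝ} (hC : ∑ i ∈ S, w i ≤ C) :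
    volume (K + zono S e w) ≤ volume K + ∑ i ∈ S, ENNReal.ofReal (2 * w i) *
      volume (Metric.cthickening C (shadow (e i) K)) := by
  classical
  induction S using Finset.induction_on with
  | empty => simp [zono]
  | insert i S hi ih =>
    have he' : ∀ j ∈ S, ‖e j‖ = 1 := fun j hj => he j (Finset.mem_insert_of_mem hj)
    have hw' : ∀ j ∈ S, 0 ≤ w j := fun j hj => hw j (Finset.mem_insert_of_mem hj)
    have hwi := hw i (Finset.mem_insert_self _ _)
    have hei := he i (Finset.mem_insert_self _ _)
    rw [Finset.sum_insert hi] at hC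
    have hC' : ∑ j ∈ S, w j ≤ C := by linarith
    have e1 : K + zono (insert i S) e w = (K + zono S e w) + seg (e i) (w i) := by
      simp only [zono]
      rw [Finset.sum_insert hi, add_comm (seg _ _), add_assoc]
    rw [e1, Finset.sum_insert hi]
    refine (volume_add_seg (hK.add (isCompact_zono S e w)) (hc.add (convex_zono S e w)) hei hwi).trans ?_
    rw [add_comm (ENNReal.ofReal _ * _), ← add_assoc]
    gcongr
    · exact ih he' hw' hC'
    · exact shadow_add_zono he' hC' hei K

theorem add_pow_ge {p x : ℝ} (hp : 0 ≤ p) (hx : 0 ≤ x) (m : ℕ) :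
    p ^ m + m * p ^ (m - 1) * x ≤ (p + x) ^ m := by
  induction m with
  | zero => simp
  | succ m ih =>
    rw [pow_succ (p + x)]
    have h1 : (p ^ m + m * p ^ (m - 1) * x) * (p + x) ≤ (p + x) ^ m * (p + x) := by gcongr
    refine le_trans ?_ h1
    simp only [Nat.add_sub_cancel]
    have h2 : (m : ℝ) * p ^ (m - 1) * p = m * p ^ m := by
      rcases m with _ | m
      · simp
      · simp [pow_succ]; ring
    have h3 : 0 ≤ (m : ℝ) * p ^ (m - 1) * x * x := by positivity
    push_cast
    nlinarith [h2, h3, pow_succ p m]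

theorem smul_seg (v : E) (s : ℝ) {ε : ℝ} (hε : 0 < ε) : seg v (ε * s) = ε • seg v s := by
  ext x
  constructor
  · rintro ⟨t, ht, rfl⟩
    refine ⟨(ε⁻¹ * t) • v, ⟨_, ?_, rfl⟩, ?_⟩
    · constructor
      · have := ht.1
        rw [inv_mul_eq_div, le_div_iff₀ hε]; linarith
      · have := ht.2
        rw [inv_mul_eq_div, div_le_iff₀ hε]; linarith
    · simp only [smul_smul]; congr 1; field_simp
  · rintro ⟨_, ⟨t, ht, rfl⟩, rfl⟩
    refine ⟨ε * t, ?_, by simp [smul_smul]⟩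
    constructor <;> nlinarith [ht.1, ht.2]

theorem smul_zono {ι : Type*} (S : Finset ι) (e : ι → E) (w : ι → ℝ) {ε : ℝ} (hε : 0 < ε) :
    zono S e (fun i => ε * w i) = ε • zono S e w := by
  classical
  unfold zono
  induction S using Finset.induction_on with
  | empty => simp
  | insert i S hi ih =>
    rw [Finset.sum_insert hi, Finset.sum_insert hi, ih, smul_add, smul_seg _ _ hε]

/-- Isoperimetric type inequality for zonotopes. -/
theorem zono_iso {ι : Type*} {K : Set E} (hK : IsCompact K) (hc : Convex ℝ K)
    {S : Finset ι} {e : ι → E} {w : ι → ℝ}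
    (he : ∀ i ∈ S, ‖e i‖ = 1) (hw : ∀ i ∈ S, 0 ≤ w i)
    {p q : ℝ} (hp : 0 < p) (hq : 0 < q) (hKp : volume K = ENNReal.ofReal (p ^ finrank ℝ E))
    {B : Set E} (hB : IsCompact B) (hBq : volume B = ENNReal.ofReal (q ^ finrank ℝ E))
    (hBz : B ⊆ zono S e w) :
    ENNReal.ofReal (finrank ℝ E * p ^ (finrank ℝ E - 1) * q) ≤
      ∑ i ∈ S, ENNReal.ofReal (2 * w i) * volume (shadow (e i) K) := by
  set m := finrank ℝ E with hm
  set C := ∑ i ∈ S, w i with hC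
  have key : ∀ ε : ℝ, 0 < ε → ENNReal.ofReal (m * p ^ (m - 1) * q) ≤
      ∑ i ∈ S, ENNReal.ofReal (2 * w i) *
        volume (Metric.cthickening (ε * C) (shadow (e i) K)) := by
    intro ε hε
    have h1 := volume_add_zono hK hc (S := S) (e := e) (w := fun i => ε * w i) he
      (fun i hi => mul_nonneg hε.le (hw i hi)) (C := ε * C) (by rw [hC, Finset.mul_sum])
    have h2 := brunn_minkowski hK (hB.smul ε) hp (q := ε * q) (by positivity) hKp (by
      rw [Measure.addHaar_smul, hBq, ← ENNReal.ofReal_mul (abs_nonneg _),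
        abs_of_pos (by positivity), ← mul_pow])
    have h3 : K + ε • B ⊆ K + zono S e (fun i => ε * w i) := by
      rw [smul_zono _ _ _ hε]
      gcongr
    have h4 := h2.trans ((measure_mono h3).trans h1)
    have h5 := (ENNReal.ofReal_le_ofReal (add_pow_ge hp.le (x := ε * q) (by positivity) m)).trans h4
    rw [ENNReal.ofReal_add (by positivity) (by positivity), hKp] at h5
    have h6 := (ENNReal.add_le_add_iff_left ENNReal.ofReal_ne_top).1 h5
    have h7 : (m : ℝ) * p ^ (m - 1) * (ε * q) = ε * (m * p ^ (m - 1) * q) := by ring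
    rw [h7, ENNReal.ofReal_mul hε.le] at h6
    have h8 : ∀ i, ENNReal.ofReal (2 * (ε * w i)) *
        volume (Metric.cthickening (ε * C) (shadow (e i) K)) =
        ENNReal.ofReal ε * (ENNReal.ofReal (2 * w i) *
        volume (Metric.cthickening (ε * C) (shadow (e i) K))) := by
      intro i
      rw [← mul_assoc (ENNReal.ofReal ε), ← ENNReal.ofReal_mul hε.le]
      congr 2; ring
    simp_rw [h8] at h6
    rw [← Finset.mul_sum] at h6
    exact (ENNReal.mul_le_mul_iff_right (by simpa using hε) ENNReal.ofReal_ne_top).1 h6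
  have hlim : Tendsto (fun ε : ℝ => ∑ i ∈ S, ENNReal.ofReal (2 * w i) *
        volume (Metric.cthickening (ε * C) (shadow (e i) K))) (𝓝[>] 0)
      (𝓝 (∑ i ∈ S, ENNReal.ofReal (2 * w i) * volume (shadow (e i) K))) := by
    apply tendsto_finsetSum
    intro i hi
    apply ENNReal.Tendsto.const_mul _ (Or.inr ENNReal.ofReal_ne_top)
    have h1 := tendsto_measure_cthickening_of_isCompact (μ := volume) (isCompact_shadow (he i hi) hK)
    have h2 : Tendsto (fun ε : ℝ => ε * C) (𝓝[>] 0) (𝓝 0) := by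
      have : Tendsto (fun ε : ℝ => ε * C) (𝓝 0) (𝓝 (0 * C)) :=
        (continuous_id.mul continuous_const).tendsto 0
      rw [zero_mul] at this
      exact this.mono_left nhdsWithin_le_nhds
    exact h1.comp h2
  refine ge_of_tendsto hlim ?_
  filter_upwards [self_mem_nhdsWithin] with ε hε
  exact key ε hε

theorem zono_iso_convex {ι : Type*} (hm : 2 ≤ finrank ℝ E) {K : Set E} (hc : Convex ℝ K)
    {S : Finset ι} {e : ι → E} {w : ι → ℝ}
    (he : ∀ i ∈ S, ‖e i‖ = 1) (hw : ∀ i ∈ S, 0 ≤ w i)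
    {q : ℝ} (hq : 0 < q)
    {B : Set E} (hB : IsCompact B) (hBq : volume B = ENNReal.ofReal (q ^ finrank ℝ E))
    (hBz : B ⊆ zono S e w) :
    ENNReal.ofReal (finrank ℝ E * q) *
      volume K ^ (((finrank ℝ E : ℝ) - 1) / finrank ℝ E) ≤
      ∑ i ∈ S, ENNReal.ofReal (2 * w i) * volume (shadow (e i) K) := by
  set m := finrank ℝ E with hmdef
  have hm' : (2:ℝ) ≤ m := by exact_mod_cast hm
  set θ : ℝ := ((m : ℝ) - 1) / m with hθ
  have hθ0 : 0 < θ := div_pos (by linarith) (by linarith)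
  set c := ENNReal.ofReal (m * q) with hcdef
  have hc0 : c ≠ 0 := by
    have : 0 < (m:ℝ) * q := by positivity
    rw [hcdef]; simpa only [ne_eq, ENNReal.ofReal_eq_zero, not_le] using this
  have hct : c ≠ ∞ := ENNReal.ofReal_ne_top
  set R := ∑ i ∈ S, ENNReal.ofReal (2 * w i) * volume (shadow (e i) K) with hR
  have key : ∀ K' ⊆ interior K, IsCompact K' → c * volume K' ^ θ ≤ R := by
    intro K' hK' hKc
    set L := closure (convexHull ℝ K') with hL
    have hLc : IsCompact L := by
      apply Metric.isCompact_of_isClosed_isBounded isClosed_closure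
      exact (isBounded_convexHull.2 hKc.isBounded).closure
    have hLK : L ⊆ K := by
      obtain ⟨δ, hδ, hsub⟩ := hKc.exists_thickening_subset_open isOpen_interior hK'
      have h1 : K' + Metric.ball (0:E) δ ⊆ K := by
        rw [add_ball_zero]
        exact hsub.trans interior_subset
      have h2 : convexHull ℝ K' + Metric.ball (0:E) δ ⊆ K := by
        have := convexHull_min h1 hc
        rw [convexHull_add] at this
        exact (add_subset_add_left (subset_convexHull ℝ _)).trans this
      intro x hx
      obtain ⟨y, hy, hxy⟩ := Metric.mem_closure_iff.1 hx δ hδ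
      apply h2
      refine ⟨y, hy, x - y, ?_, by simp⟩
      simpa [dist_eq_norm] using hxy
    have h1 : volume K' ≤ volume L :=
      measure_mono ((subset_convexHull ℝ K').trans subset_closure)
    by_cases hL0 : volume L = 0
    · have : volume K' = 0 := le_antisymm (h1.trans hL0.le) zero_le
      simp [this, ENNReal.zero_rpow_of_pos hθ0]
    have hLt : volume L ≠ ∞ := hLc.measure_lt_top.ne
    set p : ℝ := (volume L).toReal ^ (1 / (m:ℝ)) with hp
    have hp0 : 0 < p := Real.rpow_pos_of_pos (ENNReal.toReal_pos hL0 hLt) _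
    have hLp : volume L = ENNReal.ofReal (p ^ m) := by
      rw [hp, ← Real.rpow_natCast, ← Real.rpow_mul ENNReal.toReal_nonneg,
        one_div_mul_cancel (by positivity), Real.rpow_one, ENNReal.ofReal_toReal hLt]
    have h2 := zono_iso hLc (convex_convexHull ℝ K').closure he hw hp0 hq hLp hB hBq hBz
    have h3 : c * volume L ^ θ = ENNReal.ofReal (m * p ^ (m - 1) * q) := by
      rw [hcdef, hLp, ENNReal.ofReal_rpow_of_pos (by positivity),
        ← ENNReal.ofReal_mul (by positivity)]
      congr 1
      have : (p ^ m) ^ θ = p ^ (m - 1) := by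
        rw [← Real.rpow_natCast, ← Real.rpow_natCast, ← Real.rpow_mul hp0.le, hθ]
        congr 1
        rw [Nat.cast_sub (by omega)]
        field_simp
        simp
      rw [this]; ring
    calc c * volume K' ^ θ ≤ c * volume L ^ θ := by gcongr
      _ ≤ _ := by
        rw [h3]
        refine h2.trans ?_
        rw [hR]
        gcongr
        exact shadow_mono hLK
  by_contra hcon
  rw [not_le] at hcon
  have h1 : (R / c) ^ (1 / θ) < volume K := by
    have : R / c < volume K ^ θ := by
      rw [ENNReal.div_lt_iff (Or.inl hc0) (Or.inl hct), mul_comm]; exact hcon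
    have h2 := ENNReal.rpow_lt_rpow this (show 0 < 1 / θ by positivity)
    rwa [← ENNReal.rpow_mul, mul_one_div_cancel hθ0.ne', ENNReal.rpow_one] at h2
  have h2 : volume K = volume (interior K) := by
    apply le_antisymm _ (measure_mono interior_subset)
    calc volume K ≤ volume (interior K ∪ frontier K) := by
          apply measure_mono
          rw [← closure_eq_interior_union_frontier]; exact subset_closure
      _ ≤ volume (interior K) + volume (frontier K) := measure_union_le _ _
      _ = _ := by rw [hc.addHaar_frontier volume, add_zero]
  rw [h2] at h1
  obtain ⟨K', hK', hKc, hlt⟩ := isOpen_interior.exists_lt_isCompact h1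
  have h3 := key K' hK' hKc
  have h4 := ENNReal.rpow_lt_rpow hlt hθ0
  rw [← ENNReal.rpow_mul, one_div_mul_cancel hθ0.ne', ENNReal.rpow_one,
    ENNReal.div_lt_iff (Or.inl hc0) (Or.inl hct), mul_comm] at h4
  exact absurd h3 (not_le.2 h4)

end

end PiecePC

section PiecePD

open MeasureTheory Set Module Filter Topology Metric
open scoped ENNReal Pointwise
set_option linter.unusedSectionVars false

section
variable {E : Type*} [NormedAddCommGroup E] [InnerProductSpace ℝ E]
    [FiniteDimensional ℝ E] [MeasurableSpace E] [BorelSpace E]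

theorem lintegral_fun_norm [Nontrivial E] {g : ℝ → ℝ≥0∞} (hg : Measurable g) :
    ∫⁻ x : E, g ‖x‖ = (finrank ℝ E * volume (ball (0:E) 1)) *
      ∫⁻ r in Ioi (0:ℝ), ENNReal.ofReal (r ^ (finrank ℝ E - 1)) * g r := by
  have h0 : ∫⁻ x : E, g ‖x‖ = ∫⁻ x : ({(0:E)}ᶜ : Set E), g ‖x.1‖ ∂(Measure.comap Subtype.val (volume : Measure E)) := by
    rw [lintegral_subtype_comap (measurableSet_singleton _).compl fun x => g ‖x‖,
      restrict_compl_singleton]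
  have h1 := (volume : Measure E).measurePreserving_homeomorphUnitSphereProd.lintegral_comp
    (f := fun p => g p.2.1) (by fun_prop)
  rw [h0]
  have h2 : ∀ x : ({(0:E)}ᶜ : Set E), g ‖x.1‖ = g ((homeomorphUnitSphereProd E x).2.1) := by
    intro x; simp
  simp_rw [h2]
  rw [h1]
  rw [lintegral_prod _ (by fun_prop)]
  simp only [lintegral_const, Measure.toSphere_apply_univ]
  rw [mul_comm]
  congr 1
  rw [Measure.volumeIoiPow, lintegral_withDensity_eq_lintegral_mul _ (by fun_prop) (by fun_prop)]
  exact lintegral_subtype_comap measurableSet_Ioi fun r => ENNReal.ofReal (r ^ (finrank ℝ E - 1)) * g r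

variable (E) in
noncomputable abbrev Rot := unitary (E →L[ℝ] E)

instance : CompactSpace (Rot E) := by
  apply isCompact_iff_compactSpace.mp
  apply Metric.isCompact_of_isClosed_isBounded
  · have : ((unitary (E →L[ℝ] E) : Submonoid (E →L[ℝ] E)) : Set (E →L[ℝ] E)) = {a | star a * a = 1} ∩ {a | a * star a = 1} := by
      ext a; exact Unitary.mem_iff
    rw [this]
    exact (isClosed_eq (by fun_prop) (by fun_prop)).inter (isClosed_eq (by fun_prop) (by fun_prop))
  · apply (Metric.isBounded_closedBall (x := (0 : E →L[ℝ] E)) (r := 1)).subset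
    intro a ha
    rw [mem_closedBall_zero_iff]
    apply ContinuousLinearMap.opNorm_le_bound _ zero_le_one
    intro x
    have := (Unitary.linearIsometryEquiv ⟨a, ha⟩).norm_map x
    rw [one_mul]
    exact this.le


variable (E) in
noncomputable def rotMeas : Measure (Rot E) := Measure.haarMeasure ⊤

instance : (rotMeas E).IsMulLeftInvariant := Measure.isMulLeftInvariant_haarMeasure _
instance : IsProbabilityMeasure (rotMeas E) := ⟨by
  have := Measure.haarMeasure_self (G := Rot E) (K₀ := ⊤)
  simpa [rotMeas] using this⟩

/-- inverse rotation action -/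
noncomputable def ract (R : Rot E) : E ≃ₗᵢ[ℝ] E := Unitary.linearIsometryEquiv R⁻¹

theorem ract_mul (R T : Rot E) (x : E) : ract (R * T) x = ract T (ract R x) := by
  simp [ract]

theorem continuous_ract : Continuous (fun p : Rot E × E => ract p.1 p.2) := by
  have : (fun p : Rot E × E => ract p.1 p.2) = fun p => ((p.1⁻¹ : Rot E) : E →L[ℝ] E) p.2 := rfl
  rw [this]
  fun_prop

theorem exists_ract {x y : E} (h : ‖x‖ = ‖y‖) : ∃ T : Rot E, ract T x = y := by
  refine ⟨(Unitary.linearIsometryEquiv.symm ((ℝ ∙ (x - y))ᗮ.reflection))⁻¹, ?_⟩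
  simp only [ract, inv_inv, MulEquiv.apply_symm_apply]
  exact Submodule.reflection_sub h

/-- Average over rotations. -/
noncomputable def avg (φ : E → ℝ≥0∞) (x : E) : ℝ≥0∞ := ∫⁻ R, φ (ract R x) ∂(rotMeas E)

theorem avg_eq (φ : E → ℝ≥0∞) {x y : E} (h : ‖x‖ = ‖y‖) : avg φ x = avg φ y := by
  obtain ⟨T, rfl⟩ := exists_ract h
  unfold avg
  rw [← lintegral_mul_left_eq_self _ T]
  simp_rw [ract_mul]

theorem measurable_avg {φ : E → ℝ≥0∞} (hφ : Measurable φ) : Measurable (avg φ) := by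
  unfold avg
  have : Measurable (fun p : E × Rot E => φ (ract p.2 p.1)) :=
    hφ.comp (continuous_ract.comp continuous_swap).measurable
  exact this.lintegral_prod_right'

theorem lintegral_avg {φ : E → ℝ≥0∞} (hφ : Measurable φ) : ∫⁻ x, avg φ x = ∫⁻ x, φ x := by
  unfold avg
  rw [lintegral_lintegral_swap]
  · have : ∀ R : Rot E, ∫⁻ x, φ (ract R x) = ∫⁻ x, φ x := fun R =>
      (ract R).measurePreserving.lintegral_comp hφ
    simp [this]
  · exact (hφ.comp (continuous_ract.comp continuous_swap).measurable).aemeasurable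

theorem lintegral_hyper_ract {φ : E → ℝ≥0∞} (hφ : Measurable φ) (T : E ≃ₗᵢ[ℝ] E) (e : E) :
    ∫⁻ y : (ℝ ∙ (T e))ᗮ, φ y = ∫⁻ y : (ℝ ∙ e)ᗮ, φ (T y) := by
  have hmap : Submodule.map (T.toLinearEquiv : E →ₗ[ℝ] E) (ℝ ∙ e)ᗮ = (ℝ ∙ (T e))ᗮ := by
    ext y
    simp only [Submodule.mem_map, Submodule.mem_orthogonal_singleton_iff_inner_right]
    constructor
    · rintro ⟨x, hx, rfl⟩
      simpa using hx
    · intro hy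
      refine ⟨T.symm y, ?_, by simp⟩
      rw [← T.inner_map_map]; simpa using hy
  have := ((T.submoduleMap (ℝ ∙ e)ᗮ)).measurePreserving.lintegral_comp
    (f := fun y => φ y) (by fun_prop)
  rw [← hmap]
  exact this.symm

theorem measurable_ract_hyper {φ : E → ℝ≥0∞} (hφ : Measurable φ) (H : Submodule ℝ E) :
    Measurable (fun p : Rot E × H => φ (ract p.1 p.2)) := by
  have h1 : Measurable (fun p : Rot E × H => (p.1, (p.2 : E))) :=
    measurable_fst.prodMk (measurable_subtype_coe.comp measurable_snd)
  have h2 := continuous_ract.measurable.comp h1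
  exact hφ.comp h2

theorem lintegral_sub_avg {φ : E → ℝ≥0∞} (hφ : Measurable φ) (H : Submodule ℝ E) :
    ∫⁻ R, (∫⁻ y : H, φ (ract R y)) ∂(rotMeas E) = ∫⁻ y : H, avg φ y := by
  unfold avg
  exact lintegral_lintegral_swap (measurable_ract_hyper hφ H).aemeasurable

theorem lintegral_hyper_avg {φ : E → ℝ≥0∞} (hφ : Measurable φ) (e : E) :
    ∫⁻ R, (∫⁻ y : (ℝ ∙ (ract R e))ᗮ, φ y) ∂(rotMeas E) = ∫⁻ y : (ℝ ∙ e)ᗮ, avg φ y := by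
  rw [← lintegral_sub_avg hφ]
  exact lintegral_congr fun R => lintegral_hyper_ract hφ (ract R) e

end

end PiecePD

section PiecePE

open MeasureTheory Set Module Filter Topology Metric
open scoped ENNReal Pointwise
set_option linter.unusedSectionVars false

section
variable {E : Type*} [NormedAddCommGroup E] [InnerProductSpace ℝ E]
    [FiniteDimensional ℝ E] [MeasurableSpace E] [BorelSpace E]

theorem gauss_moment (k : ℕ) : ∫⁻ r in Ioi (0:ℝ), ENNReal.ofReal (r ^ k) * ENNReal.ofReal (Real.exp (-r^2))
    = ENNReal.ofReal (Real.Gamma (((k:ℝ)+1)/2) / 2) := by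
  have h1 := integral_rpow_mul_exp_neg_rpow (p := 2) (q := k) (by norm_num) (by have := Nat.cast_nonneg (α := ℝ) k; linarith)
  have h2 := integrableOn_rpow_mul_exp_neg_rpow (p := 2) (s := k) (by have := Nat.cast_nonneg (α := ℝ) k; linarith) (by norm_num)
  have h3 := ofReal_integral_eq_lintegral_ofReal h2 (by
    filter_upwards [ae_restrict_mem measurableSet_Ioi] with x hx
    have : (0:ℝ) < x := hx
    simp only [Pi.zero_apply]; positivity)
  rw [h1] at h3
  rw [show Real.Gamma (((k:ℝ)+1)/2) / 2 = 1 / 2 * Real.Gamma ((k+1)/2) by ring, h3]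
  apply setLIntegral_congr_fun measurableSet_Ioi
  intro x hx
  have : (0:ℝ) < x := hx
  simp only
  rw [← ENNReal.ofReal_mul (by positivity)]
  simp [Real.rpow_natCast]

theorem gauss_abs : ∫⁻ s : ℝ, ENNReal.ofReal |s| * ENNReal.ofReal (Real.exp (-s^2)) = 1 := by
  have h := lintegral_fun_norm (E := ℝ) (g := fun r => ENNReal.ofReal |r| * ENNReal.ofReal (Real.exp (-r^2))) (by fun_prop)
  simp only [Real.norm_eq_abs, abs_abs, sq_abs] at h
  rw [h]
  have : ∫⁻ r in Ioi (0:ℝ), ENNReal.ofReal (r ^ (finrank ℝ ℝ - 1)) *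
      (ENNReal.ofReal |r| * ENNReal.ofReal (Real.exp (-r^2))) = ENNReal.ofReal (1/2) := by
    have := gauss_moment 1
    norm_num at this
    rw [this.symm]
    · apply setLIntegral_congr_fun measurableSet_Ioi
      intro x hx
      have : (0:ℝ) < x := hx
      simp [abs_of_pos this]
  rw [this]
  simp only [finrank_self, Nat.cast_one, one_mul, Real.volume_ball, mul_one]
  rw [← ENNReal.ofReal_mul (by norm_num)]; norm_num

/-- The mean width constant. -/
noncomputable def cc (e : E) : ℝ≥0∞ := avg (fun x => ENNReal.ofReal |inner ℝ e x|) e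

theorem avg_inner {e : E} (he : ‖e‖ = 1) (x : E) :
    avg (fun x => ENNReal.ofReal |inner ℝ e x|) x = ENNReal.ofReal ‖x‖ * cc e := by
  rw [avg_eq _ (y := ‖x‖ • e) (by simp [norm_smul, he])]
  unfold cc avg
  rw [← lintegral_const_mul' _ _ ENNReal.ofReal_ne_top]
  congr 1; ext R
  beta_reduce
  rw [map_smul, inner_smul_right, abs_mul, abs_norm, ENNReal.ofReal_mul (norm_nonneg _)]

theorem cc_le {e : E} (he : ‖e‖ = 1) : cc e ≤ 1 := by
  unfold cc avg
  calc _ ≤ ∫⁻ R, 1 ∂(rotMeas E) := by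
        apply lintegral_mono
        intro R
        simp only
        rw [ENNReal.ofReal_le_one]
        exact (abs_real_inner_le_norm _ _).trans (by simp [he])
    _ = 1 := by simp

theorem cc_value (hm : 2 ≤ finrank ℝ E) {e : E} (he : ‖e‖ = 1) :
    cc e * (finrank ℝ E * volume (ball (0:E) 1)) = 2 * volume (ball (0:(ℝ ∙ e)ᗮ) 1) := by
  obtain ⟨j, hj⟩ : ∃ j, finrank ℝ E = j + 2 := ⟨finrank ℝ E - 2, by omega⟩
  have he0 : e ≠ 0 := by rintro rfl; simp at he
  have hfr : finrank ℝ (ℝ ∙ e)ᗮ = j + 1 := by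
    have : Fact (finrank ℝ E = (j+1) + 1) := ⟨hj⟩
    exact Submodule.finrank_orthogonal_span_singleton he0
  have : Nontrivial E := ⟨e, 0, he0⟩
  have : Nontrivial (ℝ ∙ e)ᗮ := Module.nontrivial_of_finrank_pos (R := ℝ) (by omega)
  have hmeas : Measurable (fun x : E => ENNReal.ofReal |inner ℝ e x| * ENNReal.ofReal (Real.exp (-‖x‖^2))) := by
    fun_prop
  have A : ∫⁻ x : E, ENNReal.ofReal |inner ℝ e x| * ENNReal.ofReal (Real.exp (-‖x‖^2))
      = ∫⁻ y : (ℝ ∙ e)ᗮ, ENNReal.ofReal (Real.exp (-‖y‖^2)) := by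
    rw [lintegral_splitting he hmeas]
    congr 1; ext y
    have hy : inner ℝ e (y:E) = 0 := Submodule.mem_orthogonal_singleton_iff_inner_right.1 y.2
    have : ∀ s : ℝ, ENNReal.ofReal |inner ℝ e (s • e + (y:E))| * ENNReal.ofReal (Real.exp (-‖s • e + (y:E)‖^2))
        = ENNReal.ofReal (Real.exp (-‖y‖^2)) * (ENNReal.ofReal |s| * ENNReal.ofReal (Real.exp (-s^2))) := by
      intro s
      have h1 : inner ℝ e (s • e + (y:E)) = s := by
        rw [inner_add_right, inner_smul_right, hy]; simp [he]
      have h2 : ‖s • e + (y:E)‖^2 = s^2 + ‖y‖^2 := by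
        rw [norm_add_sq_real, inner_smul_left, hy]; simp [he, norm_smul]
      rw [h1, h2, neg_add, Real.exp_add, ENNReal.ofReal_mul (Real.exp_nonneg _)]
      ring
    simp_rw [this]
    rw [lintegral_const_mul _ (by fun_prop), gauss_abs, mul_one]
  have B : ∫⁻ x : E, ENNReal.ofReal |inner ℝ e x| * ENNReal.ofReal (Real.exp (-‖x‖^2))
      = cc e * ∫⁻ x : E, ENNReal.ofReal ‖x‖ * ENNReal.ofReal (Real.exp (-‖x‖^2)) := by
    rw [← lintegral_avg hmeas, ← lintegral_const_mul _ (by fun_prop)]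
    congr 1; ext x
    have := avg_inner he x
    unfold avg at this ⊢
    simp only [LinearIsometryEquiv.norm_map]
    rw [lintegral_mul_const' _ _ ENNReal.ofReal_ne_top, this]
    ring
  rw [A, lintegral_fun_norm (g := fun r => ENNReal.ofReal (Real.exp (-r^2))) (by fun_prop),
    lintegral_fun_norm (g := fun r => ENNReal.ofReal r * ENNReal.ofReal (Real.exp (-r^2))) (by fun_prop),
    hfr, hj] at B
  have C1 : ∫⁻ r in Ioi (0:ℝ), ENNReal.ofReal (r ^ (j+2-1)) * (ENNReal.ofReal r * ENNReal.ofReal (Real.exp (-r^2)))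
      = ENNReal.ofReal (((j:ℝ)+1)/2) * ENNReal.ofReal (Real.Gamma (((j:ℝ)+1)/2) / 2) := by
    rw [← ENNReal.ofReal_mul (by positivity)]
    have := gauss_moment (j+2)
    rw [show ((((j+2:ℕ):ℝ)+1)/2) = ((j:ℝ)+1)/2 + 1 by push_cast; ring, Real.Gamma_add_one (by positivity)] at this
    rw [mul_div_assoc] at this
    rw [← this]
    apply setLIntegral_congr_fun measurableSet_Ioi
    intro x hx
    have hx : (0:ℝ) < x := hx
    simp only
    rw [← mul_assoc, ← ENNReal.ofReal_mul (by positivity)]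
    congr 2
  have C2 : ∫⁻ r in Ioi (0:ℝ), ENNReal.ofReal (r ^ (j+1-1)) * ENNReal.ofReal (Real.exp (-r^2))
      = ENNReal.ofReal (Real.Gamma (((j:ℝ)+1)/2) / 2) := gauss_moment j
  rw [C1, C2] at B
  have hG : 0 < Real.Gamma (((j:ℝ)+1)/2) / 2 := by
    have := Real.Gamma_pos_of_pos (s := ((j:ℝ)+1)/2) (by positivity)
    positivity
  have hD : ENNReal.ofReal (((j:ℝ)+1)/2) = ((j+1:ℕ):ℝ≥0∞) / 2 := by
    rw [ENNReal.ofReal_div_of_pos (by norm_num), show (j:ℝ)+1 = ((j+1:ℕ):ℝ) by push_cast; rfl, ENNReal.ofReal_natCast]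
    simp
  rw [hD] at B
  have hG0 : ENNReal.ofReal (Real.Gamma (((j:ℝ)+1)/2) / 2) ≠ 0 := by simpa using hG
  have hGt := ENNReal.ofReal_ne_top (r := Real.Gamma (((j:ℝ)+1)/2) / 2)
  rw [hj]
  have hj0 : ((j+1:ℕ):ℝ≥0∞) ≠ 0 := by simp
  have hjt : ((j+1:ℕ):ℝ≥0∞) ≠ ⊤ := ENNReal.natCast_ne_top _
  set a := ((j+1:ℕ):ℝ≥0∞)
  set g := ENNReal.ofReal (Real.Gamma (((j:ℝ)+1)/2) / 2)
  have hag : a * g ≠ 0 := mul_ne_zero hj0 hG0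
  have hagt : a * g ≠ ⊤ := ENNReal.mul_ne_top hjt hGt
  apply (ENNReal.mul_right_inj hag hagt).1
  calc a * g * (cc e * (((j+2:ℕ):ℝ≥0∞) * volume (ball (0:E) 1)))
      = (2 * 2⁻¹) * (a * g * (cc e * (((j+2:ℕ):ℝ≥0∞) * volume (ball (0:E) 1)))) := by
        rw [ENNReal.mul_inv_cancel (by simp) (by simp), one_mul]
    _ = 2 * (cc e * (((j+2:ℕ):ℝ≥0∞) * volume (ball (0:E) 1) * (a / 2 * g))) := by
        rw [div_eq_mul_inv]; ring
    _ = _ := by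
        rw [← B]; ring

end

end PiecePE

section PiecePF

open MeasureTheory Set Module Filter Topology Metric
open scoped ENNReal Pointwise
set_option linter.unusedSectionVars false

section
variable {E : Type*} [NormedAddCommGroup E] [InnerProductSpace ℝ E]
    [FiniteDimensional ℝ E] [MeasurableSpace E] [BorelSpace E]

theorem exists_combo {G X : Type*} [TopologicalSpace G] [CompactSpace G] [T2Space G] [SecondCountableTopology G]
    [MeasurableSpace G] [BorelSpace G] (μ : Measure G) [IsProbabilityMeasure μ]
    [TopologicalSpace X] [CompactSpace X]
    {F : G × X → ℝ} (hF : Continuous F) (hF0 : ∀ p, 0 ≤ F p) {c : ℝ≥0∞}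
    (hc : ∀ x, ∫⁻ g, ENNReal.ofReal (F (g, x)) ∂μ = c)
    {δ : ℝ} (hδ : 0 < δ) :
    ∃ (ι : Type) (S : Finset ι) (R : ι → G) (w : ι → ℝ), 
      (∀ i ∈ S, 0 ≤ w i) ∧ ∑ i ∈ S, w i = 1 ∧
      ∀ x : X, c.toReal - δ ≤ ∑ i ∈ S, w i * F (R i, x) := by
  classical
  let Φ : C(G, C(X, ℝ)) := ContinuousMap.curry ⟨F, hF⟩
  have hΦ : ∀ R v, Φ R v = F (R, v) := fun R v => rfl
  have hIntg : Integrable (fun R => Φ R) μ := by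
    rw [← integrableOn_univ]
    exact Φ.continuous.continuousOn.integrableOn_compact isCompact_univ
  have hmem : (∫ R, Φ R ∂μ) ∈ closure (convexHull ℝ (range Φ)) := by
    apply (convex_convexHull ℝ _).closure.integral_mem isClosed_closure _ hIntg
    exact Eventually.of_forall fun R => subset_closure (subset_convexHull ℝ _ (mem_range_self R))
  have hval : ∀ v : X, (∫ R, Φ R ∂μ) v = c.toReal := by
    intro v
    have h1 := (ContinuousMap.evalCLM ℝ v).integral_comp_comm hIntg
    have h2 : (∫ R, Φ R ∂μ) v = ∫ R, Φ R v ∂μ := h1.symm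
    rw [h2, integral_eq_lintegral_of_nonneg_ae]
    · rw [← hc v]
      rfl
    · exact Eventually.of_forall fun R => hF0 _
    · exact ((ContinuousMap.evalCLM ℝ v).integrable_comp hIntg).aestronglyMeasurable
  obtain ⟨b, hb, hdist⟩ := Metric.mem_closure_iff.1 hmem δ hδ
  rw [convexHull_eq] at hb
  obtain ⟨ι, S, w, z, hw, hw1, hz, rfl⟩ := hb
  have : Nonempty G := by
    by_contra h
    rw [not_nonempty_iff] at h
    have := measure_univ (μ := μ)
    simp [Set.univ_eq_empty_iff.2 h] at this
  choose! R hR using hz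
  refine ⟨ι, S, R, w, hw, hw1, fun u => ?_⟩
  have h1 := ContinuousMap.dist_apply_le_dist (f := ∫ R, Φ R ∂μ) (g := S.centerMass w z) u
  rw [hval] at h1
  have h2 : S.centerMass w z u = ∑ i ∈ S, w i * F (R i, u) := by
    rw [Finset.centerMass_eq_of_sum_1 _ _ hw1, ContinuousMap.sum_apply]
    apply Finset.sum_congr rfl
    intro i hi
    rw [ContinuousMap.smul_apply, smul_eq_mul, ← hR i hi, hΦ]
  have h3 := abs_lt.1 (Real.dist_eq _ _ ▸ h1.trans_lt hdist)
  rw [h2] at h3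
  linarith [h3.2]

theorem exists_dirs {e : E} (he : ‖e‖ = 1) {δ : ℝ} (hδ : 0 < δ) :
    ∃ (ι : Type) (S : Finset ι) (d : ι → E) (w : ι → ℝ), (∀ i ∈ S, ‖d i‖ = 1) ∧
      (∀ i ∈ S, 0 ≤ w i) ∧ ∑ i ∈ S, w i = 1 ∧
      ∀ v : E, ((cc e).toReal - δ) * ‖v‖ ≤ ∑ i ∈ S, w i * |inner ℝ (d i) v| := by
  have hc0 : Continuous (fun p : Rot E × sphere (0:E) 1 => |inner ℝ e (ract p.1 (p.2:E))|) := by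
    have h1 : Continuous (fun p : Rot E × sphere (0:E) 1 => (p.1, (p.2:E))) := by fun_prop
    have h2 := continuous_ract.comp h1
    exact (continuous_const.inner h2).abs
  have hval : ∀ v : sphere (0:E) 1, ∫⁻ R, ENNReal.ofReal |inner ℝ e (ract R (v:E))| ∂(rotMeas E) = cc e := by
    intro v
    have := avg_inner he (v:E)
    rw [mem_sphere_zero_iff_norm.1 v.2] at this
    simp only [ENNReal.ofReal_one, one_mul] at this
    exact this
  obtain ⟨ι, S, R, w, hw, hw1, hb⟩ := exists_combo (rotMeas E) hc0 (fun _ => abs_nonneg _) hval hδ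
  refine ⟨ι, S, fun i => (ract (R i)).symm e, w, fun i _ => by simp [he], hw, hw1, fun v => ?_⟩
  rcases eq_or_ne v 0 with rfl | hv
  · simp
  have hv' : 0 < ‖v‖ := norm_pos_iff.2 hv
  let u : sphere (0:E) 1 := ⟨‖v‖⁻¹ • v, by simp [norm_smul, hv'.ne']⟩
  have h4 := hb u
  have h2 : ∑ i ∈ S, w i * |inner ℝ e (ract (R i) (u:E))| = ∑ i ∈ S, w i * (‖v‖⁻¹ * |inner ℝ ((ract (R i)).symm e) v|) := by
    apply Finset.sum_congr rfl
    intro i hi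
    rw [← (ract (R i)).symm.inner_map_map]
    simp only [u, LinearIsometryEquiv.symm_apply_apply]
    rw [inner_smul_right, abs_mul, abs_of_pos (inv_pos.2 hv')]
  rw [h2] at h4
  calc _ ≤ (∑ i ∈ S, w i * (‖v‖⁻¹ * |inner ℝ ((ract (R i)).symm e) v|)) * ‖v‖ := by gcongr
    _ = _ := by
      rw [Finset.sum_mul]
      apply Finset.sum_congr rfl
      intro i hi
      field_simp

theorem ball_sub_zono {ι : Type*} {S : Finset ι} {d : ι → E} {w : ι → ℝ}
    (hw : ∀ i ∈ S, 0 ≤ w i) {ρ : ℝ}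
    (h : ∀ v : E, ρ * ‖v‖ ≤ ∑ i ∈ S, w i * |inner ℝ (d i) v|) : closedBall 0 ρ ⊆ zono S d w := by
  intro x hx
  by_contra hxz
  obtain ⟨f, u, h1, h2⟩ := geometric_hahn_banach_closed_point (convex_zono S d w)
    (isCompact_zono S d w).isClosed hxz
  obtain ⟨a, rfl⟩ := (InnerProductSpace.toDual ℝ E).surjective f
  simp only [InnerProductSpace.toDual_apply_apply] at h1 h2
  let z : E := ∑ i ∈ S, (w i * SignType.sign (inner ℝ (d i) a) : ℝ) • d i
  have hz : z ∈ zono S d w := by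
    unfold zono
    apply Set.finsetSum_mem_finsetSum
    intro i hi
    refine ⟨_, ?_, rfl⟩
    have h0 := hw i hi
    rcases lt_trichotomy (inner ℝ (d i) a) 0 with h | h | h <;>
      simp [h, h0]
  have h3 := h1 z hz
  have h4 : inner ℝ a z = ∑ i ∈ S, w i * |inner ℝ (d i) a| := by
    simp only [z, inner_sum, inner_smul_right]
    apply Finset.sum_congr rfl
    intro i hi
    rw [real_inner_comm a, mul_assoc, sign_mul_self]
  have h5 := h a
  have h6 : inner ℝ a x ≤ ‖a‖ * ρ := (real_inner_le_norm a x).trans (by gcongr; simpa using hx)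
  rw [h4] at h3
  nlinarith

end

end PiecePF

section PiecePG

open MeasureTheory Set Module Filter Topology Metric
open scoped ENNReal Pointwise
set_option linter.unusedSectionVars false

section
variable {E : Type*} [NormedAddCommGroup E] [InnerProductSpace ℝ E]
    [FiniteDimensional ℝ E] [MeasurableSpace E] [BorelSpace E]

theorem lint_pow (k : ℕ) {r0 : ℝ} (hr : 0 < r0) :
    ∫⁻ r in Ioi (0:ℝ), (Iio r0).indicator (fun r => ENNReal.ofReal (r ^ k)) r
      = ENNReal.ofReal (r0 ^ (k+1) / (k+1)) := by
  rw [setLIntegral_indicator measurableSet_Iio, show Iio r0 ∩ Ioi 0 = Ioo 0 r0 by ext; simp [and_comm],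
    Measure.restrict_congr_set Ioo_ae_eq_Ioc,
    ← ofReal_integral_eq_lintegral_ofReal (intervalIntegral.intervalIntegrable_pow _).1, ← intervalIntegral.integral_of_le hr.le]
  · simp
  · filter_upwards [ae_restrict_mem measurableSet_Ioc] with y hy
    exact pow_nonneg hy.1.le _

theorem bathtub_one (j : ℕ) {g : ℝ → ℝ≥0∞} (hg : Measurable g) {M r0 : ℝ} (hM : 0 ≤ M)
    (hgM : ∀ r, g r ≤ ENNReal.ofReal M) (hr : 0 < r0)
    (hB : ∫⁻ r in Ioi (0:ℝ), ENNReal.ofReal (r ^ (j+1)) * g r ≤ ENNReal.ofReal (M * r0 ^ (j+2) / (j+2))) :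
    ∫⁻ r in Ioi (0:ℝ), ENNReal.ofReal (r ^ j) * g r ≤ ENNReal.ofReal (M * r0 ^ (j+1) / (j+1)) := by
  have key : ∫⁻ r in Ioi (0:ℝ), (ENNReal.ofReal (r ^ j) * g r +
        ENNReal.ofReal (M / r0) * (Iio r0).indicator (fun r => ENNReal.ofReal (r ^ (j+1))) r) ≤
      ∫⁻ r in Ioi (0:ℝ), (ENNReal.ofReal (1/r0) * (ENNReal.ofReal (r ^ (j+1)) * g r) +
        ENNReal.ofReal M * (Iio r0).indicator (fun r => ENNReal.ofReal (r ^ j)) r) := by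
    apply setLIntegral_mono' measurableSet_Ioi
    intro r hr'
    have hr' : 0 < r := hr'
    have hgt : g r ≠ ⊤ := ((hgM r).trans_lt ENNReal.ofReal_lt_top).ne
    have h1 := hgM r
    rw [← ENNReal.ofReal_toReal hgt] at h1 ⊢
    set a := (g r).toReal
    have ha : 0 ≤ a := ENNReal.toReal_nonneg
    have h1 : a ≤ M := (ENNReal.ofReal_le_ofReal_iff hM).1 h1
    by_cases h : r < r0
    · simp only [indicator, mem_Iio, h, if_true]
      rw [← ENNReal.ofReal_mul (by positivity), ← ENNReal.ofReal_mul (by positivity), ← ENNReal.ofReal_mul (by positivity), ← ENNReal.ofReal_mul (by positivity), ← ENNReal.ofReal_mul (by positivity), ← ENNReal.ofReal_add (by positivity) (by positivity), ← ENNReal.ofReal_add (by positivity) (by positivity)]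
      apply ENNReal.ofReal_le_ofReal
      have : 0 ≤ (M - a) * r^j * (r0 - r) / r0 := by
        have := sub_nonneg.2 h1
        have := sub_nonneg.2 h.le
        positivity
      have h3 : (M - a) * r^j * (r0 - r) / r0 = (1/r0 * (r^(j+1)*a) + M * r^j) - (r^j * a + M/r0 * r^(j+1)) := by
        field_simp; ring
      linarith
    · simp only [indicator, mem_Iio, h, if_false]
      rw [← ENNReal.ofReal_mul (by positivity), ← ENNReal.ofReal_mul (by positivity), ← ENNReal.ofReal_mul (by positivity)]
      simp only [mul_zero, add_zero]
      apply ENNReal.ofReal_le_ofReal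
      push Not at h
      have : 0 ≤ a * r^j * (r - r0) / r0 := by
        have := sub_nonneg.2 h
        positivity
      have h3 : a * r^j * (r - r0) / r0 = (1/r0 * (r^(j+1)*a)) - (r^j * a) := by
        field_simp; ring
      linarith
  rw [lintegral_add_left (by fun_prop), lintegral_add_left (by fun_prop), lintegral_const_mul' _ _ ENNReal.ofReal_ne_top,
    lintegral_const_mul' _ _ ENNReal.ofReal_ne_top, lintegral_const_mul' _ _ ENNReal.ofReal_ne_top, lint_pow _ hr, lint_pow _ hr,
    ← ENNReal.ofReal_mul (by positivity), ← ENNReal.ofReal_mul (by positivity)] at key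
  have h5 : ENNReal.ofReal (1/r0) * ∫⁻ r in Ioi (0:ℝ), ENNReal.ofReal (r ^ (j+1)) * g r ≤ ENNReal.ofReal (M / r0 * (r0 ^ (j + 1 + 1) / (↑(j + 1) + 1))) := by
    refine (mul_le_mul_right hB _).trans ?_
    rw [← ENNReal.ofReal_mul (by positivity)]
    apply ENNReal.ofReal_le_ofReal
    apply le_of_eq
    push_cast; field_simp; ring
  have h6 := key.trans (add_le_add_left h5 _)
  rw [add_comm] at h6
  have h7 := (ENNReal.add_le_add_iff_left ENNReal.ofReal_ne_top).1 h6
  rw [mul_div_assoc]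
  exact h7

theorem bathtub (hm : 2 ≤ finrank ℝ E) {e : E} (he : ‖e‖ = 1) {φ : E → ℝ≥0∞} (hφ : Measurable φ)
    {M r0 : ℝ} (hM : 0 ≤ M) (hr : 0 < r0) (hφM : ∀ x, φ x ≤ ENNReal.ofReal M)
    (hI : ∫⁻ x, φ x ≤ volume (ball (0:E) 1) * ENNReal.ofReal (M * r0 ^ finrank ℝ E)) :
    ∫⁻ y : (ℝ ∙ e)ᗮ, avg φ y ≤ volume (ball (0:(ℝ ∙ e)ᗮ) 1) * ENNReal.ofReal (M * r0 ^ (finrank ℝ E - 1)) := by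
  obtain ⟨j, hj⟩ : ∃ j, finrank ℝ E = j + 2 := ⟨finrank ℝ E - 2, by omega⟩
  have he0 : e ≠ 0 := by rintro rfl; simp at he
  have hfr : finrank ℝ (ℝ ∙ e)ᗮ = j + 1 := by
    have : Fact (finrank ℝ E = (j+1) + 1) := ⟨hj⟩
    exact Submodule.finrank_orthogonal_span_singleton he0
  have : Nontrivial E := ⟨e, 0, he0⟩
  have : Nontrivial (ℝ ∙ e)ᗮ := Module.nontrivial_of_finrank_pos (R := ℝ) (by omega)
  set g : ℝ → ℝ≥0∞ := fun r => avg φ (r • e)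
  have hg : Measurable g := (measurable_avg hφ).comp (by fun_prop)
  have havg : ∀ x, avg φ x = g ‖x‖ := fun x => avg_eq φ (by simp [norm_smul, he])
  have hgM : ∀ r, g r ≤ ENNReal.ofReal M := by
    intro r
    calc g r ≤ ∫⁻ R, ENNReal.ofReal M ∂(rotMeas E) := lintegral_mono fun R => hφM _
      _ = _ := by simp
  rw [← lintegral_avg hφ] at hI
  simp_rw [havg] at hI ⊢
  rw [lintegral_fun_norm hg, hj] at hI
  have h1 : ∫⁻ y : (ℝ ∙ e)ᗮ, g ‖(y:E)‖ = ∫⁻ y : (ℝ ∙ e)ᗮ, g ‖y‖ := rfl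
  rw [h1, lintegral_fun_norm hg, hfr, hj]
  have hω0 : volume (ball (0:E) 1) ≠ 0 := (measure_ball_pos _ _ one_pos).ne'
  have hωt : volume (ball (0:E) 1) ≠ ⊤ := measure_ball_lt_top.ne
  have h2 := bathtub_one j hg hM hgM hr (by
    rw [ENNReal.ofReal_div_of_pos (by positivity)]
    rw [ENNReal.le_div_iff_mul_le (by left; positivity) (by left; exact ENNReal.ofReal_ne_top)]
    apply (ENNReal.mul_le_mul_iff_right hω0 hωt).1
    refine le_trans (le_of_eq ?_) hI
    rw [show ((j:ℝ)+2) = ((j+2:ℕ):ℝ) by push_cast; rfl, ENNReal.ofReal_natCast]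
    simp only [show j + 2 - 1 = j + 1 by omega]
    ring)
  calc _ ≤ ((j+1:ℕ):ℝ≥0∞) * volume (ball (0:(ℝ ∙ e)ᗮ) 1) * ENNReal.ofReal (M * r0 ^ (j+1) / (j+1)) := by
        gcongr; exact h2
    _ = _ := by
        rw [mul_comm ((j+1:ℕ):ℝ≥0∞), mul_assoc]
        congr 1
        rw [← ENNReal.ofReal_natCast, ← ENNReal.ofReal_mul (by positivity)]
        congr 1
        simp only [show j + 2 - 1 = j + 1 by omega]
        push_cast; field_simp

theorem holder_layer {α : Type*} [MeasurableSpace α] (μ : Measure α) [SFinite μ] {f : α → ℝ≥0∞}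
    (hf : AEMeasurable f μ) {p : ℝ} (hp : 1 < p) (hfin : ∫⁻ x, f x ^ p ∂μ ≠ ⊤) :
    (∫⁻ x, f x ^ p ∂μ) ^ (1/p) ≤ ∫⁻ t in Ioi (0:ℝ), μ {x | ENNReal.ofReal t < f x} ^ (1/p) := by
  set X := ∫⁻ x, f x ^ p ∂μ with hX
  rcases eq_or_ne X 0 with h0 | h0
  · rw [h0, ENNReal.zero_rpow_of_pos (by positivity)]; exact zero_le
  set q := Real.conjExponent p with hq
  have hpq : p.HolderConjugate q := Real.HolderConjugate.conjExponent hp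
  have hden : AEMeasurable (fun x => f x ^ (p-1)) μ := hf.pow_const _
  set ν := μ.withDensity (fun x => f x ^ (p-1)) with hν
  have e1 : X = ∫⁻ x, f x ∂ν := by
    rw [lintegral_withDensity_eq_lintegral_mul₀ hden hf]
    apply lintegral_congr
    intro x
    simp only [Pi.mul_apply]
    rw [mul_comm]
    nth_rewrite 2 [← ENNReal.rpow_one (f x)]
    rw [← ENNReal.rpow_add_of_nonneg _ _ zero_le_one (by linarith)]
    congr 1; ring
  have hfν : AEMeasurable f ν := hf.mono_ac (withDensity_absolutelyContinuous _ _)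
  rw [lintegral_layercake ν f hfν] at e1
  have e2 : ∀ t : ℝ, ν {x | ENNReal.ofReal t < f x} ≤ μ {x | ENNReal.ofReal t < f x} ^ (1/p) * X ^ (1/q) := by
    intro t
    rw [hν, withDensity_apply' ]
    have := ENNReal.lintegral_mul_le_Lp_mul_Lq (μ.restrict {x | ENNReal.ofReal t < f x}) hpq
      (f := fun _ => 1) (g := fun x => f x ^ (p-1)) aemeasurable_const hden.restrict
    simp only [Pi.mul_apply, one_mul, ENNReal.one_rpow, lintegral_const, Measure.restrict_apply_univ] at this
    refine this.trans ?_
    gcongr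
    · have := hpq.symm.pos; positivity
    refine (setLIntegral_le_lintegral _ _).trans (le_of_eq ?_)
    apply lintegral_congr
    intro x
    rw [← ENNReal.rpow_mul]
    congr 1
    exact hpq.sub_one_mul_conj
  have e3 : X ≤ (∫⁻ t in Ioi (0:ℝ), μ {x | ENNReal.ofReal t < f x} ^ (1/p)) * X ^ (1/q) := by
    conv_lhs => rw [e1]
    rw [← lintegral_mul_const' _ _ (ENNReal.rpow_ne_top_of_nonneg (by have := hpq.symm.pos; positivity) hfin)]
    exact lintegral_mono fun t => e2 t
  have hXq0 : X ^ (1/q) ≠ 0 := by simp [ENNReal.rpow_eq_zero_iff, h0, hfin]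
  have hXqt : X ^ (1/q) ≠ ⊤ := ENNReal.rpow_ne_top_of_nonneg (by have := hpq.symm.pos; positivity) hfin
  apply (ENNReal.mul_le_mul_iff_left hXq0 hXqt).1
  refine le_trans (le_of_eq ?_) e3
  rw [← ENNReal.rpow_add _ _ h0 hfin, one_div, one_div, hpq.inv_add_inv_eq_one, ENNReal.rpow_one]

theorem aemeasurable_of_convex {f : E → ℝ≥0∞} (h : ∀ c, Convex ℝ {x | c < f x}) :
    AEMeasurable f volume := by
  have : NullMeasurable f (volume : Measure E) := by
    apply measurable_of_Ioi (δ := NullMeasurableSpace E volume)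
    intro c
    exact (h c).nullMeasurableSet _
  exact this.aemeasurable

end

end PiecePG

section PiecePH

open MeasureTheory Set Module Filter Topology Metric
open scoped ENNReal Pointwise
set_option linter.unusedSectionVars false

section
variable {E : Type*} [NormedAddCommGroup E] [InnerProductSpace ℝ E]
    [FiniteDimensional ℝ E] [MeasurableSpace E] [BorelSpace E]

theorem convex_shadow (e : E) {K : Set E} (hK : Convex ℝ K) : Convex ℝ (shadow e K) := by
  rintro x ⟨s, hs⟩ y ⟨t, ht⟩ a b ha hb hab
  refine ⟨a * s + b * t, ?_⟩
  have := hK hs ht ha hb hab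
  convert! this using 1
  push_cast
  module

theorem shadow_superlevel (e : E) (G : E → ℝ≥0∞) (c : ℝ≥0∞) :
    {y : (ℝ ∙ e)ᗮ | c < ⨆ s : ℝ, G (s • e + y)} = shadow e {x | c < G x} := by
  ext y
  simp [shadow, lt_iSup_iff]

theorem lintegral_proj (e : E) {G : E → ℝ≥0∞} (hG : ∀ c, Convex ℝ {x | c < G x}) :
    ∫⁻ y : (ℝ ∙ e)ᗮ, ⨆ s : ℝ, G (s • e + y) =
      ∫⁻ t in Ioi (0:ℝ), volume (shadow e {x | ENNReal.ofReal t < G x}) := by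
  rw [lintegral_layercake]
  · simp_rw [shadow_superlevel]
  · apply aemeasurable_of_convex
    intro c
    rw [shadow_superlevel]
    exact convex_shadow e (hG c)

theorem measurable_shadow (e : E) (G : E → ℝ≥0∞) :
    Measurable (fun t : ℝ => volume (shadow e {x | ENNReal.ofReal t < G x})) := by
  apply Antitone.measurable
  intro s t hst
  apply measure_mono
  apply shadow_mono
  intro x hx
  exact (ENNReal.ofReal_le_ofReal hst).trans_lt hx

theorem codim_step1 (hm : 2 ≤ finrank ℝ E) {e : E} (he : ‖e‖ = 1) {G1 G2 : E → ℝ≥0∞}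
    (hG1 : ∀ c, Convex ℝ {x | c < G1 x}) (hG2 : Measurable G2)
    (hps : ∀ e : E, ‖e‖ = 1 → ∫⁻ y : (ℝ ∙ e)ᗮ, ⨆ s : ℝ, G1 (s • e + y) ≤ ∫⁻ y : (ℝ ∙ e)ᗮ, G2 y)
    {ρ : ℝ} (hρ : 0 < ρ) (hρc : ρ < (cc e).toReal) {q : ℝ} (hq : 0 < q)
    (hBq : volume (closedBall (0:E) ρ) = ENNReal.ofReal (q ^ finrank ℝ E)) :
    ENNReal.ofReal (finrank ℝ E * q) *
      ∫⁻ t in Ioi (0:ℝ), volume {x | ENNReal.ofReal t < G1 x} ^ (((finrank ℝ E : ℝ) - 1) / finrank ℝ E)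
      ≤ 2 * ∫⁻ y : (ℝ ∙ e)ᗮ, avg G2 y := by
  obtain ⟨ι, S, d, w, hd, hw, hw1, hv⟩ := exists_dirs he (δ := (cc e).toReal - ρ) (by linarith)
  simp only [sub_sub_cancel] at hv
  set s : E → ℝ≥0∞ := fun e => ∫⁻ y : (ℝ ∙ e)ᗮ, G2 y with hs
  have hR : ∀ R : Rot E, ENNReal.ofReal (finrank ℝ E * q) *
      ∫⁻ t in Ioi (0:ℝ), volume {x | ENNReal.ofReal t < G1 x} ^ (((finrank ℝ E : ℝ) - 1) / finrank ℝ E)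
      ≤ ∑ i ∈ S, ENNReal.ofReal (2 * w i) * s (ract R (d i)) := by
    intro R
    have hz : closedBall 0 ρ ⊆ zono S (fun i => ract R (d i)) w := by
      apply ball_sub_zono hw
      intro v
      have := hv ((ract R).symm v)
      rw [LinearIsometryEquiv.norm_map] at this
      refine this.trans (le_of_eq (Finset.sum_congr rfl fun i _ => ?_))
      rw [← (ract R).inner_map_map]; simp
    have hd' : ∀ i ∈ S, ‖ract R (d i)‖ = 1 := fun i hi => by simp [hd i hi]
    rw [← lintegral_const_mul' _ _ ENNReal.ofReal_ne_top]
    calc _ ≤ ∫⁻ t in Ioi (0:ℝ), ∑ i ∈ S, ENNReal.ofReal (2 * w i) *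
              volume (shadow (ract R (d i)) {x | ENNReal.ofReal t < G1 x}) :=
          lintegral_mono fun t => zono_iso_convex hm (hG1 _) hd' hw hq (isCompact_closedBall _ _) hBq hz
      _ = ∑ i ∈ S, ENNReal.ofReal (2 * w i) *
            ∫⁻ t in Ioi (0:ℝ), volume (shadow (ract R (d i)) {x | ENNReal.ofReal t < G1 x}) := by
          rw [lintegral_finsetSum _ fun i _ => (measurable_shadow _ _).const_mul _]
          exact Finset.sum_congr rfl fun i _ => lintegral_const_mul' _ _ ENNReal.ofReal_ne_top
      _ ≤ _ := by
          apply Finset.sum_le_sum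
          intro i hi
          rw [← lintegral_proj _ hG1]
          gcongr
          exact hps _ (hd' i hi)
  have hsm : ∀ e, Measurable (fun R : Rot E => s (ract R e)) := by
    intro e
    have h1 : (fun R : Rot E => s (ract R e)) = fun R => ∫⁻ y : (ℝ ∙ e)ᗮ, G2 (ract R y) := by
      ext R; exact lintegral_hyper_ract hG2 (ract R) e
    rw [h1]
    exact (measurable_ract_hyper hG2 (ℝ ∙ e)ᗮ).lintegral_prod_right'
  have hsi : ∀ i ∈ S, ∫⁻ R, s (ract R (d i)) ∂(rotMeas E) = ∫⁻ y : (ℝ ∙ e)ᗮ, avg G2 y := by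
    intro i hi
    have h1 : avg s (d i) = avg s e := avg_eq s (by rw [hd i hi, he])
    rw [← lintegral_hyper_avg hG2 e]
    exact h1
  calc _ = ∫⁻ _R : Rot E, (ENNReal.ofReal (finrank ℝ E * q) *
      (∫⁻ t in Ioi (0:ℝ), volume {x | ENNReal.ofReal t < G1 x} ^ (((finrank ℝ E : ℝ) - 1) / finrank ℝ E))) ∂(rotMeas E) := by
        rw [lintegral_const]; simp
    _ ≤ ∫⁻ R : Rot E, ∑ i ∈ S, ENNReal.ofReal (2 * w i) * s (ract R (d i)) ∂(rotMeas E) := lintegral_mono hR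
    _ = ∑ i ∈ S, ENNReal.ofReal (2 * w i) * ∫⁻ y : (ℝ ∙ e)ᗮ, avg G2 y := by
        rw [lintegral_finsetSum _ fun i _ => (hsm _).const_mul _]
        refine Finset.sum_congr rfl fun i hi => ?_
        rw [lintegral_const_mul' _ _ ENNReal.ofReal_ne_top, hsi i hi]
    _ = _ := by
        rw [← Finset.sum_mul, ← ENNReal.ofReal_sum_of_nonneg fun i hi => by have := hw i hi; positivity,
          ← Finset.mul_sum, hw1]
        simp

theorem codim_step2 (hm : 2 ≤ finrank ℝ E) {e : E} (he : ‖e‖ = 1) {G1 G2 : E → ℝ≥0∞}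
    (hG1 : ∀ c, Convex ℝ {x | c < G1 x}) (hG2 : Measurable G2)
    (hps : ∀ e : E, ‖e‖ = 1 → ∫⁻ y : (ℝ ∙ e)ᗮ, ⨆ s : ℝ, G1 (s • e + y) ≤ ∫⁻ y : (ℝ ∙ e)ᗮ, G2 y) :
    cc e * ((finrank ℝ E : ℝ≥0∞) * volume (ball (0:E) 1) ^ (1 / (finrank ℝ E : ℝ)) *
      ∫⁻ t in Ioi (0:ℝ), volume {x | ENNReal.ofReal t < G1 x} ^ (((finrank ℝ E : ℝ) - 1) / finrank ℝ E))
      ≤ 2 * ∫⁻ y : (ℝ ∙ e)ᗮ, avg G2 y := by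
  have he0 : e ≠ 0 := by rintro rfl; simp at he
  have : Nontrivial E := ⟨e, 0, he0⟩
  have hω0 : volume (ball (0:E) 1) ≠ 0 := (measure_ball_pos _ _ one_pos).ne'
  have hωt : volume (ball (0:E) 1) ≠ ⊤ := measure_ball_lt_top.ne
  have hcct : cc e ≠ ⊤ := ((cc_le he).trans_lt ENNReal.one_lt_top).ne
  refine ENNReal.mul_le_of_forall_lt fun a ha b hb => ?_
  refine (mul_le_mul_right hb.le a).trans ?_
  rcases eq_or_ne a 0 with rfl | ha0
  · simp
  have hat : a ≠ ⊤ := (ha.trans_le le_top).ne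
  set ρ := a.toReal with hρdef
  have hρ : 0 < ρ := ENNReal.toReal_pos ha0 hat
  have hρc : ρ < (cc e).toReal := (ENNReal.toReal_lt_toReal hat hcct).2 ha
  set v := (volume (ball (0:E) 1)).toReal with hv
  have hvpos : 0 < v := ENNReal.toReal_pos hω0 hωt
  have hm0 : (finrank ℝ E : ℝ) ≠ 0 := by positivity
  set q := ρ * v ^ (1 / (finrank ℝ E : ℝ)) with hqdef
  have hq : 0 < q := by positivity
  have key := codim_step1 hm he hG1 hG2 hps hρ hρc hq (by
    rw [Measure.addHaar_closedBall _ _ hρ.le, ← ENNReal.ofReal_toReal hωt, ← hv, ← ENNReal.ofReal_mul (by positivity)]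
    congr 1
    rw [hqdef, mul_pow, ← Real.rpow_natCast (v ^ _), ← Real.rpow_mul hvpos.le, one_div_mul_cancel hm0, Real.rpow_one])
  refine le_trans (le_of_eq ?_) key
  rw [← mul_assoc]
  congr 1
  rw [ENNReal.ofReal_mul (by positivity), ENNReal.ofReal_natCast, hqdef, ENNReal.ofReal_mul hρ.le,
    ENNReal.ofReal_toReal hat, ← ENNReal.ofReal_rpow_of_pos hvpos, hv, ENNReal.ofReal_toReal hωt]
  ring

theorem codim_one (hm : 2 ≤ finrank ℝ E) {G1 G2 : E → ℝ≥0∞}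
    (hG1 : ∀ c, Convex ℝ {x | c < G1 x}) (hG2 : Measurable G2)
    {M : ℝ≥0∞} (hM0 : M ≠ 0) (hMt : M ≠ ⊤) (hG2M : ∀ x, G2 x ≤ M)
    (hfin : ∫⁻ x, G1 x ^ ((finrank ℝ E : ℝ) / ((finrank ℝ E : ℝ) - 1)) ≠ ⊤)
    (hps : ∀ e : E, ‖e‖ = 1 → ∫⁻ y : (ℝ ∙ e)ᗮ, ⨆ s : ℝ, G1 (s • e + y) ≤ ∫⁻ y : (ℝ ∙ e)ᗮ, G2 y) :
    ∫⁻ x, G1 x ^ ((finrank ℝ E : ℝ) / ((finrank ℝ E : ℝ) - 1)) ≤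
      M ^ (1 / ((finrank ℝ E : ℝ) - 1)) * ∫⁻ x, G2 x := by
  have : Nontrivial E := Module.nontrivial_of_finrank_pos (R := ℝ) (by omega)
  obtain ⟨e, he⟩ := exists_norm_eq E (zero_le_one (α := ℝ))
  have hω0 : volume (ball (0:E) 1) ≠ 0 := (measure_ball_pos _ _ one_pos).ne'
  have hωt : volume (ball (0:E) 1) ≠ ⊤ := measure_ball_lt_top.ne
  have hcct : cc e ≠ ⊤ := ((cc_le he).trans_lt ENNReal.one_lt_top).ne
  have hcv := cc_value hm he
  have hcc0 : cc e ≠ 0 := by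
    intro h
    rw [h, zero_mul] at hcv
    have : volume (ball (0:(ℝ ∙ e)ᗮ) 1) ≠ 0 := (measure_ball_pos _ _ one_pos).ne'
    simp [this] at hcv
  have key := codim_step2 hm he hG1 hG2 hps
  have hmR : (2:ℝ) ≤ finrank ℝ E := by exact_mod_cast hm
  have hHol := holder_layer volume (aemeasurable_of_convex hG1)
    (p := (finrank ℝ E : ℝ) / ((finrank ℝ E : ℝ) - 1)) (by rw [lt_div_iff₀] <;> linarith) hfin
  rw [one_div_div] at hHol
  obtain ⟨j, hj⟩ : ∃ j, finrank ℝ E = j + 2 := ⟨finrank ℝ E - 2, by omega⟩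
  set X := ∫⁻ x, G1 x ^ ((finrank ℝ E : ℝ) / ((finrank ℝ E : ℝ) - 1))
  set Φ := ∫⁻ t in Ioi (0:ℝ), volume {x | ENNReal.ofReal t < G1 x} ^ (((finrank ℝ E : ℝ) - 1) / finrank ℝ E)
  set ω := volume (ball (0:E) 1) with hω
  have hM' : M ^ (1 / ((finrank ℝ E : ℝ) - 1)) ≠ 0 := by simp [ENNReal.rpow_eq_zero_iff, hM0, hMt]
  have hMt' : M ^ (1 / ((finrank ℝ E : ℝ) - 1)) ≠ ⊤ :=
    ENNReal.rpow_ne_top_of_nonneg (by apply div_nonneg <;> linarith) hMt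
  rw [mul_comm, ← ENNReal.div_le_iff hM' hMt']
  refine le_of_forall_gt_imp_ge_of_dense fun b hb => ?_
  rcases eq_or_ne b ⊤ with rfl | hbt
  · exact le_top
  have hb0 : b ≠ 0 := (zero_le.trans_lt hb).ne'
  rw [ENNReal.div_le_iff hM' hMt']
  set M' := M.toReal with hM'def
  have hM'pos : 0 < M' := ENNReal.toReal_pos hM0 hMt
  have hMM : ENNReal.ofReal M' = M := ENNReal.ofReal_toReal hMt
  set b' := b.toReal with hb'def
  have hb'pos : 0 < b' := ENNReal.toReal_pos hb0 hbt
  have hbb : ENNReal.ofReal b' = b := ENNReal.ofReal_toReal hbt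
  set v := ω.toReal with hv
  have hvpos : 0 < v := ENNReal.toReal_pos hω0 hωt
  have hvv : ENNReal.ofReal v = ω := ENNReal.ofReal_toReal hωt
  set r0 := (b' / (M' * v)) ^ (1 / (finrank ℝ E : ℝ)) with hr0
  have hr0pos : 0 < r0 := by positivity
  have hr0m : r0 ^ finrank ℝ E = b' / (M' * v) := by
    rw [hr0, ← Real.rpow_natCast, ← Real.rpow_mul (by positivity), one_div_mul_cancel (by linarith), Real.rpow_one]
  have hbath := bathtub hm he hG2 hM'pos.le hr0pos (by rw [hMM]; exact hG2M) (by
    refine hb.le.trans (le_of_eq ?_)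
    rw [← hω, ← hvv, ← ENNReal.ofReal_mul (by positivity), hr0m, ← hbb]
    congr 1; field_simp)
  have h1 := key.trans (mul_le_mul_right hbath 2)
  rw [← mul_assoc 2, ← hcv, mul_assoc (cc e)] at h1
  have h2 := (ENNReal.mul_le_mul_iff_right hcc0 hcct).1 h1
  rw [mul_assoc, mul_assoc] at h2
  have h3 := (ENNReal.mul_le_mul_iff_right (by simp; omega) (ENNReal.natCast_ne_top _)).1 h2
  have hω1 : ω ^ (1 / (finrank ℝ E : ℝ)) ≠ 0 := by simp [ENNReal.rpow_eq_zero_iff, hω0, hωt]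
  have hω1t : ω ^ (1 / (finrank ℝ E : ℝ)) ≠ ⊤ := ENNReal.rpow_ne_top_of_nonneg (by positivity) hωt
  have h4 := (mul_le_mul_right hHol _).trans h3
  -- raise to the power m/(m-1)
  have hp0 : 0 ≤ (finrank ℝ E : ℝ) / ((finrank ℝ E : ℝ) - 1) := by apply div_nonneg <;> linarith
  have h5 := ENNReal.rpow_le_rpow h4 hp0
  have hm1 : (finrank ℝ E : ℝ) - 1 ≠ 0 := by linarith
  have hm0 : (finrank ℝ E : ℝ) ≠ 0 := by linarith
  have hm1p : 0 < (finrank ℝ E : ℝ) - 1 := by linarith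
  rw [ENNReal.mul_rpow_of_nonneg _ _ hp0, ← ENNReal.rpow_mul, ← ENNReal.rpow_mul,
    show ((finrank ℝ E : ℝ) - 1) / finrank ℝ E * ((finrank ℝ E : ℝ) / ((finrank ℝ E : ℝ) - 1)) = 1 by field_simp,
    ENNReal.rpow_one] at h5
  rw [← hvv, ENNReal.ofReal_rpow_of_pos hvpos, ← ENNReal.ofReal_mul hvpos.le,
    ENNReal.ofReal_rpow_of_pos (by positivity)] at h5
  rw [← hMM, ENNReal.ofReal_rpow_of_pos hM'pos, ← hbb, ← ENNReal.ofReal_mul hb'pos.le]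
  have hv0 : 0 < v ^ (1 / (finrank ℝ E : ℝ) * ((finrank ℝ E : ℝ) / ((finrank ℝ E : ℝ) - 1))) := by positivity
  apply (ENNReal.mul_le_mul_iff_right (by positivity : ENNReal.ofReal (v ^ (1 / (finrank ℝ E : ℝ) * ((finrank ℝ E : ℝ) / ((finrank ℝ E : ℝ) - 1)))) ≠ 0) ENNReal.ofReal_ne_top).1
  refine h5.trans (le_of_eq ?_)
  rw [← ENNReal.ofReal_mul hv0.le]
  congr 1
  have hr1 : (r0 ^ (finrank ℝ E - 1)) ^ ((finrank ℝ E : ℝ) / ((finrank ℝ E : ℝ) - 1)) = b' / (M' * v) := by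
    rw [← hr0m, ← Real.rpow_natCast, ← Real.rpow_natCast, ← Real.rpow_mul hr0pos.le]
    congr 1
    rw [Nat.cast_sub (by omega)]; push_cast; field_simp
  rw [Real.mul_rpow hvpos.le (by positivity), Real.mul_rpow hM'pos.le (by positivity), hr1]
  have e1 : 1 / (finrank ℝ E : ℝ) * ((finrank ℝ E : ℝ) / ((finrank ℝ E : ℝ) - 1)) = 1 / ((finrank ℝ E : ℝ) - 1) := by field_simp
  have e2 : (finrank ℝ E : ℝ) / ((finrank ℝ E : ℝ) - 1) = 1 / ((finrank ℝ E : ℝ) - 1) + 1 := by field_simp; ring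
  rw [e1, e2, Real.rpow_add hvpos, Real.rpow_add hM'pos, Real.rpow_one, Real.rpow_one]
  field_simp

end

end PiecePH

section PiecePI

open MeasureTheory Set Module Filter Topology Metric
open scoped ENNReal Pointwise
set_option linter.unusedSectionVars false

section
variable {V : Type*} [NormedAddCommGroup V] [InnerProductSpace ℝ V]
    [FiniteDimensional ℝ V] [MeasurableSpace V] [BorelSpace V]

/-- Projection of a function, extended-valued. -/
noncomputable def projE (F : V → ℝ≥0∞) (W : Submodule ℝ V) (y : W) : ℝ≥0∞ :=
  ⨆ z : Wᗮ, F ((y : V) + (z : V))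

theorem convex_projE {F : V → ℝ≥0∞} (hF : ∀ c, Convex ℝ {x | c < F x}) (W : Submodule ℝ V) (c : ℝ≥0∞) :
    Convex ℝ {y : W | c < projE F W y} := by
  intro x hx y hy a b ha hb hab
  simp only [projE, mem_ofPred_eq, lt_iSup_iff] at hx hy ⊢
  obtain ⟨z, hz⟩ := hx
  obtain ⟨u, hu⟩ := hy
  refine ⟨a • z + b • u, ?_⟩
  have := hF c hz hu ha hb hab
  simp only [mem_ofPred_eq] at this
  convert! this using 2
  push_cast
  module

theorem convex_rpow {F : V → ℝ≥0∞} (hF : ∀ c, Convex ℝ {x | c < F x}) {p : ℝ} (hp : 0 < p) (c : ℝ≥0∞) :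
    Convex ℝ {y | c < F y ^ p} := by
  have : {y | c < F y ^ p} = {y | c ^ p⁻¹ < F y} := by
    ext y
    simp only [mem_ofPred_eq]
    constructor
    · intro h
      have := ENNReal.rpow_lt_rpow h (inv_pos.2 hp)
      rwa [← ENNReal.rpow_mul, mul_inv_cancel₀ hp.ne', ENNReal.rpow_one] at this
    · intro h
      have := ENNReal.rpow_lt_rpow h hp
      rwa [← ENNReal.rpow_mul, inv_mul_cancel₀ hp.ne', ENNReal.rpow_one] at this
  rw [this]
  exact hF _

noncomputable def subEquiv (W : Submodule ℝ V) (H : Submodule ℝ W) : H ≃ₗᵢ[ℝ] (H.map W.subtype) where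
  toLinearEquiv := Submodule.equivMapOfInjective W.subtype W.injective_subtype H
  norm_map' := fun _ => rfl

theorem lintegral_subEquiv (W : Submodule ℝ V) (H : Submodule ℝ W) (g : (H.map W.subtype) → ℝ≥0∞) :
    ∫⁻ y, g (subEquiv W H y) = ∫⁻ y, g y := by
  have h := LinearIsometryEquiv.measurePreserving (E := H) (F := H.map W.subtype) (subEquiv W H)
  exact h.lintegral_comp_emb (subEquiv W H).toHomeomorph.measurableEmbedding g

theorem proj_induction {F1 F2 : V → ℝ≥0∞} (hF1 : ∀ c, Convex ℝ {x | c < F1 x}) (hF2 : Measurable F2)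
    {M : ℝ≥0∞} (hM0 : M ≠ 0) (hMt : M ≠ ⊤) (hF2M : ∀ x, F2 x ≤ M) {k : ℕ} (hk : 1 ≤ k)
    (hfin : ∀ W : Submodule ℝ V, 1 ≤ finrank ℝ W → ∀ p : ℝ, 0 < p → ∫⁻ y : W, projE F1 W y ^ p ≠ ⊤)
    (hbase : ∀ H : Submodule ℝ V, finrank ℝ H = k → ∫⁻ y : H, projE F1 H y ≤ ∫⁻ y : H, F2 y)
    (j : ℕ) (hj : k ≤ j) : ∀ W : Submodule ℝ V, finrank ℝ W = j →
      ∫⁻ y : W, projE F1 W y ^ ((j:ℝ)/k) ≤ M ^ (((j:ℝ) - k)/k) * ∫⁻ y : W, F2 y := by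
  have hk0 : (0:ℝ) < k := by exact_mod_cast hk
  induction j, hj using Nat.le_induction with
  | base =>
    intro W hW
    have := hbase W hW
    simpa [div_self hk0.ne'] using this
  | succ j hj ih =>
    intro W hW
    have hj0 : (0:ℝ) < j := by exact_mod_cast (by omega : 0 < j)
    have hjk : (k:ℝ) ≤ j := by exact_mod_cast hj
    have hp : 0 < (j:ℝ)/k := by positivity
    set N := M ^ (((j:ℝ) - k)/k) with hN
    have hexp0 : 0 ≤ ((j:ℝ) - k)/k := div_nonneg (by linarith) hk0.le
    have hN0 : N ≠ 0 := by simp [hN, ENNReal.rpow_eq_zero_iff, hM0, hMt]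
    have hNt : N ≠ ⊤ := ENNReal.rpow_ne_top_of_nonneg hexp0 hMt
    have hcast : ((finrank ℝ W : ℝ)) = j + 1 := by rw [hW]; push_cast; rfl
    have hpow : ∀ y : W, (projE F1 W y ^ ((j:ℝ)/k)) ^ ((finrank ℝ W : ℝ) / ((finrank ℝ W : ℝ) - 1))
        = projE F1 W y ^ (((j+1:ℕ):ℝ)/k) := by
      intro y
      rw [← ENNReal.rpow_mul, hcast, add_sub_cancel_right]
      congr 1
      push_cast
      field_simp
    have key := codim_one (E := W) (G1 := fun y => projE F1 W y ^ ((j:ℝ)/k)) (G2 := fun y => N * F2 y)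
      (M := N * M) (by omega) (convex_rpow (convex_projE hF1 W) hp)
      ((hF2.comp measurable_subtype_coe).const_mul _) (mul_ne_zero hN0 hM0) (ENNReal.mul_ne_top hNt hMt)
      (fun x => by gcongr; exact hF2M _)
      (by
        simp_rw [hpow]
        exact hfin W (by omega) _ (by positivity))
      (by
        intro e he
        have he0 : e ≠ 0 := by rintro rfl; simp at he
        have hfr : finrank ℝ (ℝ ∙ e)ᗮ = j := by
          have : Fact (finrank ℝ W = j + 1) := ⟨hW⟩
          exact Submodule.finrank_orthogonal_span_singleton he0
        set H := ((ℝ ∙ e)ᗮ).map W.subtype with hH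
        have hfrH : finrank ℝ H = j := by
          rw [← hfr]
          exact (LinearEquiv.finrank_eq (subEquiv W (ℝ ∙ e)ᗮ).toLinearEquiv).symm
        have h1 := ih H hfrH
        rw [lintegral_const_mul' _ _ hNt]
        rw [← lintegral_subEquiv W (ℝ ∙ e)ᗮ (fun y => F2 y),
          ← lintegral_subEquiv W (ℝ ∙ e)ᗮ (fun y => projE F1 _ y ^ ((j:ℝ)/k))] at h1
        refine le_trans (lintegral_mono fun y => ?_) h1
        refine iSup_le fun s => ?_
        apply ENNReal.rpow_le_rpow _ hp.le
        refine iSup_le fun z => ?_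
        have hmem : s • (e:V) + (z:V) ∈ Hᗮ := by
          rw [Submodule.mem_orthogonal]
          rintro _ ⟨u, hu, rfl⟩
          have h2 : inner ℝ e u = 0 := Submodule.mem_orthogonal_singleton_iff_inner_right.1 hu
          have h3 : inner ℝ (u:V) (e:V) = 0 := by rw [real_inner_comm]; exact h2
          have h4 : inner ℝ (u:V) (z:V) = 0 := z.2 u u.2
          simp only [Submodule.subtype_apply]
          rw [inner_add_right, inner_smul_right, h3, h4]; simp
        refine le_trans (le_of_eq ?_) (le_iSup (fun z : Hᗮ => F1 (((subEquiv W (ℝ ∙ e)ᗮ y : H) : V) + (z : V))) ⟨_, hmem⟩)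
        congr 1
        have : ((subEquiv W (ℝ ∙ e)ᗮ y : H) : V) = ((y : W) : V) := rfl
        rw [this]
        push_cast
        abel)
    simp_rw [hpow] at key
    refine key.trans (le_of_eq ?_)
    rw [lintegral_const_mul' _ _ hNt, ← mul_assoc]
    congr 1
    rw [hcast, hN, add_sub_cancel_right]
    nth_rewrite 2 [← ENNReal.rpow_one M]
    rw [← ENNReal.rpow_add _ _ hM0 hMt, ← ENNReal.rpow_mul, ← ENNReal.rpow_add _ _ hM0 hMt]
    congr 1
    push_cast
    field_simp
    ring

end

end PiecePI

section PiecePJ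

open MeasureTheory Set Module Filter Topology Metric
open scoped ENNReal Pointwise
set_option linter.unusedSectionVars false

section
variable {V : Type*} [NormedAddCommGroup V] [InnerProductSpace ℝ V]
    [FiniteDimensional ℝ V] [MeasurableSpace V] [BorelSpace V]

theorem convex_bounded {K : Set V} (hK : Convex ℝ K) {x0 : V} {r : ℝ} (hr : 0 < r)
    (hball : ball x0 r ⊆ K) (hfin : volume K ≠ ⊤) : ∃ R : ℝ, 0 < R ∧ ∀ x ∈ K, ‖x - x0‖ < R := by
  have hv : volume (ball (0:V) (r/2)) ≠ 0 := (measure_ball_pos volume 0 (by positivity)).ne'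
  obtain ⟨N, hN⟩ := ENNReal.exists_nat_mul_gt hv hfin
  have hN0 : 0 < N := by
    rcases Nat.eq_zero_or_pos N with h | h
    · subst h; simp at hN
    · exact h
  have hNR : (0:ℝ) < N := by exact_mod_cast hN0
  refine ⟨2 * r * N, by positivity, fun x hx => ?_⟩
  by_contra! hD
  set D := ‖x - x0‖ with hDdef
  let p : ℕ → V := fun i => x0 + ((i:ℝ) / (2 * N)) • (x - x0)
  have hsub : ∀ i ∈ Finset.range N, ball (p i) (r/2) ⊆ K := by
    intro i hi w hw
    have hiN : (i:ℝ) < N := by exact_mod_cast Finset.mem_range.1 hi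
    set s : ℝ := (i:ℝ) / (2 * N) with hs
    have hs0 : 0 ≤ s := by positivity
    have hs1 : s ≤ 1/2 := by
      rw [hs, div_le_iff₀ (by positivity)]; linarith
    have h1 : (0:ℝ) < 1 - s := by linarith
    set u := w - p i with hu
    have hun : ‖u‖ < r/2 := by rw [hu, ← dist_eq_norm]; exact hw
    have hq : x0 + (1 - s)⁻¹ • u ∈ K := by
      apply hball
      rw [mem_ball, dist_eq_norm, add_sub_cancel_left, norm_smul, norm_inv, Real.norm_of_nonneg h1.le,
        inv_mul_lt_iff₀ h1]
      nlinarith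
    have := hK hq hx h1.le hs0 (by ring)
    convert! this using 1
    rw [smul_add, smul_smul, mul_inv_cancel₀ h1.ne', one_smul, hu]
    simp only [p]
    rw [← hs]
    module
  have hdisj : (Finset.range N : Set ℕ).PairwiseDisjoint (fun i => ball (p i) (r/2)) := by
    intro i _ j _ hij
    apply ball_disjoint_ball
    have : p i - p j = (((i:ℝ) - j) / (2 * N)) • (x - x0) := by
      simp only [p]
      rw [sub_div]
      module
    rw [dist_eq_norm, this, norm_smul, norm_div, Real.norm_of_nonneg (by positivity : (0:ℝ) ≤ 2 * N),
      ← hDdef, Real.norm_eq_abs]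
    have h1 : (1:ℝ) ≤ |(i:ℝ) - j| := by
      have : (1:ℤ) ≤ |(i:ℤ) - j| := Int.one_le_abs (by omega)
      exact_mod_cast this
    rw [div_mul_eq_mul_div, le_div_iff₀ (by positivity)]
    have hD0 : 0 ≤ D := norm_nonneg _
    have := mul_le_mul_of_nonneg_right h1 hD0
    linarith
  have := measure_biUnion_finset (μ := volume) hdisj (fun i _ => measurableSet_ball)
  have h2 : volume (⋃ i ∈ Finset.range N, ball (p i) (r/2)) ≤ volume K :=
    measure_mono (iUnion₂_subset hsub)
  rw [this] at h2
  simp only [Measure.addHaar_ball_center] at h2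
  simp only [Finset.sum_const, Finset.card_range, nsmul_eq_mul] at h2
  have h3 : volume (ball (0:V) (r/2)) * N ≤ volume K := by rwa [mul_comm]
  first
  | exact absurd (hN.trans_le h2) (lt_irrefl _)
  | exact absurd (hN.trans_le h3) (lt_irrefl _)

theorem convex_superlevel {f : V → ℝ} (hf0 : ∀ x, 0 ≤ f x)
    (hlc : ∀ (x y : V) (t : ℝ), 0 < t → t < 1 → f x ^ t * f y ^ (1 - t) ≤ f (t • x + (1 - t) • y))
    {c : ℝ} (hc : 0 ≤ c) : Convex ℝ {x | c < f x} := by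
  intro x hx y hy a b ha hb hab
  simp only [mem_ofPred_eq] at hx hy ⊢
  rcases ha.eq_or_lt with rfl | ha
  · have : b = 1 := by linarith
    subst this; simpa using hy
  rcases hb.eq_or_lt with rfl | hb
  · have : a = 1 := by linarith
    subst this; simpa using hx
  have hb' : b = 1 - a := by linarith
  subst hb'
  refine lt_of_lt_of_le ?_ (hlc x y a ha (by linarith))
  rcases hc.eq_or_lt with rfl | hc
  · positivity
  calc c = c ^ a * c ^ (1 - a) := by rw [← Real.rpow_add hc]; simp
    _ < f x ^ a * f y ^ (1 - a) := by
        apply mul_lt_mul'' (Real.rpow_lt_rpow hc.le hx ha) (Real.rpow_lt_rpow hc.le hy hb) <;> positivity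

theorem decay {f : V → ℝ} (hf0 : ∀ x, 0 ≤ f x)
    (hlc : ∀ (x y : V) (t : ℝ), 0 < t → t < 1 → f x ^ t * f y ^ (1 - t) ≤ f (t • x + (1 - t) • y))
    (husc : UpperSemicontinuous f) (hIntg : Integrable f) (hpos : 0 < ∫ x, f x) :
    ∃ C c : ℝ, 0 < C ∧ 0 < c ∧ ∀ x, f x ≤ C * Real.exp (-c * ‖x‖) := by
  obtain ⟨t0, ht0, hvol⟩ : ∃ t0 : ℝ, 0 < t0 ∧ volume {x | t0 < f x} ≠ 0 := by
    by_contra! h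
    rw [integral_pos_iff_support_of_nonneg hf0 hIntg] at hpos
    have : Function.support f ⊆ ⋃ n : ℕ, {x | 1 / ((n:ℝ) + 1) < f x} := by
      intro x hx
      obtain ⟨n, hn⟩ := exists_nat_one_div_lt ((hf0 x).lt_of_ne' hx)
      exact mem_iUnion.2 ⟨n, hn⟩
    have h2 := measure_mono_null this (measure_iUnion_null fun n => h _ (by positivity))
    exact hpos.ne' h2
  have hconv : Convex ℝ {x | t0 < f x} := convex_superlevel hf0 hlc ht0.le
  obtain ⟨x0, hx0⟩ : (interior {x | t0 < f x}).Nonempty := by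
    rw [nonempty_iff_ne_empty]
    intro he
    apply hvol
    refine measure_mono_null ?_ (hconv.addHaar_frontier volume)
    intro x hx
    rw [frontier, he, sdiff_empty]
    exact subset_closure hx
  obtain ⟨r, hr, hball⟩ := Metric.isOpen_iff.1 isOpen_interior x0 hx0
  have hball := hball.trans interior_subset
  set t1 := t0 / Real.exp 1 with ht1
  have ht1p : 0 < t1 := by positivity
  have ht10 : t1 ≤ t0 := div_le_self ht0.le (by simp)
  have hfin : volume {x | t1 < f x} ≠ ⊤ := by
    have := hIntg.measure_gt_lt_top ht1p
    exact this.ne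
  obtain ⟨R, hR, hRb⟩ := convex_bounded (convex_superlevel hf0 hlc ht1p.le) hr
    (hball.trans (fun x hx => lt_of_le_of_lt ht10 hx)) hfin
  obtain ⟨a, _, hamax⟩ := UpperSemicontinuousOn.exists_isMaxOn (f := f) (s := closedBall x0 R)
    ⟨x0, mem_closedBall_self hR.le⟩ (isCompact_closedBall x0 R) (husc.upperSemicontinuousOn _)
  set C0 := max t0 (f a * Real.exp 1) with hC0
  have hC0p : 0 < C0 := lt_max_of_lt_left ht0
  have hx0t : t0 < f x0 := hball (mem_ball_self hr)
  have key : ∀ x, f x ≤ C0 * Real.exp (-(‖x - x0‖ / R)) := by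
    intro x
    rcases le_or_gt ‖x - x0‖ R with hD | hD
    · have h1 : f x ≤ f a := hamax (by simpa [dist_eq_norm] using hD)
      have h2 : Real.exp (-1) ≤ Real.exp (-(‖x - x0‖ / R)) := by
        apply Real.exp_le_exp.2
        have : ‖x - x0‖ / R ≤ 1 := (div_le_one hR).2 hD
        linarith
      calc f x ≤ f a := h1
        _ = (f a * Real.exp 1) * Real.exp (-1) := by rw [mul_assoc, ← Real.exp_add]; simp
        _ ≤ C0 * Real.exp (-(‖x - x0‖ / R)) := by
            apply mul_le_mul (le_max_right _ _) h2 (by positivity) hC0p.le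
    · set D := ‖x - x0‖ with hDdef
      have hDp : 0 < D := hR.trans hD
      set l := R / D with hl
      have hl0 : 0 < l := by positivity
      have hl1 : l < 1 := (div_lt_one hDp).2 hD
      have hy : f (l • x + (1 - l) • x0) ≤ t1 := by
        by_contra! h
        have := hRb _ h
        have h2 : l • x + (1 - l) • x0 - x0 = l • (x - x0) := by module
        rw [h2, norm_smul, Real.norm_of_nonneg hl0.le, ← hDdef, hl, div_mul_cancel₀ _ hDp.ne'] at this
        exact lt_irrefl _ this
      have h1 := (hlc x x0 l hl0 hl1).trans hy
      have h2 : t0 ^ (1 - l) ≤ f x0 ^ (1 - l) := Real.rpow_le_rpow ht0.le hx0t.le (by linarith)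
      have hfx : 0 ≤ f x ^ l := Real.rpow_nonneg (hf0 x) l
      have h3 : f x ^ l * t0 ^ (1 - l) ≤ t1 := (mul_le_mul_of_nonneg_left h2 hfx).trans h1
      have h4 : f x ^ l ≤ (t0 * Real.exp (-(D / R))) ^ l := by
        rw [Real.mul_rpow ht0.le (Real.exp_pos _).le, ← Real.exp_mul]
        have e1 : -(D / R) * l = -1 := by rw [hl]; field_simp
        rw [e1]
        have e2 : t1 = (t0 ^ l * Real.exp (-1)) * t0 ^ (1 - l) := by
          rw [mul_right_comm, ← Real.rpow_add ht0, ht1, Real.exp_neg]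
          simp [div_eq_mul_inv]
        rw [e2] at h3
        exact le_of_mul_le_mul_right h3 (Real.rpow_pos_of_pos ht0 _)
      have h5 : f x ≤ t0 * Real.exp (-(D / R)) :=
        (Real.rpow_le_rpow_iff (hf0 x) (by positivity) hl0).1 h4
      exact h5.trans (mul_le_mul_of_nonneg_right (le_max_left _ _) (Real.exp_pos _).le)
  refine ⟨C0 * Real.exp (‖x0‖ / R), R⁻¹, by positivity, by positivity, fun x => (key x).trans ?_⟩
  rw [mul_assoc, ← Real.exp_add]
  apply mul_le_mul_of_nonneg_left _ hC0p.le
  apply Real.exp_le_exp.2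
  have h : ‖x‖ ≤ ‖x - x0‖ + ‖x0‖ := by simpa using norm_add_le (x - x0) x0
  have h2 : ‖x‖ / R ≤ (‖x - x0‖ + ‖x0‖) / R := by gcongr
  rw [add_div, div_eq_inv_mul] at h2
  linarith

theorem integrable_exp_norm (hV : 1 ≤ finrank ℝ V) {c : ℝ} (hc : 0 < c) :
    Integrable (fun x : V => Real.exp (-c * ‖x‖)) := by
  have : Nontrivial V := finrank_pos_iff (R := ℝ).1 hV
  rw [integrable_fun_norm_addHaar volume (f := fun r => Real.exp (-c * r))]
  have := integrableOn_rpow_mul_exp_neg_mul_rpow (p := 1) (s := ((finrank ℝ V - 1 : ℕ) : ℝ)) (b := c)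
    (by have : (0:ℝ) ≤ ((finrank ℝ V - 1 : ℕ) : ℝ) := by positivity
        linarith) one_pos hc
  simpa [Real.rpow_natCast] using this
end

end PiecePJ

open MeasureTheory Set Module Filter Topology Metric
open scoped ENNReal Pointwise
set_option linter.unusedSectionVars false

section
variable {V : Type*} [NormedAddCommGroup V] [InnerProductSpace ℝ V]
    [FiniteDimensional ℝ V] [MeasurableSpace V] [BorelSpace V]

theorem norm_le_add_orth (H : Submodule ℝ V) (y : H) (z : Hᗮ) : ‖y‖ ≤ ‖(y:V) + (z:V)‖ := by
  have h : inner ℝ (y:V) (z:V) = 0 := z.2 y y.2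
  have h1 := norm_add_sq_eq_norm_sq_add_norm_sq_of_inner_eq_zero (y:V) (z:V) h
  have h2 : ‖y‖ = ‖(y:V)‖ := rfl
  rw [h2]
  nlinarith [norm_nonneg (y:V), norm_nonneg ((y:V)+(z:V)), mul_self_nonneg ‖(z:V)‖]

theorem exp_bound {C c : ℝ} (hC : 0 < C) (hc : 0 < c) {f : V → ℝ} 
    (hd : ∀ x, f x ≤ C * Real.exp (-c * ‖x‖)) (H : Submodule ℝ V) (y : H) (z : Hᗮ) :
    f ((y:V) + (z:V)) ≤ C * Real.exp (-c * ‖y‖) := by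
  refine (hd _).trans (mul_le_mul_of_nonneg_left (Real.exp_le_exp.2 ?_) hC.le)
  have := norm_le_add_orth H y z
  nlinarith

theorem projE_ofReal {C c : ℝ} (hC : 0 < C) (hc : 0 < c) {f : V → ℝ} 
    (hd : ∀ x, f x ≤ C * Real.exp (-c * ‖x‖)) (H : Submodule ℝ V) (y : H) :
    projE (fun x => ENNReal.ofReal (f x)) H y = ENNReal.ofReal (⨆ z : Hᗮ, f ((y:V) + (z:V))) := by
  have hb : BddAbove (range fun z : Hᗮ => f ((y:V) + (z:V))) :=
    ⟨_, by rintro _ ⟨z, rfl⟩; exact exp_bound hC hc hd H y z⟩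
  exact (ENNReal.ofReal_mono.map_ciSup_of_continuousAt ENNReal.continuous_ofReal.continuousAt hb).symm

theorem proj_le {C c : ℝ} (hC : 0 < C) (hc : 0 < c) {f : V → ℝ} 
    (hd : ∀ x, f x ≤ C * Real.exp (-c * ‖x‖)) (H : Submodule ℝ V) (y : H) :
    projE (fun x => ENNReal.ofReal (f x)) H y ≤ ENNReal.ofReal (C * Real.exp (-c * ‖y‖)) :=
  iSup_le fun z => ENNReal.ofReal_le_ofReal (exp_bound hC hc hd H y z)

theorem proj_fin {C c : ℝ} (hC : 0 < C) (hc : 0 < c) {f : V → ℝ} 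
    (hd : ∀ x, f x ≤ C * Real.exp (-c * ‖x‖)) (H : Submodule ℝ V) (hH : 1 ≤ finrank ℝ H)
    (p : ℝ) (hp : 0 < p) :
    ∫⁻ y : H, projE (fun x => ENNReal.ofReal (f x)) H y ^ p ≠ ⊤ := by
  have hle : ∀ y : H, projE (fun x => ENNReal.ofReal (f x)) H y ^ p
      ≤ ENNReal.ofReal (C ^ p * Real.exp (-(c * p) * ‖y‖)) := by
    intro y
    refine (ENNReal.rpow_le_rpow (proj_le hC hc hd H y) hp.le).trans (le_of_eq ?_)
    rw [ENNReal.ofReal_rpow_of_nonneg (by positivity) hp.le, Real.mul_rpow hC.le (Real.exp_pos _).le,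
      ← Real.exp_mul]
    congr 3
    ring
  have hi : Integrable (fun y : H => C ^ p * Real.exp (-(c * p) * ‖y‖)) :=
    (integrable_exp_norm hH (by positivity)).const_mul _
  exact ((lintegral_mono hle).trans_lt hi.lintegral_lt_top).ne

theorem convex_ofReal {f : V → ℝ} (hf0 : ∀ x, 0 ≤ f x)
    (hlc : ∀ (x y : V) (t : ℝ), 0 < t → t < 1 → f x ^ t * f y ^ (1 - t) ≤ f (t • x + (1 - t) • y))
    (c : ℝ≥0∞) : Convex ℝ {x | c < ENNReal.ofReal (f x)} := by
  by_cases hc : c = ⊤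
  · subst hc; simp [convex_empty]
  have : {x | c < ENNReal.ofReal (f x)} = {x | c.toReal < f x} := by
    ext x
    simp only [mem_ofPred_eq]
    exact ENNReal.lt_ofReal_iff_toReal_lt hc
  rw [this]
  exact convex_superlevel hf0 hlc ENNReal.toReal_nonneg

end

/-- **The functional Milman problem** (Theorem 6.1): if `f₁, f₂ ∈ Q₀ⁿ` satisfy
`‖P_H f₁‖_{L¹(H)} ≤ ∫_H f₂ dλ_H` for every `k`-dimensional subspace `H`, then
`‖f₁‖_{n/k} ≤ ‖f₂‖₁^{k/n}·‖f₂‖_∞^{(n−k)/n}`. -/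
theorem functional_milman (n k : ℕ) (hn : 2 ≤ n) (hk1 : 1 ≤ k) (hk2 : k ≤ n - 1)
    (f₁ f₂ : Eucl n → ℝ) (hf₁ : MemQ0 f₁) (hf₂ : MemQ0 f₂)
    (hcond : ∀ H : Submodule ℝ (Eucl n), Module.finrank ℝ H = k →
      projL1 f₁ H ≤ sectL1 f₂ H) :
    lpNorm ((n : ℝ) / k) f₁ ≤
      (∫ x, f₂ x) ^ ((k : ℝ) / n) * supNorm f₂ ^ (((n : ℝ) - k) / n) := by
  obtain ⟨h10, h1lc, h1u, h1i, h1p⟩ := hf₁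
  obtain ⟨h20, h2lc, h2u, h2i, h2p⟩ := hf₂
  obtain ⟨C1, c1, hC1, hc1, hd1⟩ := decay h10 h1lc h1u h1i h1p
  obtain ⟨C2, c2, hC2, hc2, hd2⟩ := decay h20 h2lc h2u h2i h2p
  have hk0 : (0:ℝ) < k := by exact_mod_cast hk1
  have hn0 : (0:ℝ) < n := by exact_mod_cast (by omega : 0 < n)
  have hkn : (k:ℝ) ≤ n := by exact_mod_cast (by omega : k ≤ n)
  have hbdd : BddAbove (range f₂) := by
    refine ⟨C2, ?_⟩
    rintro _ ⟨x, rfl⟩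
    refine (hd2 x).trans (mul_le_of_le_one_right hC2.le (Real.exp_le_one_iff.2 ?_))
    nlinarith [norm_nonneg x]
  have hle : ∀ x, f₂ x ≤ supNorm f₂ := fun x => le_ciSup hbdd x
  have hS : 0 < supNorm f₂ := by
    by_contra! h
    have : ∫ x, f₂ x ≤ 0 := integral_nonpos fun x => (hle x).trans h
    linarith
  have hbase : ∀ H : Submodule ℝ (Eucl n), finrank ℝ H = k →
      ∫⁻ y : H, projE (fun x => ENNReal.ofReal (f₁ x)) H y ≤ ∫⁻ y : H, ENNReal.ofReal (f₂ y) := by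
    intro H hH
    have hH1 : 1 ≤ finrank ℝ H := by omega
    have hc := hcond H hH
    unfold projL1 sectL1 at hc
    have hi2 : Integrable (fun y : H => f₂ y) := by
      refine Integrable.mono' ((integrable_exp_norm hH1 hc2).const_mul C2)
        (h2u.measurable.comp measurable_subtype_coe).aestronglyMeasurable (ae_of_all _ fun y => ?_)
      rw [Real.norm_of_nonneg (h20 _)]
      exact hd2 y
    have hm : AEMeasurable (fun y : H => projE (fun x => ENNReal.ofReal (f₁ x)) H y) volume :=
      aemeasurable_of_convex (convex_projE (convex_ofReal h10 h1lc) H)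
    have h0 : ∀ y : H, 0 ≤ ⨆ z : Hᗮ, f₁ ((y:Eucl n) + (z:Eucl n)) := fun y => Real.iSup_nonneg fun z => h10 _
    have heq : (fun y : H => ⨆ z : Hᗮ, f₁ ((y:Eucl n) + (z:Eucl n)))
        = fun y => (projE (fun x => ENNReal.ofReal (f₁ x)) H y).toReal := by
      funext y
      rw [projE_ofReal hC1 hc1 hd1, ENNReal.toReal_ofReal (h0 y)]
    have hi1 : Integrable (fun y : H => ⨆ z : Hᗮ, f₁ ((y:Eucl n) + (z:Eucl n))) := by
      refine Integrable.mono' ((integrable_exp_norm hH1 hc1).const_mul C1) ?_ (ae_of_all _ fun y => ?_)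
      · rw [heq]
        exact hm.ennreal_toReal.aestronglyMeasurable
      rw [Real.norm_of_nonneg (h0 y)]
      exact ciSup_le fun z => exp_bound hC1 hc1 hd1 H y z
    simp_rw [projE_ofReal hC1 hc1 hd1]
    rw [← ofReal_integral_eq_lintegral_ofReal hi1 (ae_of_all _ h0),
      ← ofReal_integral_eq_lintegral_ofReal hi2 (ae_of_all _ fun y => h20 _)]
    exact ENNReal.ofReal_le_ofReal hc
  have main := proj_induction (F1 := fun x => ENNReal.ofReal (f₁ x)) (F2 := fun x => ENNReal.ofReal (f₂ x))
    (convex_ofReal h10 h1lc) h2u.measurable.ennreal_ofReal (M := ENNReal.ofReal (supNorm f₂))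
    (by simpa using hS) ENNReal.ofReal_ne_top (fun x => ENNReal.ofReal_le_ofReal (hle x)) hk1
    (proj_fin hC1 hc1 hd1) hbase n (by omega) ⊤ (by simp)
  have hT : ∀ g : Eucl n → ℝ≥0∞, ∫⁻ y : (⊤ : Submodule ℝ (Eucl n)), g y = ∫⁻ x, g x := by
    intro g
    have h := LinearIsometryEquiv.measurePreserving (E := (⊤ : Submodule ℝ (Eucl n))) (F := Eucl n)
      (LinearIsometryEquiv.ofTop (Eucl n) ⊤ rfl)
    exact h.lintegral_comp_emb
      (LinearIsometryEquiv.ofTop (Eucl n) ⊤ rfl).toHomeomorph.measurableEmbedding g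
  set p : ℝ := (n:ℝ)/k with hp
  have hp0 : 0 < p := by positivity
  have main2 : ∫⁻ x, ENNReal.ofReal (f₁ x ^ p)
      ≤ ENNReal.ofReal (supNorm f₂ ^ (((n:ℝ) - k)/k) * ∫ x, f₂ x) := by
    rw [ENNReal.ofReal_mul (by positivity), ofReal_integral_eq_lintegral_ofReal h2i (ae_of_all _ h20),
      ← ENNReal.ofReal_rpow_of_pos hS, ← hT (fun x => ENNReal.ofReal (f₂ x)),
      ← hT (fun x => ENNReal.ofReal (f₁ x ^ p))]
    refine le_trans (lintegral_mono fun y => ?_) main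
    rw [← ENNReal.ofReal_rpow_of_nonneg (h10 _) hp0.le]
    apply ENNReal.rpow_le_rpow _ hp0.le
    refine le_trans (le_of_eq ?_) (le_iSup _ 0)
    simp
  have hA : ∫ x, f₁ x ^ p ≤ supNorm f₂ ^ (((n:ℝ) - k)/k) * ∫ x, f₂ x := by
    rw [integral_eq_lintegral_of_nonneg_ae (ae_of_all _ fun x => Real.rpow_nonneg (h10 x) p)
      (h1u.measurable.pow_const p).aestronglyMeasurable]
    exact ENNReal.toReal_le_of_le_ofReal (by positivity) main2
  unfold _root_.lpNorm
  have hq : 1 / p = (k:ℝ)/n := by rw [hp]; field_simp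
  rw [hq]
  refine (Real.rpow_le_rpow (integral_nonneg fun x => Real.rpow_nonneg (h10 x) p) hA
    (by positivity)).trans (le_of_eq ?_)
  rw [Real.mul_rpow (by positivity) h2p.le, ← Real.rpow_mul hS.le, mul_comm]
  congr 2
  field_simp
end
end

section
/- Let n ≥ 2, let 1 ≤ k ≤ n−1, and let f₁, f₂ ∈ Q₀ⁿ. Assume the Milman condition: ‖P_H f₁‖_{L¹(H)} ≤ ∫_H f₂ dλ_H for every k-dimensional linear subspace H ⊆ ℝⁿ. Assume further that f₂ is centered (∫_{ℝⁿ} x f₂(x) dx = 0) and that M > 0 is such that L_g ≤ M for every g ∈ Q₀^{n−k}. Then ‖f₁‖_{n/k} ≤ (M / L_{f₂})^{n−k} · ‖f₂‖₁^{k/n} · ‖f₂‖_∞^{(n−k)/n}. -/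
open MeasureTheory

noncomputable section

/-- The covariance matrix of the probability measure `‖g‖₁⁻¹ g(x) dx`:
`Cov(g)_{ij} = ‖g‖₁⁻¹ ∫ xᵢxⱼ g − bᵢbⱼ` with barycenter `b = ‖g‖₁⁻¹ ∫ x g(x) dx`. -/
def covMatrix {d : ℕ} (g : Eucl d → ℝ) : Matrix (Fin d) (Fin d) ℝ :=
  Matrix.of fun i j =>
    (∫ x, g x * x i * x j) / (∫ x, g x) -
      ((∫ x, g x * x i) / ∫ x, g x) * ((∫ x, g x * x j) / ∫ x, g x)

/-- The isotropic constant `L_g = (‖g‖_∞/‖g‖₁)^{1/d} · (det Cov(g))^{1/(2d)}`. -/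
def isoConst {d : ℕ} (g : Eucl d → ℝ) : ℝ :=
  (supNorm g / ∫ x, g x) ^ ((1 : ℝ) / d) *
    (covMatrix g).det ^ (1 / (2 * (d : ℝ)))

theorem finner_aux {δ ι : Type*} [Fintype δ] [DecidableEq δ] [Fintype ι]
    (I : ι → Finset δ) (g : ι → (δ → ℝ) → ENNReal) (hg : ∀ j, Measurable (g j))
    (hdep : ∀ j x y, (∀ i ∈ I j, x i = y i) → g j x = g j y)
    (p : ℝ) (hp : 0 ≤ p) (hcov : ∀ i, ((Finset.univ.filter (fun j => i ∈ I j)).card : ℝ) * p = 1)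
    (s : Finset δ) : ∀ x : δ → ℝ,
    lmarginal (fun _ => volume) s (fun x => ∏ j, g j x ^ p) x ≤
      ∏ j, (lmarginal (fun _ => volume) (s ∩ I j) (g j) x) ^ p := by
  classical
  have hm : Measurable (fun x => ∏ j, g j x ^ p) :=
    Finset.measurable_fun_prod _ (fun j _ => (hg j).pow_const p)
  induction s using Finset.induction with
  | empty => intro x; simp
  | insert i s hi ih =>
    intro x
    rw [lmarginal_insert _ hm hi]
    have key : ∀ j, i ∉ I j → ∀ a, lmarginal (fun _ => volume) (s ∩ I j) (g j)
        (Function.update x i a) = lmarginal (fun _ => (volume : Measure ℝ)) (s ∩ I j) (g j) x := by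
      intro j hj a
      unfold lmarginal
      congr 1
      ext y
      apply hdep
      intro l hl
      have : l ≠ i := by rintro rfl; exact hj hl
      simp [Function.updateFinset, this]
    calc _ ≤ ∫⁻ a, ∏ j, (lmarginal (fun _ => (volume : Measure ℝ)) (s ∩ I j) (g j) (Function.update x i a)) ^ p :=
          lintegral_mono (fun a => ih _)
      _ = ∫⁻ a, (∏ j with i ∉ I j, (lmarginal (fun _ => (volume : Measure ℝ)) (s ∩ I j) (g j) x) ^ p) *
            ∏ j with i ∈ I j, (lmarginal (fun _ => (volume : Measure ℝ)) (s ∩ I j) (g j) (Function.update x i a)) ^ p := by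
          congr 1; ext a
          rw [← Finset.prod_filter_mul_prod_filter_not Finset.univ (fun j => i ∈ I j), mul_comm]
          congr 1
          apply Finset.prod_congr rfl
          intro j hj
          rw [key j (by simpa using hj)]
      _ = (∏ j with i ∉ I j, (lmarginal (fun _ => (volume : Measure ℝ)) (s ∩ I j) (g j) x) ^ p) *
            ∫⁻ a, ∏ j with i ∈ I j, (lmarginal (fun _ => (volume : Measure ℝ)) (s ∩ I j) (g j) (Function.update x i a)) ^ p := by
          rw [lintegral_const_mul]
          refine Finset.measurable_fun_prod _ (fun j _ => Measurable.pow_const ?_ p)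
          exact (Measurable.lmarginal _ (hg j)).comp (measurable_update x)
      _ ≤ (∏ j with i ∉ I j, (lmarginal (fun _ => (volume : Measure ℝ)) (s ∩ I j) (g j) x) ^ p) *
            ∏ j with i ∈ I j, (∫⁻ a, (lmarginal (fun _ => (volume : Measure ℝ)) (s ∩ I j) (g j) (Function.update x i a))) ^ p := by
          gcongr
          apply ENNReal.lintegral_prod_norm_pow_le
          · intro j _
            exact ((Measurable.lmarginal _ (hg j)).comp (measurable_update x)).aemeasurable
          · simpa using hcov i
          · intros; exact hp
      _ = _ := by
          rw [← Finset.prod_filter_mul_prod_filter_not Finset.univ (fun j => i ∈ I j)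
            (fun j => (lmarginal (fun _ => (volume : Measure ℝ)) (insert i s ∩ I j) (g j) x) ^ p), mul_comm]
          congr 1
          · apply Finset.prod_congr rfl
            intro j hj
            have hj : i ∈ I j := by simpa using hj
            rw [Finset.insert_inter_of_mem hj, lmarginal_insert _ (hg j) (by simp [hi])]
          · apply Finset.prod_congr rfl
            intro j hj
            have hj : i ∉ I j := by simpa using hj
            rw [Finset.insert_inter_of_notMem hj]

/-- Finner inequality with equal exponents. -/
theorem finner {δ ι κ : Type*} [Fintype δ] [DecidableEq δ] [Fintype ι] [Fintype κ] [DecidableEq κ]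
    (e : ι → κ → δ) (he : ∀ j, Function.Injective (e j))
    (g : ι → (κ → ℝ) → ENNReal) (hg : ∀ j, Measurable (g j))
    (p : ℝ) (hp : 0 ≤ p)
    (hcov : ∀ i, ((Finset.univ.filter (fun j => i ∈ Finset.univ.image (e j))).card : ℝ) * p = 1) :
    ∫⁻ x : δ → ℝ, ∏ j, g j (fun i => x (e j i)) ^ p ≤ ∏ j, (∫⁻ y, g j y) ^ p := by
  have hme : ∀ j, Measurable (fun (x : δ → ℝ) (i : κ) => x (e j i)) := fun j =>
    measurable_pi_iff.mpr fun i => measurable_pi_apply _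
  have := finner_aux (fun j => Finset.univ.image (e j)) (fun j x => g j (fun i => x (e j i)))
    (fun j => (hg j).comp (hme j))
    (by
      intro j x y h
      congr 1; ext i
      exact h _ (by simp)) p hp hcov Finset.univ 0
  have h2 : ∀ j, lmarginal (fun _ => (volume : Measure ℝ)) (Finset.univ.image (e j))
      (fun x => g j (fun i => x (e j i))) 0 = ∫⁻ y, g j y := by
    intro j
    have h3 := lmarginal_image (μ := fun _ : δ => (volume : Measure ℝ)) (he j) Finset.univ (hg j) 0
    simp only [lmarginal_univ] at h3
    exact h3
  simp only [lmarginal_univ, Finset.univ_inter, h2] at this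
  exact this

section
open scoped Pointwise

theorem bm1_compact {A B C : Set ℝ} (hA : IsCompact A) (hB : IsCompact B) (hAn : A.Nonempty)
    (hBn : B.Nonempty) (h : ∀ a ∈ A, ∀ b ∈ B, a + b ∈ C) : volume A + volume B ≤ volume C := by
  have h1 := hA.sSup_mem hAn
  have h2 := hB.sInf_mem hBn
  have e1 : volume ((fun x => x + sInf B) '' A) = volume A := by
    rw [Set.image_add_right, measure_preimage_add_right]
  have e2 : volume ((fun x => sSup A + x) '' B) = volume B := by
    rw [Set.image_add_left, measure_preimage_add]
  rw [← e1, ← e2, ← measure_union₀]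
  · apply measure_mono
    rintro _ (⟨a, ha, rfl⟩ | ⟨b, hb, rfl⟩)
    · exact h _ ha _ h2
    · exact h _ h1 _ hb
  · exact (hB.image (by fun_prop)).measurableSet.nullMeasurableSet
  · refine measure_mono_null (t := {sSup A + sInf B}) ?_ (by simp)
    rintro _ ⟨⟨a, ha, rfl⟩, ⟨b, hb, hab⟩⟩
    have := le_csSup hA.bddAbove ha
    have := csInf_le hB.bddBelow hb
    simp only at hab
    simp only [Set.mem_singleton_iff]
    linarith

theorem bm1 {A B C : Set ℝ} (hA : MeasurableSet A) (hB : MeasurableSet B) (hAn : A.Nonempty)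
    (hBn : B.Nonempty) (h : ∀ a ∈ A, ∀ b ∈ B, a + b ∈ C) : volume A + volume B ≤ volume C := by
  rw [hA.measure_eq_iSup_isCompact, hB.measure_eq_iSup_isCompact]
  simp only [iSup_and']
  obtain ⟨a, ha⟩ := hAn
  obtain ⟨b, hb⟩ := hBn
  refine ENNReal.biSup_add_biSup_le' ⟨∅, by simp⟩ ⟨∅, by simp⟩ ?_
  rintro K ⟨hK, hKc⟩ L ⟨hL, hLc⟩
  refine le_trans (add_le_add (measure_mono (Set.subset_insert a K))
    (measure_mono (Set.subset_insert b L)))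
    (bm1_compact (hKc.insert a) (hLc.insert b) (by simp) (by simp) ?_)
  intro x hx y hy
  apply h
  · exact Set.insert_subset ha hK hx
  · exact Set.insert_subset hb hL hy

theorem bm1_smul {A B C : Set ℝ} (hA : MeasurableSet A) (hB : MeasurableSet B) (hAn : A.Nonempty)
    (hBn : B.Nonempty) {t : ℝ} (ht0 : 0 < t) (ht1 : t < 1)
    (h : ∀ a ∈ A, ∀ b ∈ B, t * a + (1 - t) * b ∈ C) :
    ENNReal.ofReal t * volume A + ENNReal.ofReal (1 - t) * volume B ≤ volume C := by
  have h1 : ENNReal.ofReal t * volume A = volume (t • A) := by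
    rw [Measure.addHaar_smul]; simp [abs_of_pos ht0]
  have h2 : ENNReal.ofReal (1 - t) * volume B = volume ((1 - t) • B) := by
    rw [Measure.addHaar_smul]; simp [abs_of_pos (sub_pos.2 ht1)]
  rw [h1, h2]
  apply bm1 (hA.const_smul₀ _) (hB.const_smul₀ _) hAn.smul_set hBn.smul_set
  rintro _ ⟨a, ha, rfl⟩ _ ⟨b, hb, rfl⟩
  exact h a ha b hb

theorem pl1_norm {u v w : ℝ → ℝ} (hu : Measurable u) (hv : Measurable v) (hw : Measurable w)
    (hu0 : ∀ x, 0 ≤ u x) (hv0 : ∀ x, 0 ≤ v x) (hw0 : ∀ x, 0 ≤ w x)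
    (hu1 : ∀ x, u x ≤ 1) (hv1 : ∀ x, v x ≤ 1)
    (hus : ∀ s < 1, ∃ x, s < u x) (hvs : ∀ s < 1, ∃ x, s < v x)
    {t : ℝ} (ht0 : 0 < t) (ht1 : t < 1)
    (h : ∀ x y, u x ^ t * v y ^ (1 - t) ≤ w (t * x + (1 - t) * y)) :
    ENNReal.ofReal t * (∫⁻ x, ENNReal.ofReal (u x)) +
      ENNReal.ofReal (1 - t) * (∫⁻ x, ENNReal.ofReal (v x)) ≤ ∫⁻ x, ENNReal.ofReal (w x) := by
  rw [lintegral_eq_lintegral_meas_lt _ (ae_of_all _ hu0) hu.aemeasurable,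
    lintegral_eq_lintegral_meas_lt _ (ae_of_all _ hv0) hv.aemeasurable,
    lintegral_eq_lintegral_meas_lt _ (ae_of_all _ hw0) hw.aemeasurable]
  have mA : ∀ z : ℝ → ℝ, Measurable fun s : ℝ => volume {x | s < z x} := fun z =>
    Antitone.measurable (fun a b hab => measure_mono (fun x hx => lt_of_le_of_lt hab hx))
  rw [← lintegral_const_mul _ (mA u), ← lintegral_const_mul _ (mA v),
    ← lintegral_add_left ((mA u).const_mul _)]
  apply setLIntegral_mono (mA w)
  intro s hs
  have hs : 0 < s := hs
  by_cases hs1 : s < 1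
  · apply bm1_smul (measurableSet_lt measurable_const hu) (measurableSet_lt measurable_const hv)
      (hus s hs1) (hvs s hs1) ht0 ht1
    intro a ha b hb
    refine lt_of_lt_of_le ?_ (h a b)
    have : s = s ^ t * s ^ (1 - t) := by rw [← Real.rpow_add hs]; simp
    rw [this]
    exact mul_lt_mul'' (Real.rpow_lt_rpow hs.le ha ht0)
      (Real.rpow_lt_rpow hs.le hb (by linarith)) (by positivity) (by positivity)
  · have e : ∀ z : ℝ → ℝ, (∀ x, z x ≤ 1) → {x | s < z x} = ∅ := by
      intro z hz; ext x; simp; linarith [hz x]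
    simp [e u hu1, e v hv1]

theorem amgm_enn (P Q : ENNReal) {t : ℝ} (ht0 : 0 < t) (ht1 : t < 1) :
    P ^ t * Q ^ (1 - t) ≤ ENNReal.ofReal t * P + ENNReal.ofReal (1 - t) * Q := by
  have ht1' : 0 < 1 - t := by linarith
  by_cases hP : P = ⊤
  · rw [hP, ENNReal.mul_top (by simpa using ht0), top_add]; exact le_top
  by_cases hQ : Q = ⊤
  · rw [hQ, ENNReal.mul_top (by simpa using ht1), add_top]; exact le_top
  rw [← ENNReal.ofReal_toReal hP, ← ENNReal.ofReal_toReal hQ,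
    ENNReal.ofReal_rpow_of_nonneg ENNReal.toReal_nonneg ht0.le,
    ENNReal.ofReal_rpow_of_nonneg ENNReal.toReal_nonneg ht1'.le,
    ← ENNReal.ofReal_mul (by positivity), ← ENNReal.ofReal_mul (by positivity),
    ← ENNReal.ofReal_mul (by positivity), ← ENNReal.ofReal_add (by positivity) (by positivity)]
  exact ENNReal.ofReal_le_ofReal (Real.geom_mean_le_arith_mean2_weighted ht0.le ht1'.le
    ENNReal.toReal_nonneg ENNReal.toReal_nonneg (by ring))

theorem pl1_bdd {u v w : ℝ → ENNReal} (hu : Measurable u) (hv : Measurable v) (hw : Measurable w)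
    {N : ENNReal} (hN : N ≠ ⊤) (huN : ∀ x, u x ≤ N) (hvN : ∀ x, v x ≤ N)
    {t : ℝ} (ht0 : 0 < t) (ht1 : t < 1)
    (h : ∀ x y, u x ^ t * v y ^ (1 - t) ≤ w (t * x + (1 - t) * y)) :
    (∫⁻ x, u x) ^ t * (∫⁻ x, v x) ^ (1 - t) ≤ ∫⁻ x, w x := by
  set a := ⨆ x, u x with ha
  set b := ⨆ x, v x with hb
  have ht1' : 0 < 1 - t := by linarith
  have hat : a ≠ ⊤ := ne_top_of_le_ne_top hN (iSup_le huN)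
  have hbt : b ≠ ⊤ := ne_top_of_le_ne_top hN (iSup_le hvN)
  by_cases ha0 : a = 0
  · have : ∀ x, u x = 0 := fun x => by
      have := le_iSup u x; rw [← ha, ha0] at this; simpa using this
    simp [this, ht0]
  by_cases hb0 : b = 0
  · have : ∀ x, v x = 0 := fun x => by
      have := le_iSup v x; rw [← hb, hb0] at this; simpa using this
    simp [this, ht1']
  set c := a ^ t * b ^ (1 - t) with hc
  have hc0 : c ≠ 0 := by
    simp [hc, ha0, hb0, hat, hbt]
  have hct : c ≠ ⊤ := by
    apply ENNReal.mul_ne_top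
    · exact ENNReal.rpow_ne_top_of_nonneg ht0.le hat
    · exact ENNReal.rpow_ne_top_of_nonneg ht1'.le hbt
  have hua : ∀ x, u x / a ≤ 1 := fun x => ENNReal.div_le_of_le_mul (by simpa using le_iSup u x)
  have hvb : ∀ x, v x / b ≤ 1 := fun x => ENNReal.div_le_of_le_mul (by simpa using le_iSup v x)
  have hsup : ∀ (z : ℝ → ENNReal) (d : ENNReal), d = ⨆ x, z x → d ≠ 0 → d ≠ ⊤ →
      ∀ s < 1, ∃ x, s < (z x / d).toReal := by
    intro z d hd hd0 hdt s hs
    by_cases hs0 : s < 0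
    · exact ⟨0, lt_of_lt_of_le hs0 ENNReal.toReal_nonneg⟩
    push Not at hs0
    have : ENNReal.ofReal s * d < ⨆ x, z x := by
      rw [← hd]
      calc ENNReal.ofReal s * d < 1 * d := by
            apply (ENNReal.mul_lt_mul_iff_left hd0 hdt).2
            simpa using hs
        _ = d := one_mul _
    obtain ⟨x, hx⟩ := lt_iSup_iff.1 this
    refine ⟨x, ?_⟩
    have hzx : z x / d ≠ ⊤ := by
      apply ne_top_of_le_ne_top ENNReal.one_ne_top
      exact ENNReal.div_le_of_le_mul (by rw [one_mul, hd]; exact le_iSup z x)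
    rw [← ENNReal.ofReal_lt_iff_lt_toReal hs0 hzx]
    exact (ENNReal.lt_div_iff_mul_lt (Or.inl hd0) (Or.inl hdt)).2 hx
  have hwt : ∀ x, min (w x / c) 1 ≠ ⊤ := fun x => ne_top_of_le_ne_top ENNReal.one_ne_top (min_le_right _ _)
  have hut : ∀ x, u x / a ≠ ⊤ := fun x => ne_top_of_le_ne_top ENNReal.one_ne_top (hua x)
  have hvt : ∀ x, v x / b ≠ ⊤ := fun x => ne_top_of_le_ne_top ENNReal.one_ne_top (hvb x)
  have main := pl1_norm (u := fun x => (u x / a).toReal) (v := fun x => (v x / b).toReal)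
    (w := fun x => (min (w x / c) 1).toReal) (hu.div_const a).ennreal_toReal
    (hv.div_const b).ennreal_toReal ((hw.div_const c).min measurable_const).ennreal_toReal
    (fun _ => ENNReal.toReal_nonneg) (fun _ => ENNReal.toReal_nonneg)
    (fun _ => ENNReal.toReal_nonneg)
    (fun x => ENNReal.toReal_le_of_le_ofReal zero_le_one (by simpa using hua x))
    (fun x => ENNReal.toReal_le_of_le_ofReal zero_le_one (by simpa using hvb x))
    (hsup u a ha ha0 hat) (hsup v b hb hb0 hbt) ht0 ht1 (by
      intro x y
      rw [ENNReal.toReal_rpow, ENNReal.toReal_rpow, ← ENNReal.toReal_mul]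
      apply ENNReal.toReal_mono (hwt _)
      apply le_min
      · rw [ENNReal.div_rpow_of_nonneg _ _ ht0.le, ENNReal.div_rpow_of_nonneg _ _ ht1'.le]
        rw [ENNReal.le_div_iff_mul_le (Or.inl hc0) (Or.inl hct)]
        refine le_trans (le_of_eq ?_) (h x y)
        have h1 : a ^ t ≠ 0 := by simp [ha0, hat]
        have h2 : b ^ (1 - t) ≠ 0 := by simp [hb0, hbt]
        calc u x ^ t / a ^ t * (v y ^ (1 - t) / b ^ (1 - t)) * c
            = (u x ^ t / a ^ t * a ^ t) * (v y ^ (1 - t) / b ^ (1 - t) * b ^ (1 - t)) := by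
              rw [hc]; ring
          _ = _ := by
              rw [ENNReal.div_mul_cancel h1 (ENNReal.rpow_ne_top_of_nonneg ht0.le hat),
                ENNReal.div_mul_cancel h2 (ENNReal.rpow_ne_top_of_nonneg ht1'.le hbt)]
      · exact mul_le_one' (ENNReal.rpow_le_one (hua x) ht0.le) (ENNReal.rpow_le_one (hvb y) ht1'.le))
  simp only [ENNReal.ofReal_toReal (hut _), ENNReal.ofReal_toReal (hvt _),
    ENNReal.ofReal_toReal (hwt _)] at main
  have main2 : ENNReal.ofReal t * (∫⁻ x, u x / a) + ENNReal.ofReal (1 - t) * (∫⁻ x, v x / b)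
      ≤ ∫⁻ x, w x / c := main.trans (lintegral_mono fun x => min_le_left _ _)
  have main3 := (amgm_enn _ _ ht0 ht1).trans main2
  simp only [div_eq_mul_inv] at main3
  rw [lintegral_mul_const _ hu, lintegral_mul_const _ hv, lintegral_mul_const _ hw,
    ← div_eq_mul_inv, ← div_eq_mul_inv, ← div_eq_mul_inv,
    ENNReal.div_rpow_of_nonneg _ _ ht0.le, ENNReal.div_rpow_of_nonneg _ _ ht1'.le,
    ENNReal.le_div_iff_mul_le (Or.inl hc0) (Or.inl hct)] at main3
  refine le_trans (le_of_eq ?_) main3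
  have h1 : a ^ t ≠ 0 := by simp [ha0, hat]
  have h2 : b ^ (1 - t) ≠ 0 := by simp [hb0, hbt]
  set U := (∫⁻ x, u x) ^ t
  set V := (∫⁻ x, v x) ^ (1 - t)
  calc U * V = (U / a ^ t * a ^ t) * (V / b ^ (1 - t) * b ^ (1 - t)) := by
          rw [ENNReal.div_mul_cancel h1 (ENNReal.rpow_ne_top_of_nonneg ht0.le hat),
                ENNReal.div_mul_cancel h2 (ENNReal.rpow_ne_top_of_nonneg ht1'.le hbt)]
    _ = _ := by rw [hc]; ring

theorem tendsto_lintegral_min {α : Type*} [MeasurableSpace α] (μ : Measure α)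
    {u : α → ENNReal} (hu : Measurable u) :
    Filter.Tendsto (fun n : ℕ => ∫⁻ x, min (u x) n ∂μ) Filter.atTop (nhds (∫⁻ x, u x ∂μ)) := by
  apply lintegral_tendsto_of_tendsto_of_monotone
  · intro n; exact (hu.min measurable_const).aemeasurable
  · refine ae_of_all _ fun x m n hmn => ?_
    exact min_le_min le_rfl (by exact_mod_cast hmn)
  · refine ae_of_all _ fun x => ?_
    have : Filter.Tendsto (fun n : ℕ => min (u x) (n : ENNReal)) Filter.atTop (nhds (min (u x) ⊤)) :=
      tendsto_const_nhds.min ENNReal.tendsto_nat_nhds_top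
    simpa using this

theorem pl1 {u v w : ℝ → ENNReal} (hu : Measurable u) (hv : Measurable v) (hw : Measurable w)
    {t : ℝ} (ht0 : 0 < t) (ht1 : t < 1)
    (h : ∀ x y, u x ^ t * v y ^ (1 - t) ≤ w (t * x + (1 - t) * y)) :
    (∫⁻ x, u x) ^ t * (∫⁻ x, v x) ^ (1 - t) ≤ ∫⁻ x, w x := by
  have ht1' : 0 < 1 - t := by linarith
  by_cases hu0 : (∫⁻ x, u x) = 0
  · simp [hu0, ht0]
  by_cases hv0 : (∫⁻ x, v x) = 0
  · simp [hv0, ht1']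
  have T := ENNReal.Tendsto.mul
    ((tendsto_lintegral_min volume hu).ennrpow_const t)
    (Or.inl (by simp [hu0, ht0, ht0.le]))
    ((tendsto_lintegral_min volume hv).ennrpow_const (1 - t))
    (Or.inl (by simp [hv0, ht1', ht1.le]))
  refine le_of_tendsto' T fun n => ?_
  refine pl1_bdd (hu.min measurable_const) (hv.min measurable_const) hw
    (N := n) (by simp) (fun x => min_le_right _ _) (fun x => min_le_right _ _) ht0 ht1 ?_
  intro x y
  refine le_trans ?_ (h x y)
  gcongr
  · exact min_le_left _ _
  · exact min_le_left _ _

/-- Prékopa–Leindler on `ℝ^k`. -/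
theorem pl_pi_s19 (k : ℕ) : ∀ {u v w : (Fin k → ℝ) → ENNReal} (_ : Measurable u) (_ : Measurable v)
    (_ : Measurable w) {t : ℝ} (_ : 0 < t) (_ : t < 1)
    (_ : ∀ x y, u x ^ t * v y ^ (1 - t) ≤ w (t • x + (1 - t) • y)),
    (∫⁻ x, u x) ^ t * (∫⁻ x, v x) ^ (1 - t) ≤ ∫⁻ x, w x := by
  induction k with
  | zero =>
    intro u v w hu hv hw t ht0 ht1 h
    have e : ∀ z : (Fin 0 → ℝ) → ENNReal, ∫⁻ x, z x = z 0 := by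
      intro z
      rw [Measure.volume_pi_eq_dirac 0]
      simp
    rw [e, e, e]
    have := h 0 0
    simpa using this
  | succ k ih =>
    intro u v w hu hv hw t ht0 ht1 h
    have ec : ∀ q : ℝ × (Fin k → ℝ), (MeasurableEquiv.piFinSuccAbove (fun _ : Fin (k+1) => ℝ) 0).symm q
        = Fin.cons q.1 q.2 := by
      intro q
      rw [MeasurableEquiv.symm_apply_eq]
      ext i
      · simp [MeasurableEquiv.piFinSuccAbove, Fin.insertNthEquiv]
      · simp [MeasurableEquiv.piFinSuccAbove, Fin.insertNthEquiv, Fin.removeNth]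
    have mc : Measurable (fun q : ℝ × (Fin k → ℝ) => (Fin.cons q.1 q.2 : Fin (k+1) → ℝ)) := by
      have := (MeasurableEquiv.piFinSuccAbove (fun _ : Fin (k+1) => ℝ) 0).symm.measurable
      simpa only [← ec] using this
    have e : ∀ z : (Fin (k+1) → ℝ) → ENNReal, Measurable z →
        ∫⁻ x, z x = ∫⁻ a, ∫⁻ y, z (Fin.cons a y) := by
      intro z hz
      rw [← (volume_preserving_piFinSuccAbove (fun _ : Fin (k+1) => ℝ) 0).symm.lintegral_comp hz]
      simp only [ec]
      rw [Measure.volume_eq_prod, lintegral_prod]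
      · exact (hz.comp mc).aemeasurable
    have m : ∀ z : (Fin (k+1) → ℝ) → ENNReal, Measurable z →
        Measurable (fun a : ℝ => ∫⁻ y, z (Fin.cons a y)) := by
      intro z hz
      exact Measurable.lintegral_prod_right' (hz.comp mc)
    have m2 : ∀ z : (Fin (k+1) → ℝ) → ENNReal, Measurable z → ∀ a : ℝ,
        Measurable (fun y => z (Fin.cons a y)) := by
      intro z hz a
      exact hz.comp (mc.comp measurable_prodMk_left)
    rw [e u hu, e v hv, e w hw]
    apply pl1 (m u hu) (m v hv) (m w hw) ht0 ht1
    intro a b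
    apply ih (m2 u hu a) (m2 v hv b) (m2 w hw _) ht0 ht1
    intro x y
    convert h (Fin.cons a x) (Fin.cons b y) using 2
    ext i
    refine Fin.cases ?_ (fun i => ?_) i <;> simp

end

theorem IsLogConcave.convex_ge {n : ℕ} {f : Eucl n → ℝ} (h : IsLogConcave f) {c : ℝ} (hc : 0 < c) :
    Convex ℝ {x | c ≤ f x} := by
  rw [convex_iff_forall_pos]
  intro x hx y hy a b ha hb hab
  have hb' : b = 1 - a := by linarith
  subst hb'
  refine le_trans ?_ (h x y a ha (by linarith))
  have : c = c ^ a * c ^ (1 - a) := by rw [← Real.rpow_add hc]; simp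
  rw [this]
  have hx : c ≤ f x := hx
  have hy : c ≤ f y := hy
  have : 0 ≤ f x ^ a := Real.rpow_nonneg (hc.le.trans hx) _
  gcongr

theorem MemQ0.exists_ball {n : ℕ} {f : Eucl n → ℝ} (hf : MemQ0 f) :
    ∃ x₀ : Eucl n, ∃ r c : ℝ, 0 < r ∧ 0 < c ∧ ∀ y ∈ Metric.ball x₀ r, c ≤ f y := by
  obtain ⟨h0, hlc, husc, hint, hpos⟩ := hf
  have h1 : 0 < volume (Function.support f) := (integral_pos_iff_support_of_nonneg h0 hint).1 hpos
  have h2 : Function.support f = ⋃ j : ℕ, {x | 1 / ((j : ℝ) + 1) ≤ f x} := by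
    ext x
    simp only [Function.mem_support, Set.mem_iUnion, Set.mem_ofPred_eq]
    constructor
    · intro hx
      obtain ⟨j, hj⟩ := exists_nat_one_div_lt (lt_of_le_of_ne (h0 x) (Ne.symm hx))
      exact ⟨j, hj.le⟩
    · rintro ⟨j, hj⟩
      have : 0 < 1 / ((j : ℝ) + 1) := by positivity
      linarith
  rw [h2] at h1
  obtain ⟨j, hj⟩ := exists_measure_pos_of_not_measure_iUnion_null h1.ne'
  have hc : 0 < 1 / ((j : ℝ) + 1) := by positivity
  have hconv := hlc.convex_ge hc
  have : (interior {x | 1 / ((j : ℝ) + 1) ≤ f x}).Nonempty := by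
    by_contra hne
    rw [Set.not_nonempty_iff_eq_empty] at hne
    have hfr := hconv.addHaar_frontier volume
    have : {x | 1 / ((j : ℝ) + 1) ≤ f x} ⊆ frontier {x | 1 / ((j : ℝ) + 1) ≤ f x} := by
      rw [frontier, hne, Set.sdiff_empty]; exact subset_closure
    exact absurd (measure_mono_null this hfr) hj.ne'
  obtain ⟨x₀, hx₀⟩ := this
  obtain ⟨r, hr, hb⟩ := Metric.isOpen_iff.1 isOpen_interior x₀ hx₀
  exact ⟨x₀, r, _, hr, hc, fun y hy => by
    have := interior_subset (hb hy)
    exact this⟩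

theorem half_ball_bound {n : ℕ} {f : Eucl n → ℝ} (hf : MemQ0 f) {x₀ : Eucl n} {r c : ℝ}
    (hc : 0 < c) (hb : ∀ y ∈ Metric.ball x₀ r, c ≤ f y) (x : Eucl n) :
    f x ^ (1 / 2 : ℝ) * c ^ (1 / 2 : ℝ) * volume.real (Metric.ball (0 : Eucl n) (r / 2)) ≤
      ∫ z in Metric.ball ((1 / 2 : ℝ) • (x + x₀)) (r / 2), f z := by
  obtain ⟨h0, hlc, husc, hint, hpos⟩ := hf
  have e : volume.real (Metric.ball (0 : Eucl n) (r / 2)) =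
      volume.real (Metric.ball ((1 / 2 : ℝ) • (x + x₀)) (r / 2)) := by
    simp only [Measure.real]; rw [Measure.addHaar_ball_center volume ((1 / 2 : ℝ) • (x + x₀))]
  rw [e]
  apply setIntegral_ge_of_const_le_real measurableSet_ball measure_ball_lt_top.ne _ hint.integrableOn
  intro z hz
  have hb' : (2 : ℝ) • z - x ∈ Metric.ball x₀ r := by
    rw [mem_ball_iff_norm] at hz ⊢
    have : (2 : ℝ) • z - x - x₀ = (2 : ℝ) • (z - (1 / 2 : ℝ) • (x + x₀)) := by
      module
    rw [this, norm_smul, Real.norm_of_nonneg (by norm_num)]; linarith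
  have h := hlc x ((2 : ℝ) • z - x) (1 / 2) (by norm_num) (by norm_num)
  have e2 : (1 / 2 : ℝ) • x + (1 - 1 / 2 : ℝ) • ((2 : ℝ) • z - x) = z := by module
  rw [e2] at h
  refine le_trans ?_ h
  have := hb _ hb'
  have := h0 x
  norm_num
  gcongr

theorem MemQ0.exp_decay {n : ℕ} {f : Eucl n → ℝ} (hf : MemQ0 f) :
    ∃ K a : ℝ, 0 < a ∧ 0 < K ∧ ∀ x, f x ≤ K * Real.exp (-a * ‖x‖) := by
  obtain ⟨x₀, r, c, hr, hc, hb⟩ := hf.exists_ball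
  have hh := half_ball_bound hf hc hb
  obtain ⟨h0, hlc, husc, hint, hpos⟩ := hf
  set V := volume.real (Metric.ball (0 : Eucl n) (r / 2)) with hV
  have hVpos : 0 < V := by
    rw [hV, Measure.real]
    exact ENNReal.toReal_pos (Metric.measure_ball_pos _ _ (by linarith)).ne' measure_ball_lt_top.ne
  have hD : 0 < c ^ (1 / 2 : ℝ) * V := by positivity
  -- boundedness
  have hbd : ∃ B : ℝ, 0 < B ∧ ∀ x, f x ≤ B := by
    refine ⟨((∫ z, f z) / (c ^ (1 / 2 : ℝ) * V)) ^ 2, by positivity, fun x => ?_⟩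
    have h1 : f x ^ (1 / 2 : ℝ) ≤ (∫ z, f z) / (c ^ (1 / 2 : ℝ) * V) := by
      rw [le_div_iff₀ hD, ← mul_assoc]
      exact (hh x).trans (setIntegral_le_integral hint (ae_of_all _ h0))
    have h2 : f x = (f x ^ (1 / 2 : ℝ)) ^ 2 := by
      rw [← Real.sqrt_eq_rpow, Real.sq_sqrt (h0 x)]
    rw [h2]
    have := Real.rpow_nonneg (h0 x) (1 / 2)
    gcongr
  obtain ⟨B, hB, hfB⟩ := hbd
  -- vanishing
  have hvan : ∃ R : ℝ, 0 < R ∧ ∀ x, R ≤ ‖x - x₀‖ → f x ≤ c * Real.exp (-1) := by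
    have hT : Filter.Tendsto (fun j : ℕ => ∫ z in (Metric.closedBall x₀ j)ᶜ, f z) Filter.atTop
        (nhds 0) := by
      have := tendsto_setIntegral_of_antitone (μ := volume) (f := f)
        (s := fun j : ℕ => (Metric.closedBall x₀ (j : ℝ))ᶜ)
        (fun j => Metric.isClosed_closedBall.measurableSet.compl)
        (fun i j hij => Set.compl_subset_compl.2 (Metric.closedBall_subset_closedBall
          (by exact_mod_cast hij))) ⟨0, hint.integrableOn⟩
      have he : (⋂ j : ℕ, (Metric.closedBall x₀ (j : ℝ))ᶜ) = ∅ := by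
        rw [← Set.compl_iUnion, Metric.iUnion_closedBall_nat, Set.compl_univ]
      rw [he] at this
      simpa using this
    have hε : 0 < (c * Real.exp (-1)) ^ (1 / 2 : ℝ) * c ^ (1 / 2 : ℝ) * V := by positivity
    obtain ⟨j, hj⟩ := (hT.eventually (gt_mem_nhds hε)).exists
    refine ⟨2 * j + r, by positivity, fun x hx => ?_⟩
    have h1 : f x ^ (1 / 2 : ℝ) * c ^ (1 / 2 : ℝ) * V ≤ ∫ z in (Metric.closedBall x₀ j)ᶜ, f z := by
      refine (hh x).trans (setIntegral_mono_set hint.integrableOn (ae_of_all _ h0) ?_)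
      refine LE.le.eventuallyLE ?_
      intro z hz
      rw [mem_ball_iff_norm] at hz
      simp only [Set.mem_compl_iff, mem_closedBall_iff_norm, not_le]
      have e1 : (1 / 2 : ℝ) • (x - x₀) = (z - x₀) - (z - (1 / 2 : ℝ) • (x + x₀)) := by module
      have e2 : ‖(1 / 2 : ℝ) • (x - x₀)‖ = 1 / 2 * ‖x - x₀‖ := by rw [norm_smul]; norm_num
      have := norm_sub_le (z - x₀) (z - (1 / 2 : ℝ) • (x + x₀))
      rw [← e1, e2] at this
      linarith
    have h2 := h1.trans_lt hj
    by_contra hcon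
    push Not at hcon
    have : (c * Real.exp (-1)) ^ (1 / 2 : ℝ) ≤ f x ^ (1 / 2 : ℝ) :=
      Real.rpow_le_rpow (by positivity) hcon.le (by norm_num)
    have : (c * Real.exp (-1)) ^ (1 / 2 : ℝ) * c ^ (1 / 2 : ℝ) * V ≤
      f x ^ (1 / 2 : ℝ) * c ^ (1 / 2 : ℝ) * V := by gcongr
    linarith
  obtain ⟨R, hR, hfR⟩ := hvan
  have hx0 : c ≤ f x₀ := hb x₀ (Metric.mem_ball_self hr)
  have hdec : ∀ x, f x ≤ max (B * Real.exp 1) c * Real.exp (-(1 / R) * ‖x - x₀‖) := by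
    intro x
    by_cases hx : ‖x - x₀‖ ≤ R
    · calc f x ≤ B := hfB x
        _ = B * Real.exp 1 * Real.exp (-1) := by rw [mul_assoc, ← Real.exp_add]; simp
        _ ≤ _ := by
          gcongr
          · exact le_max_left _ _
          · have : ‖x - x₀‖ / R ≤ 1 := (div_le_one hR).2 hx
            have e : -(1 / R) * ‖x - x₀‖ = - (‖x - x₀‖ / R) := by ring
            rw [e]; linarith
    · push Not at hx
      refine le_trans ?_ (mul_le_mul_of_nonneg_right (le_max_right _ _) (Real.exp_pos _).le)
      set ρ := ‖x - x₀‖ with hρ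
      have hρ0 : 0 < ρ := hR.trans hx
      set τ := R / ρ with hτ
      have hτ0 : 0 < τ := by positivity
      have hτ1 : τ < 1 := (div_lt_one hρ0).2 hx
      by_cases hfx : f x = 0
      · rw [hfx]; positivity
      have hfx : 0 < f x := lt_of_le_of_ne (h0 x) (Ne.symm hfx)
      have h1 := hlc x x₀ τ hτ0 hτ1
      have h2 := hfR (τ • x + (1 - τ) • x₀) (by
        have : τ • x + (1 - τ) • x₀ - x₀ = τ • (x - x₀) := by module
        rw [this, norm_smul, Real.norm_of_nonneg hτ0.le, ← hρ, hτ, div_mul_cancel₀ _ hρ0.ne'])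
      have h3 : f x ^ τ * c ^ (1 - τ) ≤ c * Real.exp (-1) := by
        refine le_trans ?_ (h1.trans h2)
        gcongr
      have h4 := Real.log_le_log (by positivity) h3
      rw [Real.log_mul (by positivity) (by positivity), Real.log_rpow hfx, Real.log_rpow hc,
        Real.log_mul hc.ne' (by positivity), Real.log_exp] at h4
      have h5 : τ * (Real.log (f x) - Real.log c) ≤ -1 := by linarith
      have h6 : Real.log (f x) ≤ Real.log c + -(1 / R) * ρ := by
        have : -(1 / R) * ρ = -1 / τ := by rw [hτ]; field_simp
        rw [this]
        have : Real.log (f x) - Real.log c ≤ -1 / τ := by rw [le_div_iff₀ hτ0]; linarith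
        linarith
      calc f x = Real.exp (Real.log (f x)) := (Real.exp_log hfx).symm
        _ ≤ Real.exp (Real.log c + -(1 / R) * ρ) := Real.exp_le_exp.2 h6
        _ = _ := by rw [Real.exp_add, Real.exp_log hc]
  refine ⟨max (B * Real.exp 1) c * Real.exp (1 / R * ‖x₀‖), 1 / R, by positivity, by positivity, fun x => ?_⟩
  refine (hdec x).trans ?_
  rw [mul_assoc, ← Real.exp_add]
  gcongr
  have := norm_sub_norm_le x x₀
  have hR' : 0 < 1 / R := by positivity
  nlinarith

theorem MemQ0.poly_decay {n : ℕ} {f : Eucl n → ℝ} (hf : MemQ0 f) (N : ℕ) :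
    ∃ C : ℝ, 0 < C ∧ ∀ x, f x ≤ C * (1 + ‖x‖) ^ (-(N : ℝ)) := by
  obtain ⟨K, a, ha, hK, h⟩ := hf.exp_decay
  refine ⟨K * (Real.exp a * N.factorial / a ^ N), by positivity, fun x => (h x).trans ?_⟩
  rw [mul_assoc]
  gcongr
  have hx : 0 < 1 + ‖x‖ := by positivity
  have h1 := Real.pow_div_factorial_le_exp (a * (1 + ‖x‖)) (by positivity) N
  rw [Real.rpow_neg hx.le, Real.rpow_natCast]
  have h2 : Real.exp (-a * ‖x‖) = Real.exp a / Real.exp (a * (1 + ‖x‖)) := by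
    rw [← Real.exp_sub]; congr 1; ring
  rw [h2, div_le_iff₀ (Real.exp_pos _)]
  calc Real.exp a = Real.exp a * N.factorial / a ^ N * ((1 + ‖x‖) ^ N)⁻¹ *
        ((a * (1 + ‖x‖)) ^ N / N.factorial) := by
          rw [mul_pow]; field_simp
    _ ≤ _ := by gcongr

theorem MemQ0.bdd {n : ℕ} {f : Eucl n → ℝ} (hf : MemQ0 f) : BddAbove (Set.range f) := by
  obtain ⟨C, hC, h⟩ := hf.poly_decay 0
  refine ⟨C, ?_⟩
  rintro _ ⟨x, rfl⟩
  simpa using h x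

abbrev Spl (k m n : ℕ) := WithLp 2 (Eucl k × Eucl m) ≃ₗᵢ[ℝ] Eucl n

/-- the splitting map in two variables -/
def Spl.ap {k m n : ℕ} (T : Spl k m n) (y : Eucl k) (z : Eucl m) : Eucl n := T (WithLp.toLp 2 (y, z))

section
variable {k m n : ℕ} (T : Spl k m n)

theorem Spl.ap_comb (y y' : Eucl k) (z z' : Eucl m) (s t : ℝ) :
    s • T.ap y z + t • T.ap y' z' = T.ap (s • y + t • y') (s • z + t • z') := by
  unfold Spl.ap
  rw [← map_smul, ← map_smul, ← map_add]
  rfl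

theorem Spl.norm_ap (y : Eucl k) (z : Eucl m) : ‖T.ap y z‖ ^ 2 = ‖y‖ ^ 2 + ‖z‖ ^ 2 := by
  unfold Spl.ap
  rw [T.norm_map, WithLp.prod_norm_sq_eq_of_L2]
  rfl

theorem Spl.le_norm_left (y : Eucl k) (z : Eucl m) : ‖y‖ ≤ ‖T.ap y z‖ := by
  have := T.norm_ap y z
  exact abs_le_of_sq_le_sq' (by nlinarith [sq_nonneg ‖z‖]) (norm_nonneg _) |>.2

theorem Spl.le_norm_right (y : Eucl k) (z : Eucl m) : ‖z‖ ≤ ‖T.ap y z‖ := by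
  have := T.norm_ap y z
  exact abs_le_of_sq_le_sq' (by nlinarith [sq_nonneg ‖y‖]) (norm_nonneg _) |>.2

theorem Spl.continuous_ap : Continuous (fun q : Eucl k × Eucl m => T.ap q.1 q.2) := by
  unfold Spl.ap
  exact T.continuous.comp (WithLp.prod_continuous_toLp 2 _ _)

theorem Spl.mp : MeasurePreserving (fun q : Eucl k × Eucl m => T.ap q.1 q.2)
    (volume.prod volume) volume :=
  T.measurePreserving.comp (WithLp.volume_preserving_toLp (Eucl k) (Eucl m))

theorem Spl.me : MeasurableEmbedding (fun q : Eucl k × Eucl m => T.ap q.1 q.2) := by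
  have h1 : MeasurableEmbedding T := T.toHomeomorph.measurableEmbedding
  have h2 : MeasurableEmbedding (WithLp.toLp 2 : Eucl k × Eucl m → _) :=
    (MeasurableEquiv.toLp 2 (Eucl k × Eucl m)).measurableEmbedding
  exact h1.comp h2

theorem integrable_decay (d : ℕ) : Integrable (fun x : Eucl d => (1 + ‖x‖) ^ (-((d + 1 : ℕ) : ℝ))) := by
  apply integrable_one_add_norm
  simp

theorem MemQ0.measurable {f : Eucl n → ℝ} (hf : MemQ0 f) : Measurable f :=
  hf.2.2.1.measurable

/-- the marginal -/
def marg (f : Eucl n → ℝ) (z : Eucl m) : ℝ := ∫ y : Eucl k, f (T.ap y z)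

variable {T}

theorem MemQ0.slice_bound {f : Eucl n → ℝ} (hf : MemQ0 f) (N : ℕ) :
    ∃ C : ℝ, 0 < C ∧ ∀ y z, f (T.ap y z) ≤ C * (1 + ‖y‖) ^ (-(N : ℝ)) := by
  obtain ⟨C, hC, h⟩ := hf.poly_decay N
  refine ⟨C, hC, fun y z => (h _).trans ?_⟩
  gcongr 1
  apply Real.rpow_le_rpow_of_nonpos (by positivity) _ (by simp)
  linarith [T.le_norm_left y z]

theorem MemQ0.slice_measurable {f : Eucl n → ℝ} (hf : MemQ0 f) (z : Eucl m) :
    Measurable (fun y => f (T.ap y z)) :=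
  hf.measurable.comp (T.continuous_ap.comp (Continuous.prodMk_left z)).measurable

theorem MemQ0.slice_integrable {f : Eucl n → ℝ} (hf : MemQ0 f) (z : Eucl m) :
    Integrable (fun y => f (T.ap y z)) := by
  obtain ⟨C, hC, h⟩ := hf.slice_bound (T := T) (k + 1)
  refine ((integrable_decay k).const_mul C).mono' (hf.slice_measurable z).aestronglyMeasurable ?_
  refine ae_of_all _ fun y => ?_
  rw [Real.norm_of_nonneg (hf.1 _)]
  exact h y z

theorem marg_nonneg {f : Eucl n → ℝ} (hf : MemQ0 f) (z : Eucl m) : 0 ≤ marg T f z :=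
  integral_nonneg fun _ => hf.1 _

theorem ofReal_marg {f : Eucl n → ℝ} (hf : MemQ0 f) (z : Eucl m) :
    ENNReal.ofReal (marg T f z) = ∫⁻ y, ENNReal.ofReal (f (T.ap y z)) :=
  ofReal_integral_eq_lintegral_ofReal (hf.slice_integrable z) (ae_of_all _ fun _ => hf.1 _)

theorem pl_eucl {u v w : Eucl k → ENNReal} (hu : Measurable u) (hv : Measurable v)
    (hw : Measurable w) {t : ℝ} (ht0 : 0 < t) (ht1 : t < 1)
    (h : ∀ x y, u x ^ t * v y ^ (1 - t) ≤ w (t • x + (1 - t) • y)) :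
    (∫⁻ x, u x) ^ t * (∫⁻ x, v x) ^ (1 - t) ≤ ∫⁻ x, w x := by
  have mp := PiLp.volume_preserving_toLp (Fin k)
  rw [← mp.lintegral_comp hu, ← mp.lintegral_comp hv, ← mp.lintegral_comp hw]
  apply pl_pi_s19 k (hu.comp mp.measurable) (hv.comp mp.measurable) (hw.comp mp.measurable) ht0 ht1
  intro x y
  exact h _ _

theorem marg_logConcave {f : Eucl n → ℝ} (hf : MemQ0 f) : IsLogConcave (marg T f) := by
  intro z z' t ht0 ht1
  have ht1' : 0 < 1 - t := by linarith
  have n1 := marg_nonneg (T := T) hf z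
  have n2 := marg_nonneg (T := T) hf z'
  rw [← ENNReal.ofReal_le_ofReal_iff (marg_nonneg hf _), ENNReal.ofReal_mul (by positivity),
    ← ENNReal.ofReal_rpow_of_nonneg n1 ht0.le, ← ENNReal.ofReal_rpow_of_nonneg n2 ht1'.le,
    ofReal_marg hf, ofReal_marg hf, ofReal_marg hf]
  refine pl_eucl (hf.slice_measurable z).ennreal_ofReal (hf.slice_measurable z').ennreal_ofReal
    (hf.slice_measurable _).ennreal_ofReal ht0 ht1 ?_
  intro x y
  rw [ENNReal.ofReal_rpow_of_nonneg (hf.1 _) ht0.le, ENNReal.ofReal_rpow_of_nonneg (hf.1 _) ht1'.le,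
    ← ENNReal.ofReal_mul (Real.rpow_nonneg (hf.1 _) _)]
  apply ENNReal.ofReal_le_ofReal
  rw [← T.ap_comb]
  exact hf.2.1 _ _ t ht0 ht1

theorem marg_usc {f : Eucl n → ℝ} (hf : MemQ0 f) : UpperSemicontinuous (marg T f) := by
  intro z a ha
  by_contra hcon
  rw [Filter.not_eventually] at hcon
  obtain ⟨s, hs, hsa⟩ := Filter.exists_seq_forall_of_frequently hcon
  have ha0 : 0 < a := lt_of_le_of_lt (marg_nonneg hf z) ha
  obtain ⟨C, hC, h⟩ := hf.slice_bound (T := T) (k + 1)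
  have F := limsup_lintegral_le (μ := (volume : Measure (Eucl k)))
    (f := fun j y => ENNReal.ofReal (f (T.ap y (s j))))
    (fun y => ENNReal.ofReal (C * (1 + ‖y‖) ^ (-((k + 1 : ℕ) : ℝ))))
    (fun j => (hf.slice_measurable _).ennreal_ofReal)
    (fun j => ae_of_all _ fun y => ENNReal.ofReal_le_ofReal (h y _))
    (by
      have := ((integrable_decay k).const_mul C).2
      rw [hasFiniteIntegral_iff_ofReal (ae_of_all _ fun y => by positivity)] at this
      exact this.ne)
  have h1 : ENNReal.ofReal a ≤ Filter.limsup (fun j => ∫⁻ y, ENNReal.ofReal (f (T.ap y (s j)))) Filter.atTop := by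
    apply Filter.le_limsup_of_frequently_le'
    refine Filter.Frequently.of_forall fun j => ?_
    rw [← ofReal_marg hf]
    exact ENNReal.ofReal_le_ofReal (not_lt.1 (hsa j))
  have h2 : ∫⁻ y, Filter.limsup (fun j => ENNReal.ofReal (f (T.ap y (s j)))) Filter.atTop ≤
      ∫⁻ y, ENNReal.ofReal (f (T.ap y z)) := by
    apply lintegral_mono
    intro y
    apply le_of_forall_gt
    intro c hc
    have hcont : Filter.Tendsto (fun j => T.ap y (s j)) Filter.atTop (nhds (T.ap y z)) :=
      ((T.continuous_ap.comp (Continuous.prodMk_right y)).tendsto z).comp hs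
    obtain ⟨d, hd1, hd2⟩ := exists_between hc
    have hdt : d ≠ ⊤ := ne_top_of_lt hd2
    have hlt : f (T.ap y z) < d.toReal := by
      rwa [ENNReal.ofReal_lt_iff_lt_toReal (hf.1 _) hdt] at hd1
    have := hcont.eventually (hf.2.2.1 _ _ hlt)
    refine lt_of_le_of_lt ?_ hd2
    refine Filter.limsup_le_of_le (by isBoundedDefault) (this.mono fun j hj => ?_)
    exact ENNReal.ofReal_le_of_le_toReal hj.le
  rw [← ofReal_marg hf] at h2
  have h3 := h1.trans (F.trans h2)
  rw [ENNReal.ofReal_le_ofReal_iff (marg_nonneg hf _)] at h3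
  linarith

theorem integral_marg_mul {f : Eucl n → ℝ} (φ : Eucl m → ℝ) (ψ : Eucl n → ℝ)
    (hφ : ∀ y z, ψ (T.ap y z) = φ z) (hint : Integrable (fun x => f x * ψ x)) :
    ∫ z, marg T f z * φ z = ∫ x, f x * ψ x := by
  rw [← T.mp.integral_comp T.me]
  rw [integral_prod_symm]
  · congr 1; ext z
    simp only [hφ]
    rw [integral_mul_const, marg]
  · exact (T.mp.integrable_comp_emb T.me).2 hint

theorem integral_marg {f : Eucl n → ℝ} (hf : MemQ0 f) :
    ∫ z, marg T f z = ∫ x, f x := by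
  have := integral_marg_mul (T := T) (f := f) (fun _ => 1) (fun _ => 1) (fun _ _ => rfl)
    (by simpa using hf.2.2.2.1)
  simpa using this

theorem marg_mem {f : Eucl n → ℝ} (hf : MemQ0 f) : MemQ0 (marg T f) := by
  refine ⟨marg_nonneg hf, marg_logConcave hf, marg_usc hf, ?_, ?_⟩
  · exact Integrable.integral_prod_right
      (f := fun q : Eucl k × Eucl m => f (T.ap q.1 q.2)) ((T.mp.integrable_comp_emb T.me).2 hf.2.2.2.1)
  · rw [integral_marg hf]; exact hf.2.2.2.2

theorem MemQ0.integrable_mul {f : Eucl n → ℝ} (hf : MemQ0 f) {u : Eucl n → ℝ} (hu : Measurable u)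
    (hb : ∀ x, |u x| ≤ (1 + ‖x‖) ^ 2) : Integrable (fun x => f x * u x) := by
  obtain ⟨C, hC, h⟩ := hf.poly_decay (n + 3)
  refine ((integrable_decay n).const_mul C).mono' (hf.measurable.mul hu).aestronglyMeasurable ?_
  refine ae_of_all _ fun x => ?_
  rw [norm_mul, Real.norm_of_nonneg (hf.1 _), Real.norm_eq_abs]
  have h1 : 0 < 1 + ‖x‖ := by positivity
  calc f x * |u x| ≤ C * (1 + ‖x‖) ^ (-((n + 3 : ℕ) : ℝ)) * (1 + ‖x‖) ^ 2 := by
        gcongr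
        · exact h x
        · exact hb x
    _ = _ := by
      rw [mul_assoc, ← Real.rpow_natCast (1 + ‖x‖) 2, ← Real.rpow_add h1]
      congr 2; push_cast; ring
end

section
variable {k m n : ℕ} (T : Spl k m n)

/-- the functional projection in coordinates -/
def prj (f : Eucl n → ℝ) (y : Eucl k) : ℝ := ⨆ z : Eucl m, f (T.ap y z)

variable {T}

theorem Spl.inner_ap (y y' : Eucl k) (z z' : Eucl m) :
    inner ℝ (T.ap y z) (T.ap y' z') = inner ℝ y y' + inner ℝ z z' := by
  unfold Spl.ap
  rw [T.inner_map_map, WithLp.prod_inner_apply]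

theorem Spl.exists_ap (x : Eucl n) : T.ap (T.symm x).fst (T.symm x).snd = x := by
  unfold Spl.ap
  exact T.apply_symm_apply x

theorem MemQ0.slice_bdd {f : Eucl n → ℝ} (hf : MemQ0 f) (y : Eucl k) :
    BddAbove (Set.range fun z => f (T.ap y z)) := by
  obtain ⟨B, hB⟩ := hf.bdd
  refine ⟨B, ?_⟩
  rintro _ ⟨z, rfl⟩
  exact hB ⟨_, rfl⟩

theorem le_prj {f : Eucl n → ℝ} (hf : MemQ0 f) (y : Eucl k) (z : Eucl m) :
    f (T.ap y z) ≤ prj T f y := le_ciSup (hf.slice_bdd y) z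

theorem prj_nonneg {f : Eucl n → ℝ} (hf : MemQ0 f) (y : Eucl k) : 0 ≤ prj T f y :=
  (hf.1 _).trans (le_prj hf y 0)

theorem MemQ0.compact_ge {f : Eucl n → ℝ} (hf : MemQ0 f) {c : ℝ} (hc : 0 < c) :
    IsCompact {x | c ≤ f x} := by
  apply Metric.isCompact_of_isClosed_isBounded
  · exact hf.2.2.1.isClosed_preimage c
  · obtain ⟨C, hC, h⟩ := hf.poly_decay 1
    refine (Metric.isBounded_closedBall (x := (0 : Eucl n)) (r := C / c)).subset ?_
    intro x hx
    have hx : c ≤ f x := hx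
    have h1 := h x
    have h2 : 0 < 1 + ‖x‖ := by positivity
    rw [Nat.cast_one, Real.rpow_neg h2.le, Real.rpow_one, ← div_eq_mul_inv, le_div_iff₀ h2] at h1
    rw [mem_closedBall_zero_iff, le_div_iff₀ hc]
    nlinarith [norm_nonneg x]

theorem prj_measurable {f : Eucl n → ℝ} (hf : MemQ0 f) : Measurable (prj T f) := by
  apply measurable_of_Ioi
  intro a
  by_cases ha : a < 0
  · have : prj T f ⁻¹' Set.Ioi a = Set.univ := by
      ext y; simp; exact ha.trans_le (prj_nonneg hf y)
    rw [this]; exact MeasurableSet.univ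
  push Not at ha
  have hcont : Continuous (fun x => (T.symm x).fst) :=
    (WithLp.prod_continuous_ofLp 2 (Eucl k) (Eucl m)).fst.comp T.symm.continuous
  have : prj T f ⁻¹' Set.Ioi a = ⋃ j : ℕ, (fun x => (T.symm x).fst) ''
      {x | a + 1 / ((j : ℝ) + 1) ≤ f x} := by
    ext y
    simp only [Set.mem_preimage, Set.mem_Ioi, Set.mem_iUnion, Set.mem_image]
    constructor
    · intro hy
      obtain ⟨z, hz⟩ := exists_lt_of_lt_ciSup hy
      obtain ⟨j, hj⟩ := exists_nat_one_div_lt (sub_pos.2 hz)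
      refine ⟨j, T.ap y z, ?_, ?_⟩
      · show a + 1 / ((j : ℝ) + 1) ≤ f (T.ap y z)
        linarith
      · unfold Spl.ap; rw [T.symm_apply_apply]; rfl
    · rintro ⟨j, x, hx, rfl⟩
      have hx : a + 1 / ((j : ℝ) + 1) ≤ f x := hx
      have hj : 0 < 1 / ((j : ℝ) + 1) := by positivity
      have := le_prj (T := T) hf (T.symm x).fst (T.symm x).snd
      rw [T.exists_ap] at this
      linarith
  rw [this]
  refine MeasurableSet.iUnion fun j => ?_
  exact ((hf.compact_ge (by positivity)).image hcont).measurableSet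

theorem prj_integrable {f : Eucl n → ℝ} (hf : MemQ0 f) : Integrable (prj T f) := by
  obtain ⟨C, hC, h⟩ := hf.slice_bound (T := T) (k + 1)
  refine ((integrable_decay k).const_mul C).mono' (prj_measurable hf).aestronglyMeasurable ?_
  refine ae_of_all _ fun y => ?_
  rw [Real.norm_of_nonneg (prj_nonneg hf _)]
  exact ciSup_le fun z => h y z

variable (T)
def Spl.J : Eucl k →ₗᵢ[ℝ] Eucl n where
  toFun y := T.ap y 0
  map_add' y y' := by
    have := T.ap_comb y y' 0 0 1 1
    simpa using this.symm
  map_smul' c y := by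
    have := T.ap_comb y 0 0 0 c 0
    simpa using this.symm
  norm_map' y := by
    have h := T.norm_ap y 0
    have h' : ‖T.ap y 0‖ ^ 2 = ‖y‖ ^ 2 := by simpa using h
    exact (sq_eq_sq₀ (norm_nonneg _) (norm_nonneg _)).1 h'

def Spl.H : Submodule ℝ (Eucl n) := LinearMap.range T.J.toLinearMap

theorem Spl.finrank_H : Module.finrank ℝ T.H = k := by
  unfold Spl.H
  rw [LinearMap.finrank_range_of_inj T.J.injective]
  simp

theorem Spl.mem_perp (x : Eucl n) : x ∈ T.Hᗮ ↔ ∃ z, T.ap 0 z = x := by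
  constructor
  · intro hx
    refine ⟨(T.symm x).snd, ?_⟩
    have h1 : inner ℝ (T.ap (T.symm x).fst 0) x = (0 : ℝ) :=
      (Submodule.mem_orthogonal _ _).1 hx _ ⟨(T.symm x).fst, rfl⟩
    have h2 : inner ℝ (T.ap (T.symm x).fst 0) (T.ap (T.symm x).fst (T.symm x).snd) = (0 : ℝ) := by
      rw [T.exists_ap]; exact h1
    rw [T.inner_ap] at h2
    simp at h2
    have h3 := T.exists_ap x
    rw [h2] at h3
    exact h3
  · rintro ⟨z, rfl⟩
    rw [Submodule.mem_orthogonal]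
    rintro _ ⟨y, rfl⟩
    have := T.inner_ap y 0 0 z
    simp at this
    exact this

theorem Spl.ap_add (y : Eucl k) (z : Eucl m) : T.ap y 0 + T.ap 0 z = T.ap y z := by
  have := T.ap_comb y 0 0 z 1 1
  simpa using this

theorem integral_H (φ : Eucl n → ℝ) : ∫ y : T.H, φ (y : Eucl n) = ∫ y : Eucl k, φ (T.ap y 0) := by
  have mp := (T.J.equivRange).measurePreserving
  have := mp.integral_comp (T.J.equivRange).toHomeomorph.measurableEmbedding
    (fun y : T.H => φ (y : Eucl n))
  exact this.symm

theorem sectL1_eq (f : Eucl n → ℝ) : sectL1 f T.H = marg T f 0 := integral_H T f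

theorem projL1_eq (f : Eucl n → ℝ) : projL1 f T.H = ∫ y, prj T f y := by
  unfold projL1
  rw [integral_H T (fun y => ⨆ z : T.Hᗮ, f (y + (z : Eucl n)))]
  congr 1; ext y
  unfold prj
  symm
  apply Function.Surjective.iSup_congr (fun z : Eucl m => (⟨T.ap 0 z, (T.mem_perp _).2 ⟨z, rfl⟩⟩ : T.Hᗮ))
  · rintro ⟨x, hx⟩
    obtain ⟨z, hz⟩ := (T.mem_perp x).1 hx
    exact ⟨z, by ext1; exact hz⟩
  · intro z
    rw [T.ap_add]
end

theorem MemQ0.integrable_coord2 {n : ℕ} {f : Eucl n → ℝ} (hf : MemQ0 f) (i j : Fin n) :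
    Integrable (fun x => f x * x i * x j) := by
  have := hf.integrable_mul (u := fun x => x i * x j) (by fun_prop) (by
    intro x
    rw [abs_mul]
    have h1 : |x i| ≤ ‖x‖ := PiLp.norm_apply_le x i
    have h2 : |x j| ≤ ‖x‖ := PiLp.norm_apply_le x j
    have := mul_le_mul h1 h2 (abs_nonneg _) (norm_nonneg _)
    nlinarith [norm_nonneg x])
  simpa only [mul_assoc] using this

theorem MemQ0.integrable_coord1 {n : ℕ} {f : Eucl n → ℝ} (hf : MemQ0 f) (i : Fin n) :
    Integrable (fun x => f x * x i) := by
  refine hf.integrable_mul (u := fun x => x i) (by fun_prop) (by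
    intro x
    have h1 : |x i| ≤ ‖x‖ := PiLp.norm_apply_le x i
    nlinarith [norm_nonneg x])

theorem MemQ0.integrable_inner2 {n : ℕ} {f : Eucl n → ℝ} (hf : MemQ0 f) (u v : Eucl n)
    (hu : ‖u‖ = 1) (hv : ‖v‖ = 1) :
    Integrable (fun x => f x * (inner ℝ u x * inner ℝ v x)) := by
  refine hf.integrable_mul (u := fun x => inner ℝ u x * inner ℝ v x) (by fun_prop) (by
    intro x
    rw [abs_mul]
    have h1 : |inner ℝ u x| ≤ ‖x‖ := by simpa [hu] using abs_real_inner_le_norm u x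
    have h2 : |inner ℝ v x| ≤ ‖x‖ := by simpa [hv] using abs_real_inner_le_norm v x
    have := mul_le_mul h1 h2 (abs_nonneg _) (norm_nonneg _)
    nlinarith [norm_nonneg x])

theorem MemQ0.integrable_inner1 {n : ℕ} {f : Eucl n → ℝ} (hf : MemQ0 f) (u : Eucl n)
    (hu : ‖u‖ = 1) :
    Integrable (fun x => f x * inner ℝ u x) := by
  refine hf.integrable_mul (u := fun x => inner ℝ u x) (by fun_prop) (by
    intro x
    have h1 : |inner ℝ u x| ≤ ‖x‖ := by simpa [hu] using abs_real_inner_le_norm u x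
    nlinarith [norm_nonneg x])

theorem supNorm_pos {n : ℕ} {f : Eucl n → ℝ} (hf : MemQ0 f) : 0 < supNorm f := by
  obtain ⟨x₀, r, c, hr, hc, hb⟩ := hf.exists_ball
  exact hc.trans_le ((hb x₀ (Metric.mem_ball_self hr)).trans (le_ciSup hf.bdd x₀))

/-- moments of a centered function -/
theorem moment1 {n : ℕ} {f : Eucl n → ℝ} (hf : MemQ0 f) (hc : ∀ i : Fin n, (∫ x, f x * x i) = 0)
    (u : Eucl n) : ∫ x, f x * inner ℝ u x = 0 := by
  have : ∀ x : Eucl n, f x * inner ℝ u x = ∑ i, u i * (f x * x i) := by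
    intro x
    rw [PiLp.inner_apply, Finset.mul_sum]
    apply Finset.sum_congr rfl
    intro i _
    simp; ring
  simp only [this]
  rw [integral_finset_sum _ (fun i _ => (hf.integrable_coord1 i).const_mul _)]
  apply Finset.sum_eq_zero
  intro i _
  rw [integral_const_mul, hc, mul_zero]

theorem moment2 {n : ℕ} {f : Eucl n → ℝ} (hf : MemQ0 f) (hc : ∀ i : Fin n, (∫ x, f x * x i) = 0)
    (u v : Eucl n) : ∫ x, f x * (inner ℝ u x * inner ℝ v x) =
      (∫ x, f x) * (u.ofLp ⬝ᵥ (covMatrix f).mulVec v.ofLp) := by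
  have : ∀ x : Eucl n, f x * (inner ℝ u x * inner ℝ v x) =
      ∑ i, ∑ j, u i * v j * (f x * x i * x j) := by
    intro x
    rw [PiLp.inner_apply, PiLp.inner_apply, Finset.sum_mul_sum, Finset.mul_sum]
    apply Finset.sum_congr rfl
    intro i _
    rw [Finset.mul_sum]
    apply Finset.sum_congr rfl
    intro j _
    simp; ring
  simp only [this]
  have hi : ∀ i j, Integrable (fun x => u i * v j * (f x * x i * x j)) :=
    fun i j => (hf.integrable_coord2 i j).const_mul _
  rw [integral_finset_sum _ (fun i _ => integrable_finset_sum _ (fun j _ => hi i j))]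
  rw [dotProduct, Finset.mul_sum]
  apply Finset.sum_congr rfl
  intro i _
  rw [integral_finset_sum _ (fun j _ => hi i j), Matrix.mulVec, dotProduct, Finset.mul_sum, Finset.mul_sum]
  apply Finset.sum_congr rfl
  intro j _
  rw [integral_const_mul]
  have hS := hf.2.2.2.2
  simp only [covMatrix, Matrix.of_apply, hc]
  field_simp
  ring

theorem moment_pos {n : ℕ} {f : Eucl n → ℝ} (hf : MemQ0 f) (u : Eucl n) (hu : ‖u‖ = 1) :
    0 < ∫ x, f x * (inner ℝ u x * inner ℝ u x) := by
  have h0 : ∀ x, 0 ≤ f x * (inner ℝ u x * inner ℝ u x) := fun x =>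
    mul_nonneg (hf.1 x) (mul_self_nonneg _)
  refine lt_of_le_of_ne (integral_nonneg h0) (Ne.symm ?_)
  intro h
  rw [integral_eq_zero_iff_of_nonneg h0 (hf.integrable_inner2 u u hu hu)] at h
  have hnull : volume {x : Eucl n | inner ℝ u x = (0 : ℝ)} = 0 := by
    have := Measure.addHaar_submodule (volume : Measure (Eucl n)) (LinearMap.ker (innerSL ℝ u).toLinearMap) (by
      intro htop
      have : u ∈ LinearMap.ker (innerSL ℝ u).toLinearMap := by rw [htop]; trivial
      rw [LinearMap.mem_ker] at this
      have h2 : inner ℝ u u = (0 : ℝ) := this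
      rw [real_inner_self_eq_norm_sq, hu] at h2
      norm_num at h2)
    exact this
  have hf0 : f =ᵐ[volume] 0 := by
    have h2 : ∀ᵐ x : Eucl n, inner ℝ u x ≠ (0 : ℝ) := by
      rw [ae_iff]; simpa using hnull
    filter_upwards [h, h2] with x hx1 hx2
    have : f x * (inner ℝ u x * inner ℝ u x) = 0 := hx1
    simpa [hx2] using this
  have := hf.2.2.2.2
  rw [integral_congr_ae hf0] at this
  simp at this

theorem section_bound {k m n : ℕ} (T : Spl k m n) (hm : 0 < m) {f : Eucl n → ℝ} (hf : MemQ0 f)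
    (l : Fin m → ℝ) (hl : ∀ i, 0 < l i) (ψ : Fin m → Eucl n → ℝ)
    (hψ : ∀ i y z, ψ i (T.ap y z) = z i)
    (hi1 : ∀ i, Integrable (fun x => f x * ψ i x))
    (hi2 : ∀ i j, Integrable (fun x => f x * (ψ i x * ψ j x)))
    (h1 : ∀ i, ∫ x, f x * ψ i x = 0)
    (h2 : ∀ i j, ∫ x, f x * (ψ i x * ψ j x) = if i = j then (∫ x, f x) * l i else 0)
    (M : ℝ) (hbound : ∀ g : Eucl m → ℝ, MemQ0 g → isoConst g ≤ M) :
    marg T f 0 ≤ M ^ m * (∫ x, f x) / (∏ i, l i) ^ (1 / 2 : ℝ) := by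
  have hg := marg_mem (T := T) hf
  have hS := hf.2.2.2.2
  have hcov : covMatrix (marg T f) = Matrix.diagonal l := by
    ext i j
    have e1 : ∀ i, ∫ z, marg T f z * z i = 0 := fun i => by
      rw [integral_marg_mul (fun z => z i) (ψ i) (fun y z => hψ i y z) (hi1 i), h1]
    have e2 : ∫ z, marg T f z * z i * z j = if i = j then (∫ x, f x) * l i else 0 := by
      simp only [mul_assoc]
      rw [integral_marg_mul (fun z => z i * z j) (fun x => ψ i x * ψ j x)
        (fun y z => by rw [hψ, hψ]) (hi2 i j), h2]
    simp only [covMatrix, Matrix.of_apply, e1, e2, integral_marg hf, Matrix.diagonal_apply]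
    split_ifs
    · field_simp; ring
    · simp
  have hb := hbound _ hg
  have hsup := supNorm_pos hg
  have hP : 0 < ∏ i, l i := Finset.prod_pos fun i _ => hl i
  have hm' : (m : ℝ) ≠ 0 := by positivity
  rw [isoConst, hcov, Matrix.det_diagonal, integral_marg hf] at hb
  have hpow := pow_le_pow_left₀ (by positivity) hb m
  have e : ((supNorm (marg T f) / ∫ x, f x) ^ ((1 : ℝ) / m) * (∏ i, l i) ^ (1 / (2 * (m : ℝ)))) ^ m
      = supNorm (marg T f) / (∫ x, f x) * (∏ i, l i) ^ (1 / 2 : ℝ) := by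
    rw [mul_pow, ← Real.rpow_natCast, ← Real.rpow_mul (by positivity), ← Real.rpow_natCast,
      ← Real.rpow_mul hP.le]
    congr 2
    · rw [one_div_mul_cancel hm', Real.rpow_one]
    · field_simp
  rw [e] at hpow
  have h0 : marg T f 0 ≤ supNorm (marg T f) := le_ciSup hg.bdd 0
  refine h0.trans ?_
  rw [le_div_iff₀ (by positivity)]
  have := mul_le_mul_of_nonneg_right hpow hS.le
  calc _ = supNorm (marg T f) / (∫ x, f x) * (∏ i, l i) ^ (1 / 2 : ℝ) * ∫ x, f x := by field_simp
    _ ≤ _ := this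

theorem exists_spl {k m n : ℕ} (b : OrthonormalBasis (Fin n) ℝ (Eucl n)) (e : Fin k ⊕ Fin m ≃ Fin n) :
    ∃ T : Spl k m n, (∀ i y z, inner ℝ (b (e (Sum.inl i))) (T.ap y z) = y i) ∧
      (∀ i y z, inner ℝ (b (e (Sum.inr i))) (T.ap y z) = z i) := by
  let B := (EuclideanSpace.basisFun (Fin k) ℝ).prod (EuclideanSpace.basisFun (Fin m) ℝ)
  let T : Spl k m n := B.equiv b e
  have hT : ∀ s, T (B s) = b (e s) := fun s => OrthonormalBasis.equiv_apply_basis _ _ _ _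
  refine ⟨T, fun i y z => ?_, fun i y z => ?_⟩
  · have : b (e (Sum.inl i)) = T.ap (EuclideanSpace.basisFun (Fin k) ℝ i) 0 := by
      rw [← hT]; simp only [B, Spl.ap, OrthonormalBasis.prod_apply]; simp
    rw [this, Spl.inner_ap]
    simp [EuclideanSpace.basisFun_apply, EuclideanSpace.inner_single_left]
  · have : b (e (Sum.inr i)) = T.ap 0 (EuclideanSpace.basisFun (Fin m) ℝ i) := by
      rw [← hT]; simp only [B, Spl.ap, OrthonormalBasis.prod_apply]; simp
    rw [this, Spl.inner_ap]
    simp [EuclideanSpace.basisFun_apply, EuclideanSpace.inner_single_left]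

theorem lw_ineq {k m n : ℕ} (hk : 0 < k) (b : OrthonormalBasis (Fin n) ℝ (Eucl n))
    (e : Fin n → (Fin k ⊕ Fin m ≃ Fin n)) (T : Fin n → Spl k m n)
    (hT : ∀ j i y z, inner ℝ (b (e j (Sum.inl i))) ((T j).ap y z) = y i)
    (hcov : ∀ i, (Finset.univ.filter
      (fun j => i ∈ Finset.univ.image (fun a => e j (Sum.inl a)))).card = k)
    {f : Eucl n → ℝ} (hf : MemQ0 f) :
    ∫ x, f x ^ ((n : ℝ) / k) ≤ ∏ j, (∫ y, prj (T j) f y) ^ (1 / (k : ℝ)) := by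
  have hk' : (k : ℝ) ≠ 0 := by positivity
  have hp : 0 ≤ 1 / (k : ℝ) := by positivity
  have hf0 := hf.1
  have hmp := (b.measurePreserving_repr_symm).comp (PiLp.volume_preserving_toLp (Fin n))
  have hF := finner (fun j a => e j (Sum.inl a)) (fun j => (e j).injective.comp Sum.inl_injective)
    (fun j v => ENNReal.ofReal (prj (T j) f (WithLp.toLp 2 v)))
    (fun j => ((prj_measurable hf).comp (PiLp.volume_preserving_toLp (Fin k)).measurable).ennreal_ofReal)
    (1 / (k : ℝ)) hp (fun i => by
      have := hcov i
      rw [this]; field_simp)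
  have hR : ∀ j, ∫⁻ v : Fin k → ℝ, ENNReal.ofReal (prj (T j) f (WithLp.toLp 2 v))
      = ENNReal.ofReal (∫ y, prj (T j) f y) := fun j => by
    rw [ofReal_integral_eq_lintegral_ofReal (prj_integrable hf)
      (Filter.Eventually.of_forall fun y => prj_nonneg hf y)]
    exact (PiLp.volume_preserving_toLp (Fin k)).lintegral_comp (prj_measurable hf).ennreal_ofReal
  have hpos : ∀ j, 0 ≤ ∫ y, prj (T j) f y := fun j => integral_nonneg fun y => prj_nonneg hf y
  have hmeas : Measurable (fun x => f x ^ ((n : ℝ) / k)) := hf.measurable.pow_const _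
  rw [integral_eq_lintegral_of_nonneg_ae
    (Filter.Eventually.of_forall fun x => Real.rpow_nonneg (hf0 x) _) hmeas.aestronglyMeasurable]
  have hprod0 : 0 ≤ ∏ j, (∫ y, prj (T j) f y) ^ (1 / (k : ℝ)) :=
    Finset.prod_nonneg fun j _ => Real.rpow_nonneg (hpos j) _
  refine ENNReal.toReal_le_of_le_ofReal hprod0 ?_
  rw [← hmp.lintegral_comp hmeas.ennreal_ofReal]
  refine (lintegral_mono fun v => ?_).trans (hF.trans (le_of_eq ?_))
  · set x := (⇑b.repr.symm ∘ WithLp.toLp 2) v with hx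
    have hcoord : ∀ i, inner ℝ (b i) x = v i := fun i => by
      rw [← b.repr_apply_apply, hx]; simp
    have h1 : ENNReal.ofReal (f x ^ ((n : ℝ) / k))
        = ∏ _j : Fin n, ENNReal.ofReal (f x) ^ (1 / (k : ℝ)) := by
      rw [Finset.prod_const, Finset.card_univ, Fintype.card_fin, ← ENNReal.rpow_natCast,
        ← ENNReal.rpow_mul, ← ENNReal.ofReal_rpow_of_nonneg (hf0 x) (by positivity)]
      congr 1; field_simp
    rw [h1]
    refine Finset.prod_le_prod' fun j _ => ?_
    refine ENNReal.rpow_le_rpow (ENNReal.ofReal_le_ofReal ?_) hp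
    have hxx := (T j).exists_ap x
    have hy : WithLp.toLp 2 (fun i => v (e j (Sum.inl i))) = ((T j).symm x).fst := by
      ext i
      have := hT j i ((T j).symm x).fst ((T j).symm x).snd
      rw [hxx, hcoord] at this
      simpa using this
    rw [hy]
    calc f x = f ((T j).ap ((T j).symm x).fst ((T j).symm x).snd) := by rw [hxx]
      _ ≤ _ := le_prj hf _ _
  · rw [ENNReal.ofReal_prod_of_nonneg (fun j _ => Real.rpow_nonneg (hpos j) _)]
    refine Finset.prod_congr rfl fun j _ => ?_
    rw [hR, ENNReal.ofReal_rpow_of_nonneg (hpos j) hp]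

def cyc (k m : ℕ) [NeZero (k + m)] (j : Fin (k + m)) : Fin k ⊕ Fin m ≃ Fin (k + m) :=
  finSumFinEquiv.trans (Equiv.addRight j)

theorem cyc_cov (k m : ℕ) [NeZero (k + m)] (i : Fin (k + m)) :
    (Finset.univ.filter
      (fun j => i ∈ Finset.univ.image (fun a => cyc k m j (Sum.inl a)))).card = k := by
  have : (Finset.univ.filter
      (fun j => i ∈ Finset.univ.image (fun a => cyc k m j (Sum.inl a))))
      = Finset.univ.image (fun a : Fin k => i - Fin.castAdd m a) := by
    ext j
    simp only [Finset.mem_filter, Finset.mem_univ, true_and, Finset.mem_image, cyc,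
      Equiv.trans_apply, finSumFinEquiv_apply_left, Equiv.coe_addRight]
    refine exists_congr fun a => ?_
    rw [sub_eq_iff_eq_add', eq_comm]
  rw [this, Finset.card_image_of_injective, Finset.card_univ, Fintype.card_fin]
  intro a a' h
  simpa using h

theorem cyc_prod (k m : ℕ) [NeZero (k + m)] (l : Fin (k + m) → ℝ) :
    ∏ j, ∏ a, l (cyc k m j (Sum.inr a)) = (∏ i, l i) ^ m := by
  rw [Finset.prod_comm]
  have : ∀ a : Fin m, ∏ j, l (cyc k m j (Sum.inr a)) = ∏ i, l i := fun a =>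
    Fintype.prod_equiv (Equiv.addLeft (Fin.natAdd k a)) _ _ (fun j => by simp [cyc])
  simp [this]

theorem numerics {k m n : ℕ} (hn : n = k + m) (hk : 0 < k) {I M S D s : ℝ} (hI : 0 ≤ I) (hM : 0 < M) (hS : 0 < S)
    (hD : 0 < D) (hs : 0 < s) (q p : Fin n → ℝ) (hq : ∀ j, 0 < q j)
    (hqD : ∏ j, q j = D ^ m) (hp0 : ∀ j, 0 ≤ p j)
    (hp : ∀ j, p j ≤ M ^ m * S / (q j) ^ (1 / 2 : ℝ))
    (h : I ≤ ∏ j, p j ^ (1 / (k : ℝ))) :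
    I ^ (1 / ((n : ℝ) / k)) ≤
      (M / ((s / S) ^ ((1 : ℝ) / n) * D ^ (1 / (2 * (n : ℝ))))) ^ m *
        (S ^ ((k : ℝ) / n) * s ^ (((n : ℝ) - k) / n)) := by
  have hk' : (0 : ℝ) < k := by positivity
  have hn' : (0 : ℝ) < n := by rw [hn]; positivity
  have hnm : (n : ℝ) - k = m := by rw [hn]; push_cast; ring
  have hprod : ∏ j, p j ≤ (M ^ m * S) ^ n / D ^ ((m : ℝ) / 2) := by
    calc ∏ j, p j ≤ ∏ j, (M ^ m * S / (q j) ^ (1 / 2 : ℝ)) :=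
          Finset.prod_le_prod (fun j _ => hp0 j) (fun j _ => hp j)
      _ = _ := by
        rw [Finset.prod_div_distrib, Finset.prod_const, Finset.card_univ, Fintype.card_fin,
          Real.finsetProd_rpow _ _ (fun j _ => (hq j).le), hqD, ← Real.rpow_natCast D m,
          ← Real.rpow_mul hD.le]
        congr 2; ring
  have hI2 : I ^ (1 / ((n : ℝ) / k)) ≤ M ^ m * S / D ^ ((m : ℝ) / (2 * n)) := by
    rw [Real.finsetProd_rpow _ _ (fun j _ => hp0 j)] at h
    have h0 : 0 ≤ ∏ j, p j := Finset.prod_nonneg fun j _ => hp0 j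
    calc I ^ (1 / ((n : ℝ) / k)) ≤ ((∏ j, p j) ^ (1 / (k : ℝ))) ^ (1 / ((n : ℝ) / k)) :=
          Real.rpow_le_rpow hI h (by positivity)
      _ = (∏ j, p j) ^ (1 / (n : ℝ)) := by
          rw [← Real.rpow_mul h0]; congr 1; field_simp
      _ ≤ ((M ^ m * S) ^ n / D ^ ((m : ℝ) / 2)) ^ (1 / (n : ℝ)) :=
          Real.rpow_le_rpow h0 hprod (by positivity)
      _ = _ := by
          rw [Real.div_rpow (by positivity) (by positivity), ← Real.rpow_natCast (M ^ m * S) n,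
            ← Real.rpow_mul (by positivity), ← Real.rpow_mul hD.le, mul_one_div_cancel hn'.ne',
            Real.rpow_one]
          congr 2; field_simp
  refine hI2.trans (le_of_eq ?_)
  rw [hnm, div_pow, mul_pow, ← Real.rpow_natCast (_ ^ ((1 : ℝ) / n)) m, ← Real.rpow_mul (by positivity),
    ← Real.rpow_natCast (D ^ _) m, ← Real.rpow_mul hD.le, Real.div_rpow hs.le hS.le]
  have e1 : (1 : ℝ) / n * m = m / n := by ring
  have e2 : 1 / (2 * (n : ℝ)) * m = m / (2 * n) := by ring
  rw [e1, e2]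
  have e3 : S = S ^ ((m : ℝ) / n) * S ^ ((k : ℝ) / n) := by
    rw [← Real.rpow_add hS, ← add_div, ← hnm, sub_add_cancel, div_self hn'.ne', Real.rpow_one]
  have h1 : (0 : ℝ) < s ^ ((m : ℝ) / n) := by positivity
  have h2 : (0 : ℝ) < D ^ ((m : ℝ) / (2 * n)) := by positivity
  have h3 : (0 : ℝ) < S ^ ((m : ℝ) / n) := by positivity
  nth_rewrite 1 [e3]
  field_simp

theorem covMatrix_herm {n : ℕ} (f : Eucl n → ℝ) : (covMatrix f).IsHermitian := by
  ext i j
  simp only [covMatrix, Matrix.conjTranspose_apply, Matrix.of_apply, star_trivial]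
  congr 1
  · congr 1; congr 1; ext x; ring
  · ring

theorem functional_milman_aux (k m : ℕ) (hk : 0 < k) (hm : 0 < m)
    (f₁ f₂ : Eucl (k + m) → ℝ) (hf₁ : MemQ0 f₁) (hf₂ : MemQ0 f₂)
    (hcond : ∀ H : Submodule ℝ (Eucl (k + m)), Module.finrank ℝ H = k →
      projL1 f₁ H ≤ sectL1 f₂ H)
    (hcentered : ∀ i : Fin (k + m), (∫ x, f₂ x * x i) = 0)
    (M : ℝ) (hM : 0 < M)
    (hbound : ∀ g : Eucl m → ℝ, MemQ0 g → isoConst g ≤ M) :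
    lpNorm (((k + m : ℕ) : ℝ) / k) f₁ ≤
      (M / isoConst f₂) ^ m *
        ((∫ x, f₂ x) ^ ((k : ℝ) / (k + m : ℕ)) *
          supNorm f₂ ^ ((((k + m : ℕ) : ℝ) - k) / (k + m : ℕ))) := by
  have : NeZero (k + m) := ⟨by omega⟩
  have hA := covMatrix_herm f₂
  set b := hA.eigenvectorBasis with hb
  set l := hA.eigenvalues with hl
  have hS := hf₂.2.2.2.2
  have hnorm : ∀ i, ‖b i‖ = 1 := fun i => b.orthonormal.1 i
  have hmom : ∀ i j, ∫ x, f₂ x * (inner ℝ (b i) x * inner ℝ (b j) x)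
      = if i = j then (∫ x, f₂ x) * l i else 0 := by
    intro i j
    rw [moment2 hf₂ hcentered, hA.mulVec_eigenvectorBasis, dotProduct_smul]
    have h1 : (b i).ofLp ⬝ᵥ (b j).ofLp = if i = j then 1 else 0 := by
      have := b.inner_eq_ite j i
      rw [EuclideanSpace.inner_eq_star_dotProduct] at this
      simpa [eq_comm] using this
    rw [h1]
    split_ifs with h
    · subst h; simp [hl]
    · simp
  have hlpos : ∀ i, 0 < l i := fun i => by
    have h1 := moment_pos hf₂ (b i) (hnorm i)
    rw [hmom, if_pos rfl] at h1
    exact (mul_pos_iff_of_pos_left hS).1 h1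
  choose T hT1 hT2 using fun j => exists_spl b (cyc k m j)
  have hlw := lw_ineq hk b (cyc k m) T hT1 (cyc_cov k m) hf₁
  have hdet : (covMatrix f₂).det = ∏ i, l i := by
    rw [hA.det_eq_prod_eigenvalues]; simp [hl]
  rw [_root_.lpNorm, isoConst, hdet]
  refine numerics rfl hk (integral_nonneg fun x => Real.rpow_nonneg (hf₁.1 x) _) hM hS
    (Finset.prod_pos fun i _ => hlpos i) (supNorm_pos hf₂)
    (fun j => ∏ a, l (cyc k m j (Sum.inr a))) (fun j => ∫ y, prj (T j) f₁ y)
    (fun j => Finset.prod_pos fun a _ => hlpos _) (cyc_prod k m l)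
    (fun j => integral_nonneg fun y => prj_nonneg hf₁ y) (fun j => ?_) hlw
  have hc := hcond (T j).H (T j).finrank_H
  rw [projL1_eq, sectL1_eq] at hc
  refine hc.trans (section_bound (T j) hm hf₂ (fun a => l (cyc k m j (Sum.inr a)))
    (fun a => hlpos _) (fun a x => inner ℝ (b (cyc k m j (Sum.inr a))) x) (hT2 j)
    (fun i => hf₂.integrable_inner1 _ (hnorm _))
    (fun i i' => hf₂.integrable_inner2 _ _ (hnorm _) (hnorm _))
    (fun i => moment1 hf₂ hcentered _) (fun i i' => ?_) M hbound)
  rw [hmom]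
  simp

/-- **The functional Milman problem with isotropic constants** (Theorem 6.2):
if `f₁, f₂ ∈ Q₀ⁿ` satisfy the Milman condition for `k`-dimensional subspaces,
`f₂` is centered, and `L_g ≤ M` for all `g ∈ Q₀^{n−k}`, then
`‖f₁‖_{n/k} ≤ (M/L_{f₂})^{n−k}·‖f₂‖₁^{k/n}·‖f₂‖_∞^{(n−k)/n}`. -/
theorem functional_milman_isotropic (n k : ℕ) (hn : 2 ≤ n) (hk1 : 1 ≤ k)
    (hk2 : k ≤ n - 1)
    (f₁ f₂ : Eucl n → ℝ) (hf₁ : MemQ0 f₁) (hf₂ : MemQ0 f₂)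
    (hcond : ∀ H : Submodule ℝ (Eucl n), Module.finrank ℝ H = k →
      projL1 f₁ H ≤ sectL1 f₂ H)
    (hcentered : ∀ i : Fin n, (∫ x, f₂ x * x i) = 0)
    (M : ℝ) (hM : 0 < M)
    (hbound : ∀ g : Eucl (n - k) → ℝ, MemQ0 g → isoConst g ≤ M) :
    lpNorm ((n : ℝ) / k) f₁ ≤
      (M / isoConst f₂) ^ (n - k) *
        ((∫ x, f₂ x) ^ ((k : ℝ) / n) * supNorm f₂ ^ (((n : ℝ) - k) / n)) := by
  obtain ⟨m, rfl⟩ : ∃ m, n = k + m := ⟨n - k, by omega⟩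
  rw [Nat.add_sub_cancel_left] at hbound ⊢
  exact functional_milman_aux k m hk1 (by omega) f₁ f₂ hf₁ hf₂ hcond hcentered M hM hbound
end
end
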